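/- arXiv:2203.00950 — 6 statements merged into one kernel-verified Lean document; each statement's English description precedes it below -/
import Mathlib

section
/- Let Ω ⊆ ℝ^N be open, f : [0,T] × Ω → ℝ^N continuous, and G an open bounded set with cl(G) ⊆ Ω. Let (V_u)_{u∈∂G} be a family of non-degenerate bounding functions for G such that ⟨f(t,u), ∇V_u(u)⟩ ≤ 0 for all u ∈ ∂G and t ∈ [0,T]. Suppose there exists a continuous function g : ∂G → ℝ^N such that sup_{u∈∂G} ⟨g(u), ∇V_u(u)⟩ < 0. If cl(G) is homeomorphic to a closed ball of ℝ^N, then there exists a differentiable y : [0,T] → Ω with y'(t) = f(t, y(t)) for all t ∈ [0,T], y(0) = y(T), and y(t) ∈ cl(G) for all t ∈ [0,T]. -/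
open Set Metric
open scoped RealInnerProductSpace

abbrev EE (N : ℕ) := EuclideanSpace ℝ (Fin N)

lemma bw_interp (N : ℕ) (t : ℕ → ℝ) (ht : Function.Injective t) :
    ∃ c : ℕ → ℝ, (∑ i ∈ Finset.range (N+1), c i = 1) ∧
      ∀ M : EE N →L[ℝ] EE N,
        (1 + M).det = ∑ i ∈ Finset.range (N+1), c i * (1 + t i • M).det := by
  classical
  refine ⟨fun i => (Lagrange.basis (Finset.range (N+1)) t i).eval 1, ?_, ?_⟩
  · rw [← Polynomial.eval_finsetSum, Lagrange.sum_basis ht.injOn (by simp)]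
    simp
  · intro M
    let b := (EuclideanSpace.basisFun (Fin N) ℝ).toBasis
    let A := LinearMap.toMatrix b b (M : _ →ₗ[ℝ] _)
    let P : Polynomial ℝ := Matrix.det ((Polynomial.X : Polynomial ℝ) • A.map Polynomial.C
      + (1 : Matrix (Fin N) (Fin N) ℝ).map Polynomial.C)
    have hP : ∀ s : ℝ, (1 + s • M).det = P.eval s := by
      intro s
      have h1 : (1 + s • M).det = (1 + s • A).det := by
        change LinearMap.det ((1 + s • M : EE N →L[ℝ] EE N) : EE N →ₗ[ℝ] EE N) = _
        rw [← LinearMap.det_toMatrix b]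
        congr 1
        have : ((1 + s • M : EE N →L[ℝ] EE N) :
          EE N →ₗ[ℝ] EE N)
            = LinearMap.id + s • (M : _ →ₗ[ℝ] _) := rfl
        rw [this, map_add, map_smul, LinearMap.toMatrix_id]
      rw [h1]
      change _ = Polynomial.evalRingHom s P
      rw [RingHom.map_det]
      congr 1
      ext i j
      simp [Matrix.one_apply, add_comm]
      split_ifs <;> simp [mul_comm]
    have hdeg : P.degree < (Finset.range (N+1)).card := by
      have := Polynomial.natDegree_det_X_add_C_le A 1
      refine lt_of_le_of_lt Polynomial.degree_le_natDegree ?_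
      simp only [Fintype.card_fin] at this
      rw [Finset.card_range]
      exact_mod_cast Nat.lt_succ_of_le this
    have := Lagrange.eq_interpolate (s := Finset.range (N+1)) (v := t) (f := P) ht.injOn hdeg
    have h1 := hP 1
    rw [one_smul] at h1
    rw [h1, this, Lagrange.interpolate_apply, Polynomial.eval_finsetSum]
    refine Finset.sum_congr rfl fun i _ => ?_
    rw [hP]
    simp [mul_comm]

lemma bw_vol {N : ℕ} (h : EE N → EE N)
    (U : Set (EE N)) (hU : IsOpen U) (hBU : closedBall 0 1 ⊆ U)
    (hh : ContDiffOn ℝ 1 h U) (h0 : ∀ x, ‖x‖ = 1 → h x = 0) :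
    ∃ δ > 0, ∀ t : ℝ, 0 < t → t < δ →
      ∫ x in ball (0 : EE N) 1, (1 + t • fderiv ℝ h x).det
        = (MeasureTheory.volume (ball (0 : EE N) 1)).toReal := by
  have hcd : ContinuousOn (fderiv ℝ h) (closedBall 0 1) :=
    (hh.continuousOn_fderiv_of_isOpen hU le_rfl).mono hBU
  obtain ⟨C, hC⟩ := (isCompact_closedBall (0 : EE N) 1).exists_bound_of_continuousOn hcd
  have hdiff : ∀ x ∈ closedBall (0 : EE N) 1, HasFDerivAt h (fderiv ℝ h x) x := fun x hx =>
    ((hh.differentiableOn one_ne_zero).differentiableAt (hU.mem_nhds (hBU hx))).hasFDerivAt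
  have hC0 : 0 ≤ C := (norm_nonneg _).trans (hC 0 (by simp))
  -- Lipschitz on ball
  have hlip : ∀ x ∈ closedBall (0 : EE N) 1, ∀ y ∈ closedBall (0 : EE N) 1, ‖h y - h x‖ ≤ C * ‖y - x‖ := by
    intro x hx y hy
    exact (convex_closedBall (0 : EE N) 1).norm_image_sub_le_of_norm_hasFDerivWithin_le
      (fun z hz => (hdiff z hz).hasFDerivWithinAt) hC hx hy
  -- extension by zero
  classical
  let H : EE N → EE N := fun x => if ‖x‖ ≤ 1 then h x else 0
  have hHin : ∀ x, ‖x‖ ≤ 1 → H x = h x := fun x hx => if_pos hx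
  have hHout : ∀ x, 1 ≤ ‖x‖ → H x = 0 := by
    intro x hx
    by_cases h1 : ‖x‖ ≤ 1
    · rw [hHin x h1, h0 x (le_antisymm h1 hx)]
    · exact if_neg h1
  have hmix : ∀ x y : EE N, ‖x‖ ≤ 1 → 1 ≤ ‖y‖ → ‖H y - H x‖ ≤ C * ‖y - x‖ := by
    intro x y hx hy
    -- find point on the segment with norm 1
    have hcont : ContinuousOn (fun s : ℝ => ‖x + s • (y - x)‖) (Icc 0 1) := by fun_prop
    have := intermediate_value_Icc (zero_le_one) hcont
    obtain ⟨s, hs, hs1⟩ := this (show (1:ℝ) ∈ _ by simp [hx, hy])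
    simp only at hs1
    have hz : H (x + s • (y - x)) = 0 := hHout _ hs1.ge
    have := hlip x (by simpa using hx) (x + s • (y - x)) (by simpa using hs1.le)
    rw [← hHin _ hs1.le, ← hHin _ hx, hz] at this
    rw [hHout y hy]
    refine this.trans ?_
    rw [add_sub_cancel_left, norm_smul, Real.norm_of_nonneg hs.1]
    have := mul_le_mul_of_nonneg_right hs.2 (norm_nonneg (y - x))
    nlinarith
  have hHlip : ∀ x y : EE N, ‖H y - H x‖ ≤ C * ‖y - x‖ := by
    intro x y
    rcases le_total ‖x‖ 1 with hx | hx <;> rcases le_total ‖y‖ 1 with hy | hy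
    · rw [hHin x hx, hHin y hy]
      exact hlip x (by simpa using hx) y (by simpa using hy)
    · exact hmix x y hx hy
    · rw [norm_sub_rev, norm_sub_rev y x]; exact hmix y x hy hx
    · rw [hHout x hx, hHout y hy, sub_zero, norm_zero]; positivity
  -- det positivity
  obtain ⟨ρ, hρ, hdet⟩ : ∃ ρ > 0, ∀ A : EE N →L[ℝ] EE N, ‖A‖ < ρ → 0 < (1 + A).det := by
    have hc : Continuous fun A : EE N →L[ℝ] EE N => (1 + A).det :=
      ContinuousLinearMap.continuous_det.comp (by fun_prop)
    have : {A : EE N →L[ℝ] EE N | 0 < (1 + A).det} ∈ nhds (0 : EE N →L[ℝ] EE N) := by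
      apply (isOpen_lt continuous_const hc).mem_nhds
      simp [ContinuousLinearMap.det]
    obtain ⟨ρ, hρ, hsub⟩ := Metric.mem_nhds_iff.1 this
    exact ⟨ρ, hρ, fun A hA => hsub (by simpa using hA)⟩
  refine ⟨min 1 ρ / (C + 1), by positivity, fun t ht htδ => ?_⟩
  have htC : t * (C + 1) < min 1 ρ := (lt_div_iff₀ (by positivity)).1 htδ
  have htC1 : t * C < 1 := by have := min_le_left 1 ρ; nlinarith
  have htC2 : t * C < ρ := by have := min_le_right 1 ρ; nlinarith
  have hpos : ∀ x ∈ ball (0 : EE N) 1, 0 < (1 + t • fderiv ℝ h x).det := by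
    intro x hx
    apply hdet
    rw [norm_smul, Real.norm_of_nonneg ht.le]
    exact (mul_le_mul_of_nonneg_left (hC x (ball_subset_closedBall hx)) ht.le).trans_lt htC2
  let g : EE N → EE N := fun x => x + t • H x
  have ginj : Function.Injective g := by
    intro x y hxy
    have h1 : y - x = - (t • (H y - H x)) := by
      have : x + t • H x = y + t • H y := hxy
      rw [smul_sub]
      rw [← sub_eq_zero] at this ⊢
      rw [← neg_eq_zero, ← this]; abel
    have h2 : ‖y - x‖ ≤ t * C * ‖y - x‖ := by
      conv_lhs => rw [h1]
      rw [norm_neg, norm_smul, Real.norm_of_nonneg ht.le, mul_assoc]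
      exact mul_le_mul_of_nonneg_left (hHlip x y) ht.le
    have h3 : ‖y - x‖ = 0 := by
      have := norm_nonneg (y - x)
      nlinarith
    exact (sub_eq_zero.1 (norm_eq_zero.1 h3)).symm
  have gsurj : Function.Surjective g := by
    intro y
    have hcon : ContractingWith (Real.toNNReal (t * C)) (fun x => y - t • H x) := by
      refine ⟨by simpa using htC1, LipschitzWith.of_dist_le_mul fun a b => ?_⟩
      rw [dist_eq_norm, dist_eq_norm, Real.coe_toNNReal _ (by positivity)]
      have : y - t • H a - (y - t • H b) = t • (H b - H a) := by rw [smul_sub]; abel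
      rw [this, norm_smul, Real.norm_of_nonneg ht.le, mul_assoc, norm_sub_rev a b]
      exact mul_le_mul_of_nonneg_left (hHlip a b) ht.le
    refine ⟨hcon.fixedPoint, ?_⟩
    have := hcon.fixedPoint_isFixedPt
    unfold Function.IsFixedPt at this
    change hcon.fixedPoint + t • H hcon.fixedPoint = y
    nth_rewrite 1 [← this]
    simp
  have gout : ∀ x, 1 ≤ ‖x‖ → g x = x := by
    intro x hx; simp [g, hHout x hx]
  have gimg : g '' ball 0 1 = ball 0 1 := by
    apply Subset.antisymm
    · rintro _ ⟨x, hx, rfl⟩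
      by_contra hcon
      have h1 : 1 ≤ ‖g x‖ := by simpa using hcon
      have := ginj (gout _ h1)
      rw [this] at h1
      simp at hx; linarith
    · intro y hy
      obtain ⟨x, rfl⟩ := gsurj y
      refine ⟨x, ?_, rfl⟩
      by_contra hcon
      have h1 : 1 ≤ ‖x‖ := by simpa using hcon
      rw [gout x h1] at hy
      exact hcon hy
  have gder : ∀ x ∈ ball (0 : EE N) 1, HasFDerivWithinAt g (1 + t • fderiv ℝ h x) (ball 0 1) x := by
    intro x hx
    have h1 : HasFDerivAt (fun x => x + t • h x) (1 + t • fderiv ℝ h x) x :=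
      (hasFDerivAt_id x).add ((hdiff x (ball_subset_closedBall hx)).const_smul t)
    refine h1.hasFDerivWithinAt.congr (fun y hy => ?_) ?_
    · simp only [g]; rw [hHin y (by simpa using (ball_subset_closedBall hy))]
    · simp only [g]; rw [hHin x (by simpa using (ball_subset_closedBall hx))]
  have key := MeasureTheory.integral_image_eq_integral_abs_det_fderiv_smul
    MeasureTheory.volume measurableSet_ball gder ginj.injOn (fun _ => (1:ℝ))
  rw [gimg] at key
  simp only [smul_eq_mul, mul_one, MeasureTheory.integral_const] at key
  rw [MeasureTheory.setIntegral_congr_fun (g := fun x => (1 + t • fderiv ℝ h x).det)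
    measurableSet_ball (fun x hx => abs_of_pos (hpos x hx))] at key
  rw [← key]
  simp [MeasureTheory.measureReal_def]

lemma bw_noretr {N : ℕ} (h : EE N → EE N)
    (U : Set (EE N)) (hU : IsOpen U) (hBU : closedBall 0 1 ⊆ U)
    (hh : ContDiffOn ℝ 1 h U) (h0 : ∀ x, ‖x‖ = 1 → h x = 0)
    (h1 : ∀ x, ‖x‖ ≤ 1 → ‖x + h x‖ = 1) : False := by
  obtain ⟨δ, hδ, hvol⟩ := bw_vol h U hU hBU hh h0
  have hdiff : ∀ x ∈ closedBall (0 : EE N) 1,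
      HasFDerivAt h (fderiv ℝ h x) x := fun x hx =>
    ((hh.differentiableOn one_ne_zero).differentiableAt (hU.mem_nhds (hBU hx))).hasFDerivAt
  have hcd : ContinuousOn (fderiv ℝ h) (closedBall 0 1) :=
    (hh.continuousOn_fderiv_of_isOpen hU le_rfl).mono hBU
  let t : ℕ → ℝ := fun i => δ / (i + 2)
  have htpos : ∀ i, 0 < t i := fun i => by positivity
  have htlt : ∀ i, t i < δ := fun i => by
    have : (0:ℝ) ≤ i := by positivity
    rw [div_lt_iff₀ (by positivity)]; nlinarith
  have htinj : Function.Injective t := by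
    intro i j hij
    simp only [t] at hij
    rw [div_eq_div_iff (by positivity) (by positivity)] at hij
    have := mul_left_cancel₀ hδ.ne' hij
    have : (i:ℝ) = j := by linarith
    exact_mod_cast this
  obtain ⟨c, hc, hdet⟩ := bw_interp N t htinj
  have hzero : ∀ x ∈ ball (0 : EE N) 1, (1 + fderiv ℝ h x).det = 0 := by
    intro x hx
    by_contra hne
    have hd : HasFDerivAt (fun x => x + h x) (1 + fderiv ℝ h x) x :=
      (hasFDerivAt_id x).add (hdiff x (ball_subset_closedBall hx))
    have hsq := hd.norm_sq
    have hconst : HasFDerivAt (fun x => ‖x + h x‖^2)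
        (0 : EE N →L[ℝ] ℝ) x := by
      apply (hasFDerivAt_const (1:ℝ) x).congr_of_eventuallyEq
      filter_upwards [isOpen_ball.mem_nhds hx] with y hy
      rw [h1 y (by simpa using (ball_subset_closedBall hy))]; simp
    have heq := hsq.unique hconst
    have hsurj : Function.Surjective (1 + fderiv ℝ h x : EE N →L[ℝ] EE N) := by
      have : IsUnit (LinearMap.det ((1 + fderiv ℝ h x : EE N →L[ℝ] EE N) :
        EE N →ₗ[ℝ] EE N)) := isUnit_iff_ne_zero.2 hne
      rw [← LinearMap.isUnit_iff_isUnit_det] at this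
      exact ((Module.End.isUnit_iff _).1 this).2
    obtain ⟨v, hv⟩ := hsurj (x + h x)
    have := congrArg (fun L => L v) heq
    simp only [smul_apply, ContinuousLinearMap.comp_apply, hv] at this
    simp at this
    rw [← mul_add, ← inner_add_left, real_inner_self_eq_norm_sq,
      h1 x (by simpa using (ball_subset_closedBall hx))] at this
    norm_num at this
  have hint : ∀ i, MeasureTheory.IntegrableOn (fun x => (1 + t i • fderiv ℝ h x).det)
      (ball (0 : EE N) 1) := by
    intro i
    have : ContinuousOn (fun x => (1 + t i • fderiv ℝ h x).det)
        (closedBall (0 : EE N) 1) :=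
      ContinuousLinearMap.continuous_det.comp_continuousOn
        (continuousOn_const.add (hcd.const_smul (t i)))
    exact (this.integrableOn_compact (isCompact_closedBall _ _)).mono_set ball_subset_closedBall
  have e1 : ∫ x in ball (0 : EE N) 1, (1 + fderiv ℝ h x).det = 0 := by
    rw [MeasureTheory.setIntegral_congr_fun measurableSet_ball hzero]; simp
  have e2 : ∫ x in ball (0 : EE N) 1, (1 + fderiv ℝ h x).det
      = (MeasureTheory.volume (ball (0 : EE N) 1)).toReal := by
    have hfun : (fun x => (1 + fderiv ℝ h x).det) = fun x =>
        ∑ i ∈ Finset.range (N+1), c i * (1 + t i • fderiv ℝ h x).det := funext fun x => hdet _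
    rw [hfun]
    rw [MeasureTheory.integral_finsetSum _ (fun i _ => (hint i).const_mul (c i))]
    simp_rw [MeasureTheory.integral_const_mul, hvol _ (htpos _) (htlt _)]
    rw [← Finset.sum_mul, hc, one_mul]
  rw [e1] at e2
  have hp : 0 < (MeasureTheory.volume (ball (0 : EE N) 1)).toReal :=
    ENNReal.toReal_pos (measure_ball_pos _ _ one_pos).ne' MeasureTheory.measure_ball_lt_top.ne
  linarith

lemma bw_smooth {N : ℕ} (p : EE N → EE N) (hp : ContDiff ℝ 1 p)
    (hpB : ∀ x, ‖p x‖ ≤ 1) : ∃ x, ‖x‖ ≤ 1 ∧ p x = x := by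
  by_contra! hne
  let D : EE N → ℝ := fun x => ⟪x, x - p x⟫ ^ 2 + ‖x - p x‖ ^ 2 * (1 - ‖x‖ ^ 2)
  let l : EE N → ℝ := fun x => (- ⟪x, x - p x⟫ + √(D x)) / ‖x - p x‖ ^ 2
  have hDc : ContDiff ℝ 1 D := by
    have h1 : ContDiff ℝ 1 fun x => x - p x := contDiff_id.sub hp
    exact ((contDiff_id.inner ℝ h1).pow 2).add
      ((h1.norm_sq ℝ).mul (contDiff_const.sub (contDiff_id.norm_sq ℝ)))
  have hin : ∀ x : EE N, ‖x‖ = 1 → 0 < ⟪x, x - p x⟫ := by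
    intro x hx
    have h1 : p x ≠ x := hne x hx.le
    have h2 : 0 < ‖x - p x‖ ^ 2 := by
      have := norm_pos_iff.2 (sub_ne_zero.2 h1.symm); positivity
    have h3 := norm_sub_sq_real x (p x)
    have h4 := hpB x
    have h5 := norm_nonneg (p x)
    rw [inner_sub_right, real_inner_self_eq_norm_sq]
    rw [hx] at h3 ⊢
    nlinarith
  have hu : ∀ x : EE N, ‖x‖ ≤ 1 → 0 < ‖x - p x‖ ^ 2 := by
    intro x hx
    have := norm_pos_iff.2 (sub_ne_zero.2 (hne x hx).symm); positivity
  have hDpos : ∀ x : EE N, ‖x‖ ≤ 1 → 0 < D x := by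
    intro x hx
    rcases hx.lt_or_eq with h | h
    · have h1 : 0 < 1 - ‖x‖ ^ 2 := by nlinarith [norm_nonneg x]
      have := mul_pos (hu x hx) h1
      simp only [D]; positivity
    · have := hin x h
      simp only [D, h]
      simp; positivity
  let U : Set (EE N) := {x | 0 < D x} ∩ {x | 0 < ‖x - p x‖ ^ 2}
  have hU : IsOpen U := by
    have hpc := hp.continuous
    exact (isOpen_lt continuous_const hDc.continuous).inter
      (isOpen_lt continuous_const (by fun_prop))
  refine bw_noretr (fun x => l x • (x - p x)) U hU ?_ ?_ ?_ ?_
  · intro x hx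
    have hx : ‖x‖ ≤ 1 := by simpa using hx
    exact ⟨hDpos x hx, hu x hx⟩
  · have h1 : ContDiff ℝ 1 fun x => x - p x := contDiff_id.sub hp
    refine ContDiffOn.smul (ContDiffOn.div ?_ (h1.norm_sq ℝ).contDiffOn ?_) h1.contDiffOn
    · exact (contDiff_id.inner ℝ h1).neg.contDiffOn.add
        (hDc.contDiffOn.sqrt fun x hx => (ne_of_gt hx.1))
    · intro x hx; exact ne_of_gt hx.2
  · intro x hx
    have : l x = 0 := by
      simp only [l, D, hx]
      simp [Real.sqrt_sq (hin x hx).le]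
    simp [this]
  · intro x hx
    have h1 : ‖x + l x • (x - p x)‖ ^ 2 = 1 := by
      rw [norm_add_sq_real, norm_smul, inner_smul_right, mul_pow, Real.norm_eq_abs, sq_abs]
      have hs := Real.sq_sqrt (hDpos x hx).le
      have hne := (hu x hx).ne'
      have hl : l x * ‖x - p x‖ ^ 2 = - ⟪x, x - p x⟫ + √(D x) := div_mul_cancel₀ _ hne
      apply mul_right_cancel₀ hne
      have hD : D x = ⟪x, x - p x⟫ ^ 2 + ‖x - p x‖ ^ 2 * (1 - ‖x‖ ^ 2) := rfl
      generalize ‖x - p x‖ ^ 2 = a at *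
      generalize ⟪x, x - p x⟫ = b at *
      generalize l x = c at *
      generalize √(D x) = d at *
      have h2 : (c * a) ^ 2 = (-b + d) ^ 2 := by rw [hl]
      rw [hD] at hs
      linear_combination h2 + hs + 2 * b * hl
    have h2 := norm_nonneg (x + l x • (x - p x))
    nlinarith

lemma bw_ball {N : ℕ} (f : EE N → EE N) (hf : Continuous f)
    (hfB : ∀ x, ‖f x‖ ≤ 1) : ∃ x, ‖x‖ ≤ 1 ∧ f x = x := by
  by_contra! hne
  obtain ⟨μ, hμ, hfar⟩ : ∃ μ > 0, ∀ x : EE N, ‖x‖ ≤ 1 → μ ≤ ‖f x - x‖ := by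
    obtain ⟨x₀, hx₀, hmin⟩ := (isCompact_closedBall (0 : EE N) 1).exists_isMinOn
      ⟨0, by simp⟩ (f := fun x => ‖f x - x‖) (by fun_prop)
    refine ⟨‖f x₀ - x₀‖, norm_pos_iff.2 (sub_ne_zero.2 (hne x₀ (by simpa using hx₀))), ?_⟩
    intro x hx
    exact hmin (by simpa using hx)
  obtain ⟨p, hp⟩ := exists_contMDiffMap_forall_mem_convex_of_local_const (n := 1)
    (modelWithCornersSelf ℝ (EE N)) (t := fun x => ball (f x) μ ∩ closedBall (0 : EE N) 1)
    (fun x => (convex_ball _ _).inter (convex_closedBall _ _))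
    (fun x => ⟨f x, by
      have : ∀ᶠ y in nhds x, f y ∈ ball (f x) μ :=
        hf.continuousAt.eventually (isOpen_ball.mem_nhds (by simpa using hμ))
      filter_upwards [this] with y hy
      exact ⟨by rwa [mem_ball_comm], by simpa using hfB x⟩⟩)
  obtain ⟨x, hx, hpx⟩ := bw_smooth p (contMDiff_iff_contDiff.1 p.contMDiff)
    (fun x => by simpa using (hp x).2)
  have h1 := (hp x).1
  rw [hpx, mem_ball, dist_comm, dist_eq_norm] at h1
  linarith [hfar x hx]

/-- Brouwer fixed point theorem, for sets homeomorphic to a closed ball. -/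
lemma bw_main {N : ℕ} (S : Set (EE N)) (x₀ : EE N) (R : ℝ) (hR : 0 < R)
    (e : S ≃ₜ (closedBall x₀ R : Set (EE N))) (f : EE N → EE N)
    (hf : ContinuousOn f S) (hfS : MapsTo f S S) : ∃ x ∈ S, f x = x := by
  -- projection on the unit ball
  let π : EE N → EE N := fun x => (max 1 ‖x‖)⁻¹ • x
  have hm : ∀ x : EE N, 0 < max 1 ‖x‖ := fun x => lt_of_lt_of_le one_pos (le_max_left _ _)
  have hπc : Continuous π :=
    ((continuous_const.max continuous_norm).inv₀ fun x => (hm x).ne').smul continuous_id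
  have hπB : ∀ x, ‖π x‖ ≤ 1 := by
    intro x
    rw [norm_smul, norm_inv, Real.norm_of_nonneg (hm x).le, inv_mul_le_iff₀ (hm x), mul_one]
    exact le_max_right _ _
  have hπid : ∀ x, ‖x‖ ≤ 1 → π x = x := by
    intro x hx; simp [π, max_eq_left hx]
  let a : EE N → (closedBall x₀ R : Set (EE N)) := fun x => ⟨x₀ + R • π x, by
    rw [mem_closedBall, dist_eq_norm, add_sub_cancel_left, norm_smul, Real.norm_of_nonneg hR.le]
    have := hπB x
    nlinarith⟩
  have hac : Continuous a := by
    apply Continuous.subtype_mk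
    fun_prop
  let fS : S → S := hfS.restrict f S S
  have hfSc : Continuous fS := hf.mapsToRestrict hfS
  let F : EE N → EE N := fun x => R⁻¹ • ((e (fS (e.symm (a x))) : EE N) - x₀)
  have hFc : Continuous F := by
    have : Continuous fun x => (e (fS (e.symm (a x))) : EE N) :=
      continuous_subtype_val.comp (e.continuous.comp (hfSc.comp (e.symm.continuous.comp hac)))
    fun_prop
  have hFB : ∀ x, ‖F x‖ ≤ 1 := by
    intro x
    have h1 := (e (fS (e.symm (a x)))).2
    rw [mem_closedBall, dist_eq_norm] at h1
    rw [norm_smul, norm_inv, Real.norm_of_nonneg hR.le, inv_mul_le_iff₀ hR, mul_one]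
    exact h1
  obtain ⟨x, hx, hFx⟩ := bw_ball F hFc hFB
  have h1 : e (fS (e.symm (a x))) = a x := by
    apply Subtype.ext
    change _ = x₀ + R • π x
    rw [hπid x hx]
    nth_rewrite 2 [← hFx]
    simp [F, smul_smul, hR.ne']
  refine ⟨e.symm (a x), (e.symm (a x)).2, ?_⟩
  have h2 : fS (e.symm (a x)) = e.symm (a x) := by
    apply e.injective
    rw [h1]; simp
  exact congrArg Subtype.val h2

lemma pe_normal {N : ℕ} {G : Set (EE N)} {z p w v : EE N} {V : EE N → ℝ} {r c η : ℝ}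
    (hr : 0 < r) (hV : DifferentiableAt ℝ V p) (hw : w = gradient V p)
    (hVp : V p = 0) (hneg : ∀ x ∈ G ∩ ball p r, V x < 0)
    (hzp : z ≠ p) (hball : ball z (dist z p) ⊆ G)
    (hc : 0 < c) (hη : 0 < η) (hwη : ‖w‖ ≤ η) (hv : ⟪v, w⟫ ≤ -c) :
    c / (2 * η) * ‖z - p‖ ≤ ⟪v, z - p⟫ := by
  by_contra! hlt
  have hn : 0 < ‖z - p‖ := norm_pos_iff.2 (sub_ne_zero.2 hzp)
  have key : ∀ e : EE N, 0 < ⟪e, z - p⟫ → ⟪w, e⟫ ≤ 0 := by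
    intro e he
    have hd : HasDerivAt (fun s : ℝ => V (p + s • e)) ⟪w, e⟫ 0 := by
      have h1 : HasFDerivAt V (InnerProductSpace.toDual ℝ (EE N) w) (p + (0:ℝ) • e) := by
        rw [hw]; simpa using hV.hasGradientAt.hasFDerivAt
      have h2 : HasDerivAt (fun s : ℝ => p + s • e) e 0 := by
        simpa using ((hasDerivAt_id (0:ℝ)).smul_const e).const_add p
      have h3 := h1.comp_hasDerivAt (0:ℝ) h2
      rw [InnerProductSpace.toDual_apply_apply] at h3
      exact h3
    by_contra! hpos
    have hev : ∀ᶠ s in nhdsWithin (0:ℝ) (Ioi 0), 0 < V (p + s • e) := by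
      have h3 := (hasDerivAt_iff_tendsto_slope.1 hd).mono_left
        (nhdsWithin_mono (0:ℝ) (fun x (hx : x ∈ Ioi (0:ℝ)) => ne_of_gt hx))
      filter_upwards [h3.eventually (lt_mem_nhds hpos), self_mem_nhdsWithin] with s hs hs0
      simp only [slope_def_field, zero_smul, add_zero, hVp, sub_zero] at hs
      exact (div_pos_iff_of_pos_right hs0).1 hs
    have hev2 : ∀ᶠ s in nhdsWithin (0:ℝ) (Ioi 0), p + s • e ∈ ball p r := by
      have : ContinuousAt (fun s : ℝ => p + s • e) 0 := by fun_prop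
      exact nhdsWithin_le_nhds (this.eventually (isOpen_ball.mem_nhds (by simpa using hr)))
    have hev3 : ∀ᶠ s in nhdsWithin (0:ℝ) (Ioi 0), s * ‖e‖ ^ 2 < 2 * ⟪e, z - p⟫ := by
      have : ContinuousAt (fun s : ℝ => s * ‖e‖ ^ 2) 0 := by fun_prop
      exact nhdsWithin_le_nhds (this.eventually (gt_mem_nhds (by simpa using he)))
    obtain ⟨s, h1, h2, h3, h4⟩ :=
      (hev.and (hev2.and (hev3.and self_mem_nhdsWithin))).exists
    have h4 : 0 < s := h4
    have hmem : p + s • e ∈ G := by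
      apply hball
      rw [mem_ball, dist_eq_norm, dist_eq_norm, ← sq_lt_sq₀ (norm_nonneg _) (norm_nonneg _)]
      have : p + s • e - z = s • e - (z - p) := by abel
      rw [this, norm_sub_sq_real, norm_smul, inner_smul_left, mul_pow, Real.norm_eq_abs, sq_abs]
      simp only [conj_trivial]
      nlinarith
    linarith [hneg _ ⟨hmem, h2⟩]
  have h := key (-v + (c / (2 * η) / ‖z - p‖) • (z - p)) (by
    rw [inner_add_left, inner_neg_left, inner_smul_left, real_inner_self_eq_norm_sq]
    simp only [conj_trivial]
    have : c / (2 * η) / ‖z - p‖ * ‖z - p‖ ^ 2 = c / (2 * η) * ‖z - p‖ := by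
      field_simp
    linarith)
  rw [inner_add_right, inner_neg_right, inner_smul_right, real_inner_comm] at h
  have hcs := abs_real_inner_le_norm w (z - p)
  have h1 : -(η * ‖z - p‖) ≤ ⟪w, z - p⟫ := by
    have := (abs_le.1 hcs).1
    nlinarith
  have h2 : c / (2 * η) / ‖z - p‖ * ⟪w, z - p⟫ ≥ -(c / 2) := by
    have h3 : 0 < c / (2 * η) / ‖z - p‖ := by positivity
    have h4 := mul_le_mul_of_nonneg_left h1 h3.le
    have : c / (2 * η) / ‖z - p‖ * -(η * ‖z - p‖) = -(c/2) := by field_simp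
    linarith
  linarith

lemma pe_step {N : ℕ} {G : Set (EE N)} (hG : IsOpen G) {x v : EE N} {κ ρ h : ℝ}
    (hx : x ∈ G) (hκ : 0 < κ) (hρ : 0 < ρ) (hh : 0 ≤ h) (hv : h * ‖v‖ ≤ ρ / 2)
    (H : ∀ z p, p ∈ frontier G → dist p x ≤ ρ → z ≠ p → ball z (dist z p) ⊆ G →
      κ * ‖z - p‖ ≤ ⟪v, z - p⟫) : x + h • v ∈ G := by
  by_contra hout
  have hne : (Gᶜ).Nonempty := ⟨_, hout⟩
  have hcl : IsClosed Gᶜ := hG.isClosed_compl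
  let q : ℝ → EE N := fun s => x + s • v
  have hq : Continuous q := by fun_prop
  -- first exit time
  let S : Set ℝ := Icc 0 h ∩ q ⁻¹' Gᶜ
  have hScpt : IsCompact S := isCompact_Icc.inter_right (hcl.preimage hq)
  have hSne : S.Nonempty := ⟨h, ⟨⟨hh, le_rfl⟩, hout⟩⟩
  obtain ⟨s₁, hs₁, hmin⟩ := hScpt.exists_isLeast hSne
  have hs₁pos : 0 < s₁ := by
    rcases hs₁.1.1.lt_or_eq with h | h
    · exact h
    · exfalso; apply hs₁.2; rw [← h]; simpa [q] using hx
  have hbefore : ∀ s, 0 ≤ s → s < s₁ → q s ∈ G := by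
    intro s h0 hs
    by_contra hc
    exact absurd (hmin ⟨⟨h0, hs.le.trans hs₁.1.2⟩, hc⟩) (not_le.2 hs)
  let d : ℝ → ℝ := fun s => infDist (q s) Gᶜ
  have hd : Continuous d := (continuous_infDist_pt _).comp hq
  have hd1 : d s₁ = 0 := infDist_zero_of_mem hs₁.2
  have hdpos : ∀ s, 0 ≤ s → s < s₁ → 0 < d s := by
    intro s h0 hs
    exact (hcl.notMem_iff_infDist_pos hne).1 (fun hc => hc (hbefore s h0 hs))
  -- start time close to exit
  obtain ⟨s₀, hs₀, hs₀0, hsmall⟩ : ∃ s₀, s₀ < s₁ ∧ 0 ≤ s₀ ∧ ∀ s, s₀ ≤ s → s ≤ s₁ → d s ≤ ρ / 2 := by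
    have : ∀ᶠ s in nhds s₁, d s < ρ / 2 :=
      hd.continuousAt.eventually (gt_mem_nhds (by rw [hd1]; positivity))
    obtain ⟨ε, hε, hb⟩ := Metric.eventually_nhds_iff.1 this
    refine ⟨max 0 (s₁ - ε / 2), max_lt hs₁pos (by linarith), le_max_left _ _, fun s h1 h2 => ?_⟩
    have h3 := (le_max_right 0 (s₁ - ε / 2)).trans h1
    exact (hb (by rw [Real.dist_eq, abs_lt]; constructor <;> linarith)).le
  have hleft : ∀ s, s₀ < s → s < s₁ → ∃ s', s₀ ≤ s' ∧ s' < s ∧ d s' < d s := by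
    intro s h1 h2
    have hds := hdpos s (hs₀0.trans h1.le) h2
    obtain ⟨p, hp, hpd⟩ := hcl.exists_infDist_eq_dist hne (q s)
    have hpd : d s = dist (q s) p := hpd
    have hballG : ball (q s) (dist (q s) p) ⊆ G := by
      intro y hy
      by_contra hc
      have : infDist (q s) Gᶜ ≤ dist (q s) y := infDist_le_dist_of_mem hc
      rw [mem_ball, dist_comm, ← hpd] at hy
      exact absurd hy (not_lt.2 this)
    have hzp : q s ≠ p := by
      intro he; rw [he, dist_self] at hpd; linarith
    have hpfr : p ∈ frontier G := by
      rw [frontier, hG.interior_eq]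
      refine ⟨?_, hp⟩
      have h3 : p ∈ closure (ball (q s) (dist (q s) p)) := by
        rw [closure_ball _ (dist_pos.2 hzp).ne', mem_closedBall, dist_comm]
      exact closure_mono hballG h3
    have hpx : dist p x ≤ ρ := by
      have h3 : dist p x ≤ dist p (q s) + dist (q s) x := dist_triangle _ _ _
      have h4 : dist (q s) x ≤ ρ / 2 := by
        rw [dist_eq_norm]
        simp only [q, add_sub_cancel_left, norm_smul]
        rw [Real.norm_of_nonneg (hs₀0.trans h1.le)]
        refine le_trans ?_ hv
        exact mul_le_mul_of_nonneg_right (h2.le.trans hs₁.1.2) (norm_nonneg _)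
      have h5 := hsmall s h1.le h2.le
      rw [hpd, dist_comm] at h5
      linarith
    have hH := H (q s) p hpfr hpx hzp hballG
    have hnp : ‖q s - p‖ = d s := by rw [hpd, dist_eq_norm]
    rw [hnp] at hH
    -- choose k
    obtain ⟨k, hk, hks, hkv⟩ : ∃ k : ℝ, 0 < k ∧ k ≤ s - s₀ ∧ k * ‖v‖ ^ 2 < 2 * (κ * d s) := by
      refine ⟨min (s - s₀) (κ * d s / (‖v‖ ^ 2 + 1)), ?_, min_le_left _ _, ?_⟩
      · apply lt_min (by linarith); positivity
      · have h3 := min_le_right (s - s₀) (κ * d s / (‖v‖ ^ 2 + 1))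
        have h4 : κ * d s / (‖v‖ ^ 2 + 1) * (‖v‖ ^ 2 + 1) = κ * d s := by field_simp
        have h5 : 0 < κ * d s / (‖v‖ ^ 2 + 1) := by positivity
        have h6 : 0 < κ * d s := by positivity
        have h7 := mul_le_mul_of_nonneg_right h3 (sq_nonneg ‖v‖)
        nlinarith
    refine ⟨s - k, by linarith, by linarith, ?_⟩
    refine lt_of_le_of_lt (infDist_le_dist_of_mem hp) ?_
    rw [dist_eq_norm, ← sq_lt_sq₀ (norm_nonneg _) hds.le]
    have : q (s - k) - p = (q s - p) - k • v := by
      simp only [q, sub_smul]; abel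
    rw [this, norm_sub_sq_real, norm_smul, inner_smul_right, hnp, mul_pow, Real.norm_eq_abs,
      sq_abs, real_inner_comm]
    nlinarith
  have hmono : ∀ s, s₀ ≤ s → s < s₁ → d s₀ ≤ d s := by
    intro s h1 h2
    obtain ⟨m, hm, hmmin⟩ := (isCompact_Icc (a := s₀) (b := s)).exists_isMinOn
      ⟨s₀, le_rfl, h1⟩ hd.continuousOn
    rcases hm.1.lt_or_eq with h3 | h3
    · obtain ⟨s', h4, h5, h6⟩ := hleft m h3 (hm.2.trans_lt h2)
      exact absurd (hmmin (show s' ∈ Icc s₀ s from ⟨h4, h5.le.trans hm.2⟩)) (not_le.2 h6)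
    · rw [h3]; exact hmmin (show s ∈ Icc s₀ s from ⟨h1, le_rfl⟩)
  have hlim : d s₀ ≤ d s₁ := by
    have h1 : Filter.Tendsto d (nhdsWithin s₁ (Iio s₁)) (nhds (d s₁)) :=
      hd.continuousAt.tendsto.mono_left nhdsWithin_le_nhds
    refine ge_of_tendsto h1 ?_
    have : Ico s₀ s₁ ∈ nhdsWithin s₁ (Iio s₁) := Ico_mem_nhdsLT hs₀
    filter_upwards [this] with s hs
    exact hmono s hs.1 hs.2
  linarith [hdpos s₀ hs₀0 hs₀]

/-- Euler iteration. -/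
def peIter {N : ℕ} (h : ℝ) (F : ℝ × EE N → EE N) : ℕ → EE N → EE N
  | 0, x => x
  | k+1, x => peIter h F k x + h • F (k * h, peIter h F k x)

lemma peIter_cont {N : ℕ} (h : ℝ) (F : ℝ × EE N → EE N) (hF : Continuous F) (k : ℕ) :
    Continuous (peIter h F k) := by
  induction k with
  | zero => exact continuous_id
  | succ k ih =>
    change Continuous fun x => peIter h F k x + h • F (k * h, peIter h F k x)
    fun_prop

lemma pe_euler {N : ℕ} {T : ℝ} (hT : 0 < T) {G : Set (EE N)} (hG : IsOpen G)
    (hGb : Bornology.IsBounded G) (f : ℝ × EE N → EE N) (hf : Continuous f)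
    (g : EE N → EE N) (hg : Continuous g)
    (hA : ∀ ε : ℝ, 0 < ε → ∃ κ > 0, ∀ t ∈ Icc (0:ℝ) T, ∀ z p, p ∈ frontier G → z ≠ p →
      ball z (dist z p) ⊆ G → κ * ‖z - p‖ ≤ ⟪f (t, p) + ε • g p, z - p⟫)
    (hB : ∀ Φ : EE N → EE N, ContinuousOn Φ (closure G) → MapsTo Φ (closure G) (closure G) →
      ∃ x ∈ closure G, Φ x = x) (ε : ℝ) (hε : 0 < ε) :
    ∃ m : ℕ, 0 < m ∧ T / m < ε ∧ ∃ Y : ℕ → EE N, (∀ k ≤ m, Y k ∈ closure G) ∧ Y m = Y 0 ∧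
      ∀ k < m, ‖Y (k+1) - Y k - (T / m) • f (k * (T / m), Y k)‖ ≤ ε * (T / m) := by
  have hcpt : IsCompact (closure G) := hGb.isCompact_closure
  obtain ⟨B, hBd⟩ := hcpt.exists_bound_of_continuousOn hg.continuousOn
  set ε' := ε / (|B| + 1) with hε'
  have hε'pos : 0 < ε' := by positivity
  let F : ℝ × EE N → EE N := fun q => f q + ε' • g q.2
  have hF : Continuous F := by fun_prop
  obtain ⟨κ, hκ, hA⟩ := hA ε' hε'pos
  have hK : IsCompact (Icc (0:ℝ) T ×ˢ closure G) := isCompact_Icc.prod hcpt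
  obtain ⟨M, hM⟩ := hK.exists_bound_of_continuousOn hF.continuousOn
  have huc := hK.uniformContinuousOn_of_continuous hF.continuousOn
  obtain ⟨ρ', hρ', huc⟩ := Metric.uniformContinuousOn_iff_le.1 huc (κ / 2) (by positivity)
  obtain ⟨m, hm⟩ := exists_nat_gt (max (T / ε) (T * (|M| + 1) * 2 / ρ'))
  have hm1 := (le_max_left _ _).trans_lt hm
  have hm2 := (le_max_right _ _).trans_lt hm
  have hm0 : (0:ℝ) < m := lt_trans (by positivity) hm1
  set h := T / m with hh
  have hhpos : 0 < h := by positivity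
  have hmh : m * h = T := by rw [hh]; field_simp
  have hkT : ∀ k : ℕ, k ≤ m → (k : ℝ) * h ∈ Icc (0:ℝ) T := by
    intro k hk
    have : (k:ℝ) ≤ m := by exact_mod_cast hk
    exact ⟨by positivity, by nlinarith⟩
  have hstepG : ∀ t ∈ Icc (0:ℝ) T, ∀ x ∈ G, x + h • F (t, x) ∈ G := by
    intro t ht x hx
    have hxc := subset_closure hx
    refine pe_step hG hx (κ := κ / 2) (ρ := ρ') (by positivity) hρ' hhpos.le ?_ ?_
    · have h1 : ‖F (t, x)‖ ≤ |M| + 1 := (hM (t, x) ⟨ht, hxc⟩).trans (by linarith [le_abs_self M])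
      have h2 : h * (|M| + 1) ≤ ρ' / 2 := by
        rw [hh, div_mul_eq_mul_div, div_le_iff₀ hm0]
        rw [div_lt_iff₀ hρ'] at hm2
        nlinarith
      exact (mul_le_mul_of_nonneg_left h1 hhpos.le).trans h2
    · intro z p hp hpx hzp hball
      have h1 := hA t ht z p hp hzp hball
      have h2 : dist (F (t, p)) (F (t, x)) ≤ κ / 2 := by
        refine huc (t, p) ⟨ht, frontier_subset_closure hp⟩ (t, x) ⟨ht, hxc⟩ ?_
        simp [Prod.dist_eq, hpx]
      have h3 : ⟪F (t, x), z - p⟫ = ⟪F (t, p), z - p⟫ - ⟪F (t, p) - F (t, x), z - p⟫ := by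
        rw [inner_sub_left]; ring
      have h4 := real_inner_le_norm (F (t, p) - F (t, x)) (z - p)
      rw [← dist_eq_norm] at h4
      have h5 := mul_le_mul_of_nonneg_right h2 (norm_nonneg (z - p))
      have h1 : κ * ‖z - p‖ ≤ ⟪F (t, p), z - p⟫ := h1
      rw [h3]
      linarith
  have hstep : ∀ t ∈ Icc (0:ℝ) T, ∀ x ∈ closure G, x + h • F (t, x) ∈ closure G := by
    intro t ht
    have h1 : MapsTo (fun x => x + h • F (t, x)) G G := hstepG t ht
    exact h1.closure (by fun_prop)
  have hmaps : ∀ k ≤ m, MapsTo (peIter h F k) (closure G) (closure G) := by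
    intro k
    induction k with
    | zero => intro _ x hx; exact hx
    | succ k ih =>
      intro hk x hx
      exact hstep _ (hkT k (by omega)) _ (ih (by omega) hx)
  obtain ⟨x, hx, hfix⟩ := hB (peIter h F m) (peIter_cont h F hF m).continuousOn (hmaps m le_rfl)
  refine ⟨m, by exact_mod_cast hm0, ?_, fun k => peIter h F k x, fun k hk => hmaps k hk hx,
    hfix, fun k hk => ?_⟩
  · rw [div_lt_iff₀ hm0]
    rw [div_lt_iff₀ hε] at hm1
    linarith
  · have hmem := hmaps k hk.le hx
    have h1 : peIter h F (k+1) x - peIter h F k x - h • f (k * h, peIter h F k x)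
        = h • (ε' • g (peIter h F k x)) := by
      simp only [peIter, F, smul_add]; abel
    rw [h1, norm_smul, norm_smul, Real.norm_of_nonneg hhpos.le, Real.norm_of_nonneg hε'pos.le,
      mul_comm]
    refine mul_le_mul_of_nonneg_right ?_ hhpos.le
    have h2 : ‖g (peIter h F k x)‖ ≤ |B| + 1 := (hBd _ hmem).trans (by linarith [le_abs_self B])
    calc ε' * ‖g (peIter h F k x)‖ ≤ ε' * (|B| + 1) := by gcongr
      _ = ε := by rw [hε']; field_simp

lemma pe_disc {N : ℕ} {f : ℝ × EE N → EE N} {Y : ℕ → EE N} {m : ℕ} {h ε η : ℝ}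
    (hY : ∀ k < m, ‖Y (k+1) - Y k - h • f (k * h, Y k)‖ ≤ ε * h) (hh : 0 ≤ h)
    (v : EE N) (i j : ℕ) (hij : i ≤ j) (hj : j ≤ m)
    (hv : ∀ k, i ≤ k → k < j → ‖f (k * h, Y k) - v‖ ≤ η) :
    ‖Y j - Y i - (((j:ℝ) - i) * h) • v‖ ≤ (η + ε) * (((j:ℝ) - i) * h) := by
  induction j, hij using Nat.le_induction with
  | base => simp
  | succ j hij ih =>
    have ih := ih (by omega) (fun k h1 h2 => hv k h1 (by omega))
    have h1 := hY j (by omega)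
    have h2 := hv j hij (by omega)
    have e : Y (j+1) - Y i - ((((j+1 : ℕ):ℝ) - i) * h) • v
        = (Y j - Y i - (((j:ℝ) - i) * h) • v) + (Y (j+1) - Y j - h • f (j * h, Y j))
          + h • (f (j * h, Y j) - v) := by
      push_cast
      module
    rw [e]
    refine (norm_add₃_le).trans ?_
    rw [norm_smul, Real.norm_of_nonneg hh]
    have h3 := mul_le_mul_of_nonneg_left h2 hh
    push_cast
    nlinarith

open Filter in
lemma pe_limit {N : ℕ} {T : ℝ} (hT : 0 < T) {K : Set (EE N)} (hKc : IsCompact K)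
    (f : ℝ × EE N → EE N) (hf : Continuous f)
    (hD : ∀ ε : ℝ, 0 < ε → ∃ m : ℕ, 0 < m ∧ T / m < ε ∧ ∃ Y : ℕ → EE N, (∀ k ≤ m, Y k ∈ K) ∧
      Y m = Y 0 ∧ ∀ k < m, ‖Y (k+1) - Y k - (T / m) • f (k * (T / m), Y k)‖ ≤ ε * (T / m)) :
    ∃ y : ℝ → EE N, (∀ t ∈ Icc (0:ℝ) T, y t ∈ K) ∧ y 0 = y T ∧
      ∀ t ∈ Icc (0:ℝ) T, HasDerivWithinAt y (f (t, y t)) (Icc 0 T) t := by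
  let ε : ℕ → ℝ := fun n => 1 / ((n:ℝ) + 1)
  have hε : ∀ n, 0 < ε n := fun n => by positivity
  have hε1 : ∀ n, ε n ≤ 1 := fun n => by
    have : (0:ℝ) ≤ n := by positivity
    rw [div_le_one (by positivity)]; linarith
  have hεlim : Tendsto ε atTop (nhds 0) := tendsto_one_div_add_atTop_nhds_zero_nat
  choose m hm hmε Y hYK hYper hYst using fun n => hD (ε n) (hε n)
  let h : ℕ → ℝ := fun n => T / m n
  have hm0 : ∀ n, (0:ℝ) < m n := fun n => by exact_mod_cast hm n
  have hh : ∀ n, 0 < h n := fun n => div_pos hT (hm0 n)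
  have hmh : ∀ n, m n * h n = T := fun n => by
    have := (hm0 n).ne'
    simp only [h]; field_simp
  have hhlim : Tendsto h atTop (nhds 0) :=
    squeeze_zero (fun n => (hh n).le) (fun n => (hmε n).le) hεlim
  let i : ℕ → ℝ → ℕ := fun n t => ⌊t / h n⌋₊
  have hile : ∀ n, ∀ t ∈ Icc (0:ℝ) T, i n t ≤ m n := by
    intro n t ht
    apply Nat.floor_le_of_le
    rw [div_le_iff₀ (hh n), hmh]; exact ht.2
  have hi1 : ∀ n t, 0 ≤ t → i n t * h n ≤ t := by
    intro n t ht
    have := Nat.floor_le (div_nonneg ht (hh n).le)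
    rwa [le_div_iff₀ (hh n)] at this
  have hi2 : ∀ n t, t ≤ i n t * h n + h n := by
    intro n t
    have := (Nat.lt_floor_add_one (t / h n)).le
    rw [div_le_iff₀ (hh n)] at this
    linarith
  have himono : ∀ n s t, s ≤ t → i n s ≤ i n t := by
    intro n s t hst
    exact Nat.floor_le_floor (div_le_div_of_nonneg_right hst (hh n).le)
  let yn : ℕ → ℝ → EE N := fun n t => Y n (i n t)
  have hynK : ∀ n, ∀ t ∈ Icc (0:ℝ) T, yn n t ∈ K := fun n t ht => hYK n _ (hile n t ht)
  let 𝒰 : Ultrafilter ℕ := hyperfilter ℕ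
  have h𝒰 : (𝒰 : Filter ℕ) ≤ atTop := Nat.hyperfilter_le_atTop
  have hex : ∀ t : ℝ, ∃ y : EE N, t ∈ Icc (0:ℝ) T →
      y ∈ K ∧ Tendsto (fun n => yn n t) 𝒰 (nhds y) := by
    intro t
    by_cases ht : t ∈ Icc (0:ℝ) T
    · have hle : ((𝒰.map fun n => yn n t : Ultrafilter (EE N)) : Filter (EE N)) ≤ 𝓟 K := by
        rw [le_principal_iff]
        exact Filter.Eventually.of_forall (f := (𝒰 : Filter ℕ)) fun n => hynK n t ht
      obtain ⟨y, hy, hle⟩ := hKc.ultrafilter_le_nhds _ hle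
      exact ⟨y, fun _ => ⟨hy, hle⟩⟩
    · exact ⟨0, fun h => absurd h ht⟩
  choose y hy using hex
  have hTT : T ∈ Icc (0:ℝ) T := ⟨hT.le, le_rfl⟩
  have h00 : (0:ℝ) ∈ Icc (0:ℝ) T := ⟨le_rfl, hT.le⟩
  have hKK : IsCompact (Icc (0:ℝ) T ×ˢ K) := isCompact_Icc.prod hKc
  obtain ⟨M, hM⟩ := hKK.exists_bound_of_continuousOn hf.continuousOn
  have huc := hKK.uniformContinuousOn_of_continuous hf.continuousOn
  have hkT : ∀ n, ∀ k : ℕ, k ≤ m n → (k : ℝ) * h n ∈ Icc (0:ℝ) T := by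
    intro n k hk
    have : (k:ℝ) ≤ m n := by exact_mod_cast hk
    have h1 := hmh n
    have h2 := hh n
    exact ⟨by positivity, by nlinarith⟩
  -- Lipschitz estimate for the discrete solutions
  have hLip : ∀ n a b, a ≤ b → b ≤ m n →
      ‖Y n b - Y n a‖ ≤ (|M| + 1) * (((b:ℝ) - a) * h n) := by
    intro n a b hab hb
    have h1 := pe_disc (hYst n) (hh n).le 0 a b hab hb (η := |M|) (fun k hk1 hk2 => by
      rw [sub_zero]
      exact (hM _ ⟨hkT n k (by omega), hYK n k (by omega)⟩).trans (le_abs_self M))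
    rw [smul_zero, sub_zero] at h1
    refine h1.trans ?_
    have h2 : (0:ℝ) ≤ ((b:ℝ) - a) * (T / m n) := by
      have : (a:ℝ) ≤ b := by exact_mod_cast hab
      exact mul_nonneg (by linarith) (hh n).le
    exact mul_le_mul_of_nonneg_right (by linarith [hε1 n]) h2
  have hLip' : ∀ n a b, a ≤ m n → b ≤ m n →
      ‖Y n b - Y n a‖ ≤ (|M| + 1) * |(b:ℝ) * h n - a * h n| := by
    intro n a b ha hb
    rcases le_total a b with hab | hab
    · have hab' : (a:ℝ) * h n ≤ b * h n :=
        mul_le_mul_of_nonneg_right (by exact_mod_cast hab) (hh n).le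
      rw [abs_of_nonneg (show 0 ≤ (b:ℝ) * h n - a * h n by linarith), ← sub_mul]
      exact hLip n a b hab hb
    · have hab' : (b:ℝ) * h n ≤ a * h n :=
        mul_le_mul_of_nonneg_right (by exact_mod_cast hab) (hh n).le
      rw [abs_of_nonpos (show (b:ℝ) * h n - a * h n ≤ 0 by linarith), neg_sub, ← sub_mul, norm_sub_rev]
      exact hLip n b a hab ha
  -- main estimate
  have main : ∀ η : ℝ, 0 < η → ∃ δ > 0, ∀ s t τ : ℝ, 0 ≤ s → s ≤ τ → τ ≤ t → t ≤ T → t - s < δ →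
      ‖y t - y s - (t - s) • f (τ, y τ)‖ ≤ η * (t - s) := by
    intro η hη
    obtain ⟨ρ, hρ, huc⟩ := Metric.uniformContinuousOn_iff_le.1 huc η hη
    set L := |M| + 1 with hL
    have hLpos : 0 < L := by positivity
    refine ⟨ρ / (2 * (L + 1)), by positivity, fun s t τ hs hsτ hτt htT hst => ?_⟩
    have hsI : s ∈ Icc (0:ℝ) T := ⟨hs, by linarith⟩
    have htI : t ∈ Icc (0:ℝ) T := ⟨by linarith, htT⟩
    have hτI : τ ∈ Icc (0:ℝ) T := ⟨by linarith, by linarith⟩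
    have hev : ∀ᶠ n in atTop, h n < ρ / (2 * (L + 1)) := hhlim.eventually (gt_mem_nhds (by positivity))
    have hest : ∀ᶠ n in atTop, ‖yn n t - yn n s - ((((i n t : ℕ):ℝ) - (i n s : ℕ)) * h n) • f (τ, yn n τ)‖
        ≤ (η + ε n) * ((((i n t : ℕ):ℝ) - (i n s : ℕ)) * h n) := by
      filter_upwards [hev] with n hn
      refine pe_disc (hYst n) (hh n).le _ _ _ (himono n s t (by linarith)) (hile n t htI) ?_
      intro k hk1 hk2
      have hkm : k ≤ m n := hk2.le.trans (hile n t htI)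
      rw [← dist_eq_norm]
      refine huc _ ⟨hkT n k hkm, hYK n k hkm⟩ _ ⟨hτI, hynK n τ hτI⟩ ?_
      have hδ : t - s + h n ≤ ρ / (L + 1) := by
        have : ρ / (2 * (L + 1)) + ρ / (2 * (L + 1)) = ρ / (L + 1) := by field_simp; ring
        linarith
      have hδ2 : (L + 1) * (t - s + h n) ≤ ρ := by
        rw [le_div_iff₀ (by positivity)] at hδ; linarith
      have hpos : 0 ≤ t - s + h n := by linarith [hh n]
      have a1 : (i n s : ℝ) * h n ≤ k * h n :=
        mul_le_mul_of_nonneg_right (by exact_mod_cast hk1) (hh n).le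
      have a2 : (k : ℝ) * h n ≤ i n t * h n :=
        mul_le_mul_of_nonneg_right (by exact_mod_cast hk2.le) (hh n).le
      have a3 := hi1 n t htI.1
      have a4 := hi2 n s
      have a5 := hi1 n τ hτI.1
      have a6 := hi2 n τ
      have a7 : (k : ℝ) * h n + h n ≤ i n t * h n := by
        have : ((k+1 : ℕ) : ℝ) ≤ i n t := by exact_mod_cast hk2
        push_cast at this
        have := mul_le_mul_of_nonneg_right this (hh n).le
        linarith
      have a8 : (i n s : ℝ) * h n ≤ i n τ * h n :=
        mul_le_mul_of_nonneg_right (by exact_mod_cast himono n s τ hsτ) (hh n).le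
      rw [Prod.dist_eq, max_le_iff]
      constructor
      · rw [Real.dist_eq]
        have : |(k:ℝ) * h n - τ| ≤ t - s + h n := by
          rw [abs_le]; constructor <;> linarith
        change |(k:ℝ) * h n - τ| ≤ ρ
        nlinarith
      · rw [dist_eq_norm]
        refine (hLip' n (i n τ) k (hile n τ hτI) hkm).trans ?_
        have : |(k:ℝ) * h n - i n τ * h n| ≤ t - s + h n := by
          rw [abs_le]; constructor <;> linarith
        nlinarith
    have hlen : Tendsto (fun n => (((i n t : ℕ):ℝ) - (i n s : ℕ)) * h n) atTop (nhds (t - s)) := by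
      have hone : ∀ r : ℝ, 0 ≤ r → Tendsto (fun n => ((i n r : ℕ):ℝ) * h n) atTop (nhds r) := by
        intro r hr
        refine tendsto_of_tendsto_of_tendsto_of_le_of_le (g := fun n => r - h n) (h := fun _ => r)
          ?_ tendsto_const_nhds (fun n => ?_) (fun n => hi1 n r hr)
        · simpa using tendsto_const_nhds.sub hhlim
        · have := hi2 n r
          change r - h n ≤ _
          linarith
      simpa [sub_mul] using (hone t htI.1).sub (hone s hs)
    have hyt := (hy t htI).2
    have hys := (hy s hsI).2
    have hyτ := (hy τ hτI).2
    have hfτ : Tendsto (fun n => f (τ, yn n τ)) 𝒰 (nhds (f (τ, y τ))) :=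
      ((hf.comp (by fun_prop : Continuous fun x : EE N => (τ, x))).tendsto (y τ)).comp hyτ
    have hL1 := ((hyt.sub hys).sub ((hlen.mono_left h𝒰).smul hfτ)).norm
    have hL2 := ((tendsto_const_nhds (x := η)).add (hεlim.mono_left h𝒰)).mul (hlen.mono_left h𝒰)
    rw [add_zero] at hL2
    exact le_of_tendsto_of_tendsto hL1 hL2 (h𝒰 hest)
  refine ⟨y, fun t ht => (hy t ht).1, ?_, ?_⟩
  · refine tendsto_nhds_unique (hy 0 h00).2 ?_
    refine (hy T hTT).2.congr fun n => ?_
    have e1 : i n T = m n := by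
      have : T / h n = m n := by rw [div_eq_iff (hh n).ne', hmh]
      simp only [i, this, Nat.floor_natCast]
    have e2 : i n 0 = 0 := by simp [i]
    simp only [yn, e1, e2, hYper]
  · intro t ht
    rw [hasDerivWithinAt_iff_isLittleO, Asymptotics.isLittleO_iff]
    intro η hη
    obtain ⟨δ, hδ, hmain⟩ := main η hη
    filter_upwards [self_mem_nhdsWithin, nhdsWithin_le_nhds (ball_mem_nhds t hδ)] with s hs hst
    rw [mem_ball, Real.dist_eq, abs_lt] at hst
    rcases le_total t s with h1 | h1
    · rw [Real.norm_of_nonneg (by linarith : 0 ≤ s - t)]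
      exact hmain t s t ht.1 le_rfl h1 hs.2 hst.2
    · have := hmain s t t hs.1 h1 le_rfl ht.2 (by linarith)
      rw [Real.norm_of_nonpos (by linarith : s - t ≤ 0), neg_sub]
      have e : y s - y t - (s - t) • f (t, y t) = -(y t - y s - (t - s) • f (t, y t)) := by
        module
      rw [e, norm_neg]
      exact this

/-- main theorem. Let `(V_u)` be a family of non-degenerate bounding
functions for `G` with `⟪f(t,u), ∇V_u(u)⟫ ≤ 0` on the boundary, and suppose there is a
continuous `g : ∂G → ℝ^N` with `sup_{u ∈ ∂G} ⟪g(u), ∇V_u(u)⟫ < 0`. If `cl G` is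
homeomorphic to a closed ball, then `ẏ = f(t,y)` has a `T`-periodic solution in `cl G`. -/
theorem periodic_solution_of_nondegenerate_bounding_functions
    {N : ℕ} {T : ℝ} (hT : 0 < T)
    (Ω : Set (EuclideanSpace ℝ (Fin N))) (hΩ : IsOpen Ω)
    (f : ℝ → EuclideanSpace ℝ (Fin N) → EuclideanSpace ℝ (Fin N))
    (hf : ContinuousOn (fun p : ℝ × EuclideanSpace ℝ (Fin N) => f p.1 p.2)
      (Icc (0 : ℝ) T ×ˢ Ω))
    (G : Set (EuclideanSpace ℝ (Fin N)))
    (hG : IsOpen G) (hGb : Bornology.IsBounded G) (hGΩ : closure G ⊆ Ω)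
    (r : EuclideanSpace ℝ (Fin N) → ℝ)
    (V : EuclideanSpace ℝ (Fin N) → EuclideanSpace ℝ (Fin N) → ℝ)
    (hbd : ∀ u ∈ frontier G, 0 < r u ∧ ContDiffOn ℝ 1 (V u) (ball u (r u)) ∧
      V u u = 0 ∧ ∀ x ∈ G ∩ ball u (r u), V u x < 0)
    (hnondeg : ∃ ηm ηp : ℝ, 0 < ηm ∧ ηm ≤ ηp ∧ ∀ u ∈ frontier G,
      ηm ≤ ‖gradient (V u) u‖ ∧ ‖gradient (V u) u‖ ≤ ηp)
    (hsub : ∀ u ∈ frontier G, ∀ t ∈ Icc (0 : ℝ) T,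
      ⟪f t u, gradient (V u) u⟫ ≤ 0)
    (g : EuclideanSpace ℝ (Fin N) → EuclideanSpace ℝ (Fin N))
    (hg : ContinuousOn g (frontier G))
    (hgneg : ∃ c : ℝ, c < 0 ∧ ∀ u ∈ frontier G, ⟪g u, gradient (V u) u⟫ ≤ c)
    (hball : ∃ (x₀ : EuclideanSpace ℝ (Fin N)) (R : ℝ), 0 < R ∧
      Nonempty ((closure G : Set (EuclideanSpace ℝ (Fin N))) ≃ₜ
        (closedBall x₀ R : Set (EuclideanSpace ℝ (Fin N))))) :
    ∃ y : ℝ → EuclideanSpace ℝ (Fin N),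
      (∀ t ∈ Icc (0 : ℝ) T, y t ∈ Ω) ∧
      (∀ t ∈ Icc (0 : ℝ) T, HasDerivWithinAt y (f t (y t)) (Icc (0 : ℝ) T) t) ∧
      y 0 = y T ∧
      (∀ t ∈ Icc (0 : ℝ) T, y t ∈ closure G) := by
  classical
  obtain ⟨ηm, ηp, hηm, hηmp, hη⟩ := hnondeg
  obtain ⟨c, hc, hgc⟩ := hgneg
  obtain ⟨x₀, R, hR, ⟨e⟩⟩ := hball
  have hηp : 0 < ηp := hηm.trans_le hηmp
  have hcpt : IsCompact (closure G) := hGb.isCompact_closure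
  have hK : IsCompact (Icc (0:ℝ) T ×ˢ closure G) := isCompact_Icc.prod hcpt
  have hfK : ContinuousOn (fun p : ℝ × EE N => f p.1 p.2) (Icc (0:ℝ) T ×ˢ closure G) :=
    hf.mono (prod_mono le_rfl hGΩ)
  obtain ⟨f', hf'⟩ := ContinuousMap.exists_restrict_eq (Y := EE N) hK.isClosed
    ⟨_, hfK.domRestrict⟩
  obtain ⟨g', hg'⟩ := ContinuousMap.exists_restrict_eq (Y := EE N) (isClosed_frontier (s := G))
    ⟨_, hg.domRestrict⟩
  have hfe : ∀ t ∈ Icc (0:ℝ) T, ∀ x ∈ closure G, f' (t, x) = f t x := by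
    intro t ht x hx
    exact congrArg (fun F => F ⟨(t, x), ⟨ht, hx⟩⟩) hf'
  have hge : ∀ x ∈ frontier G, g' x = g x := by
    intro x hx
    exact congrArg (fun F => F ⟨x, hx⟩) hg'
  have hA : ∀ ε : ℝ, 0 < ε → ∃ κ > 0, ∀ t ∈ Icc (0:ℝ) T, ∀ z p, p ∈ frontier G → z ≠ p →
      ball z (dist z p) ⊆ G → κ * ‖z - p‖ ≤ ⟪f' (t, p) + ε • g' p, z - p⟫ := by
    intro ε hε
    have hcε : 0 < ε * (-c) := mul_pos hε (by linarith)
    refine ⟨ε * (-c) / (2 * ηp), by positivity, fun t ht z p hp hzp hb => ?_⟩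
    obtain ⟨hr, hVc, hV0, hVneg⟩ := hbd p hp
    refine pe_normal hr ((hVc.differentiableOn one_ne_zero).differentiableAt
      (isOpen_ball.mem_nhds (mem_ball_self hr))) rfl hV0 hVneg hzp hb hcε hηp (hη p hp).2 ?_
    rw [hfe t ht p (frontier_subset_closure hp), hge p hp, inner_add_left, inner_smul_left]
    simp only [conj_trivial]
    have h1 := hsub p hp t ht
    have h2 := mul_le_mul_of_nonneg_left (hgc p hp) hε.le
    linarith
  obtain ⟨y, hyK, hyper, hyd⟩ := pe_limit hT hcpt f' f'.continuous
    (pe_euler hT hG hGb f' f'.continuous g' g'.continuous hA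
      (fun Φ hΦ hΦm => bw_main (closure G) x₀ R hR e Φ hΦ hΦm))
  refine ⟨y, fun t ht => hGΩ (hyK t ht), fun t ht => ?_, hyper, hyK⟩
  rw [← hfe t ht _ (hyK t ht)]
  exact hyd t ht
end

section
/- Let Ω ⊆ ℝ^N be open, f : [0,T] × Ω → ℝ^N continuous. Let V : Ω → ℝ be a C¹ function and c ∈ ℝ be such that the sub-level set M = {x ∈ Ω : V(x) ≤ c} is compact with nonempty interior. Assume ∇V(u) ≠ 0 for all u ∈ ∂M and ⟨f(t,u), ∇V(u)⟩ ≤ 0 for all u ∈ ∂M and t ∈ [0,T]. If M is homeomorphic to a closed ball of ℝ^N, then there exists a differentiable y : [0,T] → Ω with y'(t) = f(t, y(t)) for all t ∈ [0,T], y(0) = y(T), and y(t) ∈ M for all t ∈ [0,T]. -/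
open Set Metric
open scoped RealInnerProductSpace


section Brouwer
open MeasureTheory

lemma br_det_interp {N : ℕ} (s : Finset ℝ) (hs : s.card = N + 1)
    (L : EuclideanSpace ℝ (Fin N) →L[ℝ] EuclideanSpace ℝ (Fin N)) (u : ℝ) :
    (ContinuousLinearMap.id ℝ _ + u • L).det =
      ∑ t ∈ s, (Lagrange.basis s id t).eval u * (ContinuousLinearMap.id ℝ _ + t • L).det := by
  classical
  let b := (EuclideanSpace.basisFun (Fin N) ℝ).toBasis
  set A : Matrix (Fin N) (Fin N) ℝ := LinearMap.toMatrix b b (L : _ →ₗ[ℝ] _) with hA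
  let p : Polynomial ℝ := Matrix.det ((Polynomial.X : Polynomial ℝ) • A.map Polynomial.C + (1 : Matrix (Fin N) (Fin N) ℝ).map Polynomial.C)
  have hp : ∀ t : ℝ, p.eval t = (ContinuousLinearMap.id ℝ _ + t • L).det := by
    intro t
    have h1 : (ContinuousLinearMap.id ℝ (EuclideanSpace ℝ (Fin N)) + t • L).det =
      Matrix.det (1 + t • A) := by
      rw [ContinuousLinearMap.det, ← LinearMap.det_toMatrix b]
      congr 1
      simp [hA]
    rw [h1]
    simp only [p]
    rw [← Polynomial.coe_evalRingHom, RingHom.map_det]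
    congr 1
    ext i j
    simp [Matrix.one_apply]
    split_ifs <;> simp [add_comm, mul_comm]
  have hdeg : p.degree < s.card := by
    rw [hs]
    refine lt_of_le_of_lt Polynomial.degree_le_natDegree ?_
    have := Polynomial.natDegree_det_X_add_C_le A (1 : Matrix (Fin N) (Fin N) ℝ)
    rw [Fintype.card_fin] at this
    exact_mod_cast Nat.lt_succ_of_le this
  have := Lagrange.eq_interpolate (s := s) (v := (id : ℝ → ℝ)) (f := p) Function.injective_id.injOn hdeg
  rw [← hp, this, Lagrange.interpolate_apply, Polynomial.eval_finsetSum]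
  refine Finset.sum_congr rfl fun t ht => ?_
  rw [Polynomial.eval_mul, Polynomial.eval_C, ← hp]
  simp [mul_comm]

lemma br_lip_ext {E : Type*} [NormedAddCommGroup E] [NormedSpace ℝ E] (R : ℝ)
    (g : E → E) (K : NNReal)
    (hg : LipschitzOnWith K g (closedBall 0 R)) (h0 : ∀ x, ‖x‖ = R → g x = 0) :
    LipschitzWith K ((closedBall (0 : E) R).indicator g) := by
  classical
  have key : ∀ x y : E, ‖x‖ ≤ R → R < ‖y‖ → ‖g x‖ ≤ K * ‖x - y‖ := by
    intro x y hx hy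
    have hc : ContinuousOn (fun s : ℝ => ‖x + s • (y - x)‖) (Icc 0 1) := by fun_prop
    obtain ⟨s, hs, hsz⟩ := intermediate_value_Icc zero_le_one hc
      (show R ∈ Icc _ _ by simpa using ⟨hx, hy.le⟩)
    have h1 := hg.norm_sub_le (show x ∈ closedBall 0 R by simpa using hx)
      (show x + s • (y - x) ∈ closedBall 0 R by simpa using hsz.le)
    rw [h0 _ hsz, sub_zero] at h1
    refine h1.trans ?_
    gcongr
    have : x - (x + s • (y - x)) = s • (x - y) := by rw [smul_sub, smul_sub]; abel
    rw [this, norm_smul, Real.norm_of_nonneg hs.1]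
    exact mul_le_of_le_one_left (norm_nonneg _) hs.2
  refine LipschitzWith.of_dist_le_mul fun x y => ?_
  rw [dist_eq_norm, dist_eq_norm]
  by_cases hx : x ∈ closedBall (0 : E) R <;> by_cases hy : y ∈ closedBall (0 : E) R
  · rw [indicator_of_mem hx, indicator_of_mem hy]; exact hg.norm_sub_le hx hy
  · rw [indicator_of_mem hx, indicator_of_notMem hy, sub_zero]
    exact key x y (by simpa using hx) (by simpa using hy)
  · rw [indicator_of_notMem hx, indicator_of_mem hy, zero_sub, norm_neg, norm_sub_rev]
    exact key y x (by simpa using hy) (by simpa using hx)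
  · rw [indicator_of_notMem hx, indicator_of_notMem hy]; simp; positivity

lemma br_small {E : Type*} [NormedAddCommGroup E] [NormedSpace ℝ E] [FiniteDimensional ℝ E]
    [MeasurableSpace E] [BorelSpace E] (μ : Measure E) [μ.IsAddHaarMeasure] {R : ℝ}
    (r : E → E) (hr : ContDiff ℝ 1 r)
    (hrn : ∀ x, ‖r x‖ ≤ R) (hrs : ∀ x, ‖x‖ = R → r x = x) :
    ∃ ε > 0, ∀ t : ℝ, 0 < t → t < ε →
      ∫ x in closedBall (0 : E) R,
        (ContinuousLinearMap.id ℝ E + t • (fderiv ℝ r x - ContinuousLinearMap.id ℝ E)).det ∂μ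
       = (μ (closedBall (0 : E) R)).toReal := by
  have : CompleteSpace E := FiniteDimensional.complete ℝ E
  have : ProperSpace E := FiniteDimensional.proper ℝ E
  set I := ContinuousLinearMap.id ℝ E
  set B := closedBall (0 : E) R
  let g : E → E := fun x => r x - x
  have hg : ContDiff ℝ 1 g := hr.sub contDiff_id
  have hgd : ∀ x, HasFDerivAt g (fderiv ℝ r x - I) x := fun x =>
    ((hr.differentiable one_ne_zero x).hasFDerivAt).sub (hasFDerivAt_id x)
  have hcont : Continuous (fun x => fderiv ℝ r x - I) :=
    (hr.continuous_fderiv one_ne_zero).sub continuous_const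
  have hBc : IsCompact B := isCompact_closedBall _ _
  obtain ⟨C, hC⟩ := hBc.exists_bound_of_continuousOn hcont.continuousOn
  let K : NNReal := ⟨max C 0 , le_max_right _ _⟩
  have hK : ∀ x ∈ B, ‖fderiv ℝ r x - I‖ ≤ K := fun x hx => (hC x hx).trans (le_max_left _ _)
  have hLip : LipschitzOnWith K g B :=
    (convex_closedBall _ _).lipschitzOnWith_of_nnnorm_hasFDerivWithin_le
      (fun x _ => (hgd x).hasFDerivWithinAt) (fun x hx => hK x hx)
  have hLip' := br_lip_ext R g K hLip (fun x hx => by simp [g, hrs x hx])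
  -- det positive near the identity
  have hdet : ∀ᶠ L : E →L[ℝ] E in nhds I, 0 < L.det := by
    have := (ContinuousLinearMap.continuous_det (𝕜 := ℝ) (E := E)).tendsto I
    have h1 : I.det = 1 := by simp [I, ContinuousLinearMap.det]
    rw [h1] at this
    exact this.eventually (lt_mem_nhds one_pos)
  obtain ⟨δ, hδ, hδ'⟩ := Metric.eventually_nhds_iff.1 hdet
  refine ⟨min 1 (min 1 δ / (K + 1)), by positivity, fun t ht0 ht => ?_⟩
  have ht1 : t < 1 := ht.trans_le (min_le_left _ _)
  have ht2 : t * (K + 1) < min 1 δ := by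
    rw [← lt_div_iff₀ (by positivity)]; exact ht.trans_le (min_le_right _ _)
  have htK1 : t * K < 1 := by nlinarith [min_le_left 1 δ]
  have htKδ : t * K < δ := by nlinarith [min_le_right 1 δ]
  have hpos : ∀ x ∈ B, 0 < (I + t • (fderiv ℝ r x - I)).det := by
    intro x hx
    apply hδ'
    rw [dist_eq_norm, add_sub_cancel_left, norm_smul, Real.norm_of_nonneg ht0.le]
    exact lt_of_le_of_lt (by gcongr; exact hK x hx) htKδ
  let F : E → E := fun x => x + t • g x
  have hFd : ∀ x ∈ B, HasFDerivWithinAt F (I + t • (fderiv ℝ r x - I)) B x := fun x _ =>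
    ((hasFDerivAt_id x).add ((hgd x).const_smul t)).hasFDerivWithinAt
  have hinj : InjOn F B := by
    intro x hx y hy hxy
    have h1 := hLip.norm_sub_le hx hy
    have h2 : x - y = - (t • (g x - g y)) := by
      have : x + t • g x = y + t • g y := hxy
      rw [smul_sub]
      have h3 : x = y + t • g y - t • g x := by rw [← this]; abel
      nth_rewrite 1 [h3]; abel
    have h3 : ‖x - y‖ ≤ t * K * ‖x - y‖ := by
      nth_rewrite 1 [h2]
      rw [norm_neg, norm_smul, Real.norm_of_nonneg ht0.le, mul_assoc]
      gcongr
    have h4 : ‖x - y‖ = 0 := by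
      by_contra hne
      have : 0 < ‖x - y‖ := lt_of_le_of_ne (norm_nonneg _) (Ne.symm hne)
      nlinarith
    exact sub_eq_zero.1 (norm_eq_zero.1 h4)
  have himg : F '' B = B := by
    apply Subset.antisymm
    · rintro _ ⟨x, hx, rfl⟩
      have hx' : ‖x‖ ≤ R := by simpa [B] using hx
      have : F x = (1 - t) • x + t • r x := by
        simp only [F, g, smul_sub, sub_smul, one_smul]; abel
      show F x ∈ closedBall 0 R
      rw [mem_closedBall_zero_iff, this]
      calc _ ≤ ‖(1 - t) • x‖ + ‖t • r x‖ := norm_add_le _ _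
        _ = (1 - t) * ‖x‖ + t * ‖r x‖ := by
          rw [norm_smul, norm_smul, Real.norm_of_nonneg ht0.le, Real.norm_of_nonneg (by linarith)]
        _ ≤ (1 - t) * R + t * R := by
          have := hrn x
          have : 0 ≤ 1 - t := by linarith
          gcongr
        _ = R := by ring
    · intro y hy
      let G : E → E := fun x => y - t • B.indicator g x
      have hG : ContractingWith (t.toNNReal * K) G := by
        refine ⟨?_, ?_⟩
        · rw [← NNReal.coe_lt_coe]; push_cast; rwa [Real.coe_toNNReal _ ht0.le]
        · refine LipschitzWith.of_dist_le_mul fun a b => ?_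
          have := hLip'.dist_le_mul a b
          simp only [G, dist_sub_left]
          rw [dist_smul₀, Real.norm_of_nonneg ht0.le]
          push_cast
          rw [Real.coe_toNNReal _ ht0.le, mul_assoc]
          exact mul_le_mul_of_nonneg_left this ht0.le
      have hfix : G (hG.fixedPoint G) = hG.fixedPoint G := hG.fixedPoint_isFixedPt
      set x := hG.fixedPoint G
      by_cases hx : x ∈ B
      · refine ⟨x, hx, ?_⟩
        simp only [G, indicator_of_mem hx] at hfix
        simp only [F]
        nth_rewrite 1 [← hfix]; abel
      · simp only [G, indicator_of_notMem hx, smul_zero, sub_zero] at hfix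
        exact absurd (hfix ▸ hy) hx
  have hmain := lintegral_abs_det_fderiv_eq_addHaar_image μ (measurableSet_closedBall) hFd hinj
  rw [himg] at hmain
  rw [← hmain, integral_eq_lintegral_of_nonneg_ae]
  · congr 1
    refine setLIntegral_congr_fun measurableSet_closedBall fun x hx => ?_
    rw [abs_of_pos (hpos x hx)]
  · exact (ae_restrict_iff' measurableSet_closedBall).2 (Filter.Eventually.of_forall fun x hx => (hpos x hx).le)
  · exact (ContinuousLinearMap.continuous_det.comp (continuous_const.add (hcont.const_smul t))).aestronglyMeasurable

lemma br_no_retract {N : ℕ} {R : ℝ} (hR : 0 < R)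
    (r : EuclideanSpace ℝ (Fin N) → EuclideanSpace ℝ (Fin N)) (hr : ContDiff ℝ 1 r)
    (hrn : ∀ x, ‖r x‖ = R) (hrs : ∀ x, ‖x‖ = R → r x = x) : False := by
  classical
  obtain ⟨ε, hε, h⟩ := br_small volume r hr (fun x => (hrn x).le) hrs
  obtain ⟨s, hs, hcard⟩ := (Set.Ioo_infinite hε).exists_subset_card_eq (N + 1)
  have hcont : ∀ t : ℝ, Continuous (fun x => (ContinuousLinearMap.id ℝ _ + t • (fderiv ℝ r x - ContinuousLinearMap.id ℝ _)).det) := fun t =>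
    (ContinuousLinearMap.continuous_det.comp (continuous_const.add
     (((hr.continuous_fderiv one_ne_zero).sub continuous_const).const_smul t)))
  set v := (volume (closedBall (0 : EuclideanSpace ℝ (Fin N)) R)).toReal with hv
  have hvpos : 0 < v := ENNReal.toReal_pos (measure_closedBall_pos _ _ hR).ne'
    (isCompact_closedBall _ _).measure_lt_top.ne
  have h1 : ∫ x in closedBall (0 : EuclideanSpace ℝ (Fin N)) R,
        (ContinuousLinearMap.id ℝ _ + (1:ℝ) • (fderiv ℝ r x - ContinuousLinearMap.id ℝ _)).det = v := by
    simp_rw [br_det_interp s hcard _ 1]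
    rw [integral_finsetSum]
    · have : ∀ t ∈ s, ∫ x in closedBall (0 : EuclideanSpace ℝ (Fin N)) R,
        (Lagrange.basis s id t).eval 1 * (ContinuousLinearMap.id ℝ _ + t • (fderiv ℝ r x - ContinuousLinearMap.id ℝ _)).det = (Lagrange.basis s id t).eval 1 * v := by
        intro t ht
        rw [integral_const_mul, h t (hs ht).1 (hs ht).2]
      rw [Finset.sum_congr rfl this, ← Finset.sum_mul, ← Polynomial.eval_finsetSum, Lagrange.sum_basis Function.injective_id.injOn (Finset.card_pos.1 (by omega))]
      simp
    · intro t ht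
      exact (((hcont t).const_mul _).continuousOn.integrableOn_compact (isCompact_closedBall _ _))
  have h2 : ∀ x, (ContinuousLinearMap.id ℝ _ + (1:ℝ) • (fderiv ℝ r x - ContinuousLinearMap.id ℝ _)).det = 0 := by
    intro x
    rw [one_smul, add_sub_cancel]
    by_contra hne
    have hsurj : Function.Surjective (fderiv ℝ r x) := by
      have := (LinearMap.equivOfDetNeZero _ hne).surjective
      exact this
    obtain ⟨w, hw⟩ := hsurj (r x)
    have hd := (hr.differentiable one_ne_zero x).hasFDerivAt
    have hd2 := hd.inner ℝ hd
    have hd3 : HasFDerivAt (fun y => ⟪r y, r y⟫) (0 : EuclideanSpace ℝ (Fin N) →L[ℝ] ℝ) x := by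
      have : (fun y => ⟪r y, r y⟫) = fun _ => R ^ 2 := by
        ext y; rw [real_inner_self_eq_norm_sq, hrn]
      rw [this]; exact hasFDerivAt_const _ _
    have := congrArg (fun L => L w) (hd2.unique hd3)
    simp [hw] at this
    have h3 := hrn x
    rw [this, norm_zero] at h3
    exact hR.ne h3
  simp_rw [h2] at h1
  simp at h1
  exact hvpos.ne h1

lemma br_fixed_smooth {N : ℕ} {R : ℝ} (hR : 0 < R)
    (ψ : EuclideanSpace ℝ (Fin N) → EuclideanSpace ℝ (Fin N)) (hψ : ContDiff ℝ 1 ψ)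
    (h0 : ∀ x, ‖x‖ = R → ψ x = 0) : ∃ x, ψ x = x := by
  by_contra! hne
  have hF : ∀ x, x - ψ x ≠ 0 := fun x h => hne x (sub_eq_zero.1 h).symm
  have hFc : ContDiff ℝ 1 (fun x => x - ψ x) := contDiff_id.sub hψ
  refine br_no_retract hR (fun x => (R * ‖x - ψ x‖⁻¹) • (x - ψ x)) ?_ ?_ ?_
  · exact (contDiff_const.mul ((hFc.norm ℝ hF).inv (fun x => norm_ne_zero_iff.2 (hF x)))).smul hFc
  · intro x
    have := norm_pos_iff.2 (hF x)
    rw [norm_smul, Real.norm_of_nonneg (by positivity)]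
    field_simp
  · intro x hx
    simp only [h0 x hx, sub_zero, hx]
    rw [mul_inv_cancel₀ hR.ne', one_smul]

lemma br_fixed_cont {N : ℕ} {R : ℝ} (hR : 0 < R)
    (φ : EuclideanSpace ℝ (Fin N) → EuclideanSpace ℝ (Fin N)) (hφ : Continuous φ)
    (h0 : ∀ x, R ≤ ‖x‖ → φ x = 0) : ∃ x, φ x = x := by
  by_contra! hne
  obtain ⟨z, hz, hmin⟩ := (isCompact_closedBall (0 : EuclideanSpace ℝ (Fin N)) R).exists_isMinOn
    ⟨0, by simpa using hR.le⟩ (f := fun x => ‖φ x - x‖) (by fun_prop)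
  have hpos : 0 < ‖φ z - z‖ := norm_pos_iff.2 (sub_ne_zero.2 (hne z))
  obtain ⟨ψ, hψ, hd, hsupp⟩ := hφ.exists_contDiff_approx 1 (ε := fun _ => ‖φ z - z‖)
    continuous_const (fun _ => hpos)
  have hψ0 : ∀ x, R ≤ ‖x‖ → ψ x = 0 := by
    intro x hx
    by_contra h
    exact hsupp h (h0 x hx)
  obtain ⟨x, hx⟩ := br_fixed_smooth hR ψ (by exact_mod_cast hψ) (fun x hx => hψ0 x hx.ge)
  by_cases hxR : R ≤ ‖x‖
  · have := hψ0 x hxR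
    rw [hx] at this
    rw [this, norm_zero] at hxR; linarith
  · have h1 := hd x
    rw [hx, dist_comm, dist_eq_norm] at h1
    have h2 : ‖φ z - z‖ ≤ ‖φ x - x‖ := hmin (by simpa using (not_le.1 hxR).le)
    linarith

lemma br_unit {N : ℕ}
    (φ : C(closedBall (0 : EuclideanSpace ℝ (Fin N)) 1, closedBall (0 : EuclideanSpace ℝ (Fin N)) 1)) :
    ∃ x, φ x = x := by
  have := Set.instTietzeExtensionUnitClosedBall (𝕜 := ℝ) (E := EuclideanSpace ℝ (Fin N))
  obtain ⟨g, hg⟩ := ContinuousMap.exists_restrict_eq (isClosed_closedBall) φ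
  obtain ⟨x, hx⟩ := br_fixed_cont (N := N) (R := 2) two_pos
    (fun x => (min 1 (max 0 (2 - ‖x‖))) • (g x : EuclideanSpace ℝ (Fin N))) (by fun_prop)
    (fun x hx => by
      rw [max_eq_left (by linarith)]; simp)
  have hgx : ‖(g x : EuclideanSpace ℝ (Fin N))‖ ≤ 1 := mem_closedBall_zero_iff.1 (g x).2
  have hx1 : ‖x‖ ≤ 1 := by
    rw [← hx, norm_smul, Real.norm_of_nonneg (by positivity)]
    exact mul_le_one₀ (min_le_left _ _) (norm_nonneg _) hgx
  have hm : min 1 (max 0 (2 - ‖x‖)) = 1 := min_eq_left (le_max_of_le_right (by linarith))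
  simp only [hm, one_smul] at hx
  refine ⟨⟨x, by simpa using hx1⟩, ?_⟩
  rw [← hg]
  ext1
  exact hx

lemma br_set {N : ℕ} (M : Set (EuclideanSpace ℝ (Fin N)))
    (hball : ∃ (x₀ : EuclideanSpace ℝ (Fin N)) (R : ℝ), 0 < R ∧
      Nonempty ((M : Set (EuclideanSpace ℝ (Fin N))) ≃ₜ
        (closedBall x₀ R : Set (EuclideanSpace ℝ (Fin N)))))
    (P : EuclideanSpace ℝ (Fin N) → EuclideanSpace ℝ (Fin N)) (hP : ContinuousOn P M)
    (hPM : MapsTo P M M) : ∃ x ∈ M, P x = x := by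
  obtain ⟨x₀, R, hR, ⟨e⟩⟩ := hball
  -- affine homeomorphism from the unit ball
  let a : closedBall (0 : EuclideanSpace ℝ (Fin N)) 1 → closedBall x₀ R := fun u =>
    ⟨x₀ + R • (u : EuclideanSpace ℝ (Fin N)), by
      have : ‖(u : EuclideanSpace ℝ (Fin N))‖ ≤ 1 := mem_closedBall_zero_iff.1 u.2
      simp [norm_smul, abs_of_pos hR]; nlinarith⟩
  let b : closedBall x₀ R → closedBall (0 : EuclideanSpace ℝ (Fin N)) 1 := fun u =>
    ⟨R⁻¹ • ((u : EuclideanSpace ℝ (Fin N)) - x₀), by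
      have : ‖(u : EuclideanSpace ℝ (Fin N)) - x₀‖ ≤ R := by
        rw [← dist_eq_norm]; exact u.2
      simp only [mem_closedBall_zero_iff, norm_smul, norm_inv, Real.norm_of_nonneg hR.le]
      rw [inv_mul_le_iff₀ hR]; linarith⟩
  have ha : Continuous a := by fun_prop
  have hb : Continuous b := by fun_prop
  have hab : ∀ u, a (b u) = u := by
    intro u; ext1; simp [a, b, smul_smul, mul_inv_cancel₀ hR.ne']
  let Q : M → M := hPM.restrict P M M
  have hQ : Continuous Q := hP.mapsToRestrict hPM
  obtain ⟨x, hx⟩ := br_unit ⟨fun u => b (e (Q (e.symm (a u)))), by fun_prop⟩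
  have h1 := congrArg a hx
  simp only [ContinuousMap.coe_mk, hab] at h1
  have h2 := congrArg e.symm h1
  rw [e.symm_apply_apply] at h2
  exact ⟨_, (e.symm (a x)).2, congrArg Subtype.val h2⟩

end Brouwer

section Euler
open Filter Topology

lemma eu_step {N : ℕ} {T : ℝ}
    (Ω : Set (EuclideanSpace ℝ (Fin N))) (hΩ : IsOpen Ω)
    (G : ℝ → EuclideanSpace ℝ (Fin N) → EuclideanSpace ℝ (Fin N))
    (V : EuclideanSpace ℝ (Fin N) → ℝ) (hV : ContDiffOn ℝ 1 V Ω) (c : ℝ)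
    (M : Set (EuclideanSpace ℝ (Fin N))) (hM : M = {x ∈ Ω | V x ≤ c})
    (hG : ContinuousOn (fun p : ℝ × EuclideanSpace ℝ (Fin N) => G p.1 p.2)
      (Icc (0 : ℝ) T ×ˢ M))
    (hMcomp : IsCompact M)
    (hsub : ∀ u ∈ frontier M, ∀ t ∈ Icc (0 : ℝ) T, ⟪G t u, gradient V u⟫ < 0) :
    ∃ h₀ : ℝ, 0 < h₀ ∧ ∀ h : ℝ, 0 < h → h < h₀ → ∀ t ∈ Icc (0 : ℝ) T, ∀ x ∈ M, x + h • G t x ∈ M := by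
  have hMΩ : M ⊆ Ω := by rw [hM]; exact fun x hx => hx.1
  have hK : IsCompact (Icc (0 : ℝ) T ×ˢ M) := isCompact_Icc.prod hMcomp
  have main : ∀ᶠ h : ℝ in 𝓝 0, ∀ p ∈ Icc (0 : ℝ) T ×ˢ M,
      (p ∈ Icc (0 : ℝ) T ×ˢ M → 0 < h → p.2 + h • G p.1 p.2 ∈ M) := by
    apply hK.eventually_forall_of_forall_eventually
    rintro ⟨t₀, x₀⟩ ⟨ht₀, hx₀⟩
    simp only at ht₀ hx₀
    set l : Filter (ℝ × (ℝ × EuclideanSpace ℝ (Fin N))) := 𝓝[univ ×ˢ (Icc (0 : ℝ) T ×ˢ M)] (0, (t₀, x₀)) with hl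
    suffices hs : ∀ᶠ z in l, z.2 ∈ Icc (0 : ℝ) T ×ˢ M → 0 < z.1 → z.2.2 + z.1 • G z.2.1 z.2.2 ∈ M by
      rw [hl, eventually_nhdsWithin_iff] at hs
      filter_upwards [hs] with z hz hzK hz0
      exact hz ⟨mem_univ _, hzK⟩ hzK hz0
    have hGt : Tendsto (fun z : ℝ × (ℝ × EuclideanSpace ℝ (Fin N)) => G z.2.1 z.2.2) l (𝓝 (G t₀ x₀)) := by
      have h1 := hG (t₀, x₀) ⟨ht₀, hx₀⟩
      have h2 : Tendsto (fun z : ℝ × (ℝ × EuclideanSpace ℝ (Fin N)) => z.2) l (𝓝[Icc (0 : ℝ) T ×ˢ M] (t₀, x₀)) := by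
        rw [hl, nhdsWithin_prod_eq]
        exact tendsto_snd
      exact h1.tendsto.comp h2
    have hz1 : Tendsto (fun z : ℝ × (ℝ × EuclideanSpace ℝ (Fin N)) => z.1) l (𝓝 0) :=
      (continuous_fst.tendsto _).mono_left nhdsWithin_le_nhds
    have hz2 : Tendsto (fun z : ℝ × (ℝ × EuclideanSpace ℝ (Fin N)) => z.2.2) l (𝓝 x₀) :=
      ((continuous_snd.comp continuous_snd).tendsto _).mono_left nhdsWithin_le_nhds
    have hb : Tendsto (fun z : ℝ × (ℝ × EuclideanSpace ℝ (Fin N)) => z.2.2 + z.1 • G z.2.1 z.2.2) l (𝓝 x₀) := by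
      simpa using hz2.add (hz1.smul hGt)
    by_cases hint : x₀ ∈ interior M
    · filter_upwards [hb (mem_interior_iff_mem_nhds.1 hint)] with z hz _ _ using hz
    · have hfr : x₀ ∈ frontier M := ⟨subset_closure hx₀, hint⟩
      have hVx : ContDiffAt ℝ 1 V x₀ := hV.contDiffAt (hΩ.mem_nhds (hMΩ hx₀))
      have hstr : HasStrictFDerivAt V (fderiv ℝ V x₀) x₀ := hVx.hasStrictFDerivAt one_ne_zero
      have hneg : fderiv ℝ V x₀ (G t₀ x₀) < 0 := by
        have := hsub x₀ hfr t₀ ht₀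
        rw [gradient, real_inner_comm, InnerProductSpace.toDual_symm_apply] at this
        exact this
      obtain ⟨m, hm⟩ : ∃ m, m = - fderiv ℝ V x₀ (G t₀ x₀) / 2 := ⟨_, rfl⟩
      have hmpos : 0 < m := by rw [hm]; linarith
      have hCpos : 0 < ‖G t₀ x₀‖ + 1 := by positivity
      have hlit := (hstr.isLittleO.def (div_pos hmpos hCpos))
      have hlit' := (hb.prodMk_nhds hz2).eventually hlit
      have e1 : ∀ᶠ z in l, ‖G z.2.1 z.2.2‖ < ‖G t₀ x₀‖ + 1 :=
        hGt.norm.eventually (gt_mem_nhds (by linarith))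
      have e2 : ∀ᶠ z in l, fderiv ℝ V x₀ (G z.2.1 z.2.2) < - m :=
        (((fderiv ℝ V x₀).continuous.tendsto _).comp hGt).eventually (gt_mem_nhds (by rw [hm]; linarith))
      filter_upwards [hlit', e1, e2, hb (hΩ.mem_nhds (hMΩ hx₀))] with z h1 h2 h3 h4 hzK hz0
      rw [hM]
      refine ⟨h4, ?_⟩
      have hVz : V z.2.2 ≤ c := by
        have := hzK.2; rw [hM] at this; exact this.2
      simp only [add_sub_cancel_left, map_smul, smul_eq_mul, norm_smul, Real.norm_of_nonneg hz0.le] at h1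
      have h5 := (le_abs_self _).trans h1
      have h6 : m / (‖G t₀ x₀‖ + 1) * (z.1 * ‖G z.2.1 z.2.2‖) ≤ z.1 * m := by
        calc _ ≤ m / (‖G t₀ x₀‖ + 1) * (z.1 * (‖G t₀ x₀‖ + 1)) := by gcongr
          _ = z.1 * m := by field_simp
      have h7 : z.1 * fderiv ℝ V x₀ (G z.2.1 z.2.2) ≤ z.1 * (-m) := by gcongr
      linarith
  obtain ⟨h₀, hh₀, H⟩ := Metric.eventually_nhds_iff.1 main
  refine ⟨h₀, hh₀, fun h hpos hlt t ht x hx => ?_⟩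
  exact H (by simpa [abs_of_pos hpos] using hlt) (t, x) ⟨ht, hx⟩ ⟨ht, hx⟩ hpos

/-- Euler iterates. -/
noncomputable def euIter {E : Type*} [AddCommGroup E] [Module ℝ E] (G : ℝ → E → E) (h : ℝ) : ℕ → E → E
  | 0, x => x
  | k + 1, x => euIter G h k x + h • G (k * h) (euIter G h k x)

lemma eu_periodic {N : ℕ} {T : ℝ} (hT : 0 < T)
    (Ω : Set (EuclideanSpace ℝ (Fin N))) (hΩ : IsOpen Ω)
    (f : ℝ → EuclideanSpace ℝ (Fin N) → EuclideanSpace ℝ (Fin N))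
    (hf : ContinuousOn (fun p : ℝ × EuclideanSpace ℝ (Fin N) => f p.1 p.2)
      (Icc (0 : ℝ) T ×ˢ Ω))
    (V : EuclideanSpace ℝ (Fin N) → ℝ) (hV : ContDiffOn ℝ 1 V Ω) (c : ℝ)
    (M : Set (EuclideanSpace ℝ (Fin N))) (hM : M = {x ∈ Ω | V x ≤ c})
    (hMcomp : IsCompact M)
    (hgrad : ∀ u ∈ frontier M, gradient V u ≠ 0)
    (hsub : ∀ u ∈ frontier M, ∀ t ∈ Icc (0 : ℝ) T, ⟪f t u, gradient V u⟫ ≤ 0)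
    (hball : ∃ (x₀ : EuclideanSpace ℝ (Fin N)) (R : ℝ), 0 < R ∧
      Nonempty ((M : Set (EuclideanSpace ℝ (Fin N))) ≃ₜ
        (closedBall x₀ R : Set (EuclideanSpace ℝ (Fin N)))))
    (m : ℕ) :
    ∃ (n : ℕ) (x : ℕ → EuclideanSpace ℝ (Fin N)), m < n ∧ (∀ k ≤ n, x k ∈ M) ∧ x 0 = x n ∧
      ∀ k < n, ‖x (k + 1) - x k - (T / n) • f (k * (T / n)) (x k)‖ ≤ (T / n) * (1 / (m + 1)) := by
  have hMΩ : M ⊆ Ω := by rw [hM]; exact fun x hx => hx.1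
  have hgc : ContinuousOn (gradient V) M := by
    have h1 : ContinuousOn (fderiv ℝ V) Ω := hV.continuousOn_fderiv_of_isOpen hΩ le_rfl
    exact ((InnerProductSpace.toDual ℝ _).symm.continuous.comp_continuousOn h1).mono hMΩ
  obtain ⟨C, hC⟩ := hMcomp.exists_bound_of_continuousOn hgc
  set δ : ℝ := 1 / ((m + 1) * (|C| + 1)) with hδ
  have hδpos : 0 < δ := by positivity
  let G : ℝ → EuclideanSpace ℝ (Fin N) → EuclideanSpace ℝ (Fin N) := fun t x => f t x - δ • gradient V x
  have hG : ContinuousOn (fun p : ℝ × EuclideanSpace ℝ (Fin N) => G p.1 p.2)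
      (Icc (0 : ℝ) T ×ˢ M) := by
    refine (hf.mono (prod_mono le_rfl hMΩ)).sub (ContinuousOn.const_smul ?_ δ)
    exact hgc.comp continuousOn_snd (fun p hp => hp.2)
  obtain ⟨h₀, hh₀, hstep⟩ := eu_step Ω hΩ G V hV c M hM hG hMcomp (fun u hu t ht => by
    simp only [G]
    rw [inner_sub_left, real_inner_smul_left, real_inner_self_eq_norm_sq]
    have := hsub u hu t ht
    have h2 := norm_pos_iff.2 (hgrad u hu)
    have : 0 < δ * ‖gradient V u‖ ^ 2 := by positivity
    linarith)
  obtain ⟨n₀, hn₀⟩ := exists_nat_gt (T / h₀)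
  set n := max n₀ (m + 1) with hn
  have hnpos : 0 < n := by omega
  have hn' : (0 : ℝ) < n := by exact_mod_cast hnpos
  have hTn : 0 < T / n := by positivity
  have hTh : T / n < h₀ := by
    rw [div_lt_iff₀ hn']
    rw [div_lt_iff₀ hh₀] at hn₀
    have : (n₀ : ℝ) ≤ n := by exact_mod_cast le_max_left _ _
    nlinarith
  have hkT : ∀ k : ℕ, k ≤ n → (k : ℝ) * (T / n) ∈ Icc 0 T := by
    intro k hk
    refine ⟨by positivity, ?_⟩
    have : (k : ℝ) ≤ n := by exact_mod_cast hk
    calc (k : ℝ) * (T / n) ≤ n * (T / n) := by gcongr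
      _ = T := by field_simp
  have hiter : ∀ k : ℕ, k ≤ n → ContinuousOn (euIter G (T / n) k) M ∧ MapsTo (euIter G (T / n) k) M M := by
    intro k
    induction k with
    | zero => exact fun _ => ⟨continuousOn_id, fun x hx => hx⟩
    | succ k ih =>
      intro hk
      obtain ⟨h1, h2⟩ := ih (by omega)
      refine ⟨?_, fun x hx => hstep _ hTn hTh _ (hkT k (by omega)) _ (h2 hx)⟩
      have h3 : ContinuousOn (fun x => G ((k : ℝ) * (T / n)) (euIter G (T / n) k x)) M :=
        hG.comp (f := fun x => ((k : ℝ) * (T / n), euIter G (T / n) k x))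
        (continuousOn_const.prodMk h1) (fun x hx => ⟨hkT k (by omega), h2 hx⟩)
      exact h1.add (h3.const_smul (T / n : ℝ))
  obtain ⟨x, hx, hfix⟩ := br_set M hball (euIter G (T / n) n) (hiter n le_rfl).1 (hiter n le_rfl).2
  refine ⟨n, fun k => euIter G (T / n) k x, by omega, fun k hk => (hiter k hk).2 hx, hfix.symm, ?_⟩
  intro k hk
  have hxk := (hiter k hk.le).2 hx
  have : euIter G (T / n) (k + 1) x - euIter G (T / n) k x - (T / n) • f (k * (T / n)) (euIter G (T / n) k x)
      = - ((T / n) • δ • gradient V (euIter G (T / n) k x)) := by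
    simp only [euIter, G, smul_sub]; abel
  rw [this, norm_neg, norm_smul, norm_smul, Real.norm_of_nonneg hTn.le, Real.norm_of_nonneg hδpos.le]
  gcongr
  calc δ * ‖gradient V (euIter G (T / n) k x)‖ ≤ δ * (|C| + 1) := by
        gcongr; linarith [hC _ hxk, le_abs_self C]
    _ = 1 / (m + 1) := by rw [hδ]; field_simp

lemma eu_sum {E : Type*} [NormedAddCommGroup E] [NormedSpace ℝ E] (x : ℕ → E) (h e : ℝ) (v : E)
    (p q : ℕ) (hpq : p ≤ q)
    (H : ∀ k, p ≤ k → k < q → ‖x (k + 1) - x k - h • v‖ ≤ h * e) :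
    ‖x q - x p - ((q : ℝ) * h - p * h) • v‖ ≤ ((q : ℝ) * h - p * h) * e := by
  induction q, hpq using Nat.le_induction with
  | base => simp
  | succ q hpq ih =>
    have h1 := ih (fun k hk hkq => H k hk (by omega))
    have h2 := H q hpq (by omega)
    have : x (q + 1) - x p - (((q + 1 : ℕ) : ℝ) * h - p * h) • v =
      (x q - x p - ((q : ℝ) * h - p * h) • v) + (x (q + 1) - x q - h • v) := by
      push_cast; module
    rw [this]
    refine (norm_add_le _ _).trans ?_
    push_cast
    linarith

/-- One-sided local estimate, symmetric in the order of the two indices. -/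
lemma eu_sum_symm {E : Type*} [NormedAddCommGroup E] [NormedSpace ℝ E] (x : ℕ → E) (h e : ℝ) (v : E)
    (hh : 0 ≤ h) (i j : ℕ)
    (H : ∀ k, min i j ≤ k → k < max i j → ‖x (k + 1) - x k - h • v‖ ≤ h * e) :
    ‖x j - x i - ((j : ℝ) * h - i * h) • v‖ ≤ |(j : ℝ) * h - i * h| * e := by
  rcases le_total i j with hij | hij
  · rw [min_eq_left hij, max_eq_right hij] at H
    have : (i : ℝ) * h ≤ j * h := by gcongr
    rw [abs_of_nonneg (by linarith)]
    exact eu_sum x h e v i j hij H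
  · rw [min_eq_right hij, max_eq_left hij] at H
    have : (j : ℝ) * h ≤ i * h := by gcongr
    rw [abs_of_nonpos (by linarith)]
    have := eu_sum x h e v j i hij H
    rw [← norm_neg]
    convert this using 1
    · congr 1; module
    · ring

lemma eu_limit {E : Type*} [NormedAddCommGroup E] [NormedSpace ℝ E] {T : ℝ} (hT : 0 < T)
    (f : ℝ → E → E) (M : Set E) (hM : IsCompact M)
    (hf : ContinuousOn (fun p : ℝ × E => f p.1 p.2) (Icc (0 : ℝ) T ×ˢ M))
    (hyp : ∀ m : ℕ, ∃ (n : ℕ) (x : ℕ → E), m < n ∧ (∀ k ≤ n, x k ∈ M) ∧ x 0 = x n ∧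
      ∀ k < n, ‖x (k + 1) - x k - (T / n) • f (k * (T / n)) (x k)‖ ≤ (T / n) * (1 / (m + 1))) :
    ∃ y : ℝ → E, (∀ t ∈ Icc (0 : ℝ) T, y t ∈ M) ∧ y 0 = y T ∧
      (∀ t ∈ Icc (0 : ℝ) T, HasDerivWithinAt y (f t (y t)) (Icc (0 : ℝ) T) t) := by
  choose n x hmn hxM hper hstep using hyp
  let idx : ℕ → ℝ → ℕ := fun m t => ⌊t / (T / n m)⌋₊
  have hnpos : ∀ m, (0 : ℝ) < n m := fun m => by
    have := hmn m
    exact_mod_cast (by omega : 0 < n m)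
  have hhpos : ∀ m, 0 < T / n m := fun m => div_pos hT (hnpos m)
  have hhle : ∀ m, T / n m ≤ T * (1 / (m + 1)) := fun m => by
    rw [div_eq_mul_one_div]
    have : (m : ℝ) + 1 ≤ n m := by exact_mod_cast hmn m
    gcongr
  have idx_le : ∀ m, ∀ t ∈ Icc (0 : ℝ) T, (idx m t : ℝ) * (T / n m) ≤ t := by
    intro m t ht
    rw [← le_div_iff₀ (hhpos m)]
    exact Nat.floor_le (div_nonneg ht.1 (hhpos m).le)
  have idx_gt : ∀ m t, t - T / n m < (idx m t : ℝ) * (T / n m) := by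
    intro m t
    have := Nat.lt_floor_add_one (t / (T / n m))
    rw [div_lt_iff₀ (hhpos m), add_mul, one_mul] at this
    exact sub_lt_iff_lt_add.2 this
  have idx_T : ∀ m, idx m T = n m := by
    intro m
    have : T / (T / n m) = n m := by have := hnpos m; field_simp
    simp only [idx, this, Nat.floor_natCast]
  have idx_0 : ∀ m, idx m 0 = 0 := by intro m; simp [idx]
  have idx_n : ∀ m, ∀ t ∈ Icc (0 : ℝ) T, idx m t ≤ n m := by
    intro m t ht
    rw [← idx_T m]
    exact Nat.floor_mono (div_le_div_of_nonneg_right ht.2 (hhpos m).le)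
  let U : Ultrafilter ℕ := Filter.hyperfilter ℕ
  have hU : (U : Filter ℕ) ≤ atTop := by
    rw [← Nat.cofinite_eq_atTop]; exact Filter.hyperfilter_le_cofinite
  let Y : ℕ → ℝ → E := fun m t => x m (idx m t)
  have hYM : ∀ m, ∀ t ∈ Icc (0 : ℝ) T, Y m t ∈ M := fun m t ht => hxM m _ (idx_n m t ht)
  have hlim : ∀ t, ∃ z, t ∈ Icc (0 : ℝ) T → z ∈ M ∧ Tendsto (fun m => Y m t) U (𝓝 z) := by
    intro t
    by_cases ht : t ∈ Icc (0 : ℝ) T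
    · obtain ⟨z, hz, hz'⟩ := hM.ultrafilter_le_nhds (U.map (fun m => Y m t)) (by
        rw [Ultrafilter.coe_map, le_principal_iff]
        exact Filter.mem_map.2 (Filter.Eventually.of_forall fun m => hYM m t ht))
      exact ⟨z, fun _ => ⟨hz, hz'⟩⟩
    · exact ⟨0, fun h => absurd h ht⟩
  choose y hy using hlim
  have h0T : (0 : ℝ) ∈ Icc 0 T := ⟨le_rfl, hT.le⟩
  have hTT : T ∈ Icc 0 T := ⟨hT.le, le_rfl⟩
  refine ⟨y, fun t ht => (hy t ht).1, ?_, ?_⟩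
  · refine tendsto_nhds_unique (hy 0 h0T).2 ?_
    refine (hy T hTT).2.congr fun m => ?_
    simp only [Y, idx_T, idx_0, hper]
  intro t ht
  obtain ⟨C, hC⟩ := (isCompact_Icc.prod hM).exists_bound_of_continuousOn hf
  have hC0 : 0 ≤ C := (norm_nonneg _).trans (hC (t, y t) ⟨ht, (hy t ht).1⟩)
  have hone : Tendsto (fun m : ℕ => 1 / ((m : ℝ) + 1)) U (𝓝 0) :=
    tendsto_one_div_add_atTop_nhds_zero_nat.mono_left hU
  have hh0 : Tendsto (fun m : ℕ => T / n m) U (𝓝 0) := by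
    refine squeeze_zero (fun m => (hhpos m).le) hhle ?_
    simpa using hone.const_mul T
  have htk : ∀ s ∈ Icc (0 : ℝ) T, Tendsto (fun m => (idx m s : ℝ) * (T / n m)) U (𝓝 s) := by
    intro s hs
    refine tendsto_of_tendsto_of_tendsto_of_le_of_le (g := fun m => s - T / n m) (h := fun _ => s) ?_ tendsto_const_nhds
      (fun m => (idx_gt m s).le) (fun m => idx_le m s hs)
    simpa using hh0.const_sub s
  rw [hasDerivWithinAt_iff_isLittleO, Asymptotics.isLittleO_iff]
  intro ε hε
  set v := f t (y t) with hv
  obtain ⟨η, hη, hfη⟩ := Metric.continuousWithinAt_iff.1 (hf (t, y t) ⟨ht, (hy t ht).1⟩) (ε / 2) (by positivity)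
  have hη' : 0 < min η (η / (4 * (C + 1))) := by positivity
  rw [eventually_nhdsWithin_iff, Metric.eventually_nhds_iff]
  refine ⟨min (η / 2) (η / (4 * (C + 1))), by positivity, fun s hst hs => ?_⟩
  rw [Real.dist_eq] at hst
  have hst1 : |s - t| < η / 2 := hst.trans_le (min_le_left _ _)
  have hst2 : |s - t| * (4 * (C + 1)) < η := by
    rw [← lt_div_iff₀ (by positivity)]; exact hst.trans_le (min_le_right _ _)
  have hbase : ∀ m, ∀ k, k < n m → ‖x m (k + 1) - x m k - (T / n m) • (0 : E)‖ ≤ T / n m * (C + 1) := by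
    intro m k hk
    have hkT : (k : ℝ) * (T / n m) ∈ Icc 0 T := by
      refine ⟨mul_nonneg (Nat.cast_nonneg _) (hhpos m).le, ?_⟩
      have h1 : (k : ℝ) ≤ n m := by exact_mod_cast hk.le
      have := hnpos m
      have := hhpos m
      calc (k : ℝ) * (T / n m) ≤ n m * (T / n m) := by gcongr
        _ = T := by field_simp
    have h1 := hstep m k hk
    have h2 := hC (_, x m k) ⟨hkT, hxM m k hk.le⟩
    simp only at h2
    rw [smul_zero, sub_zero]
    have h3 : ‖x m (k + 1) - x m k‖ ≤ T / n m * (1 / (m + 1)) + ‖(T / n m) • f (k * (T / n m)) (x m k)‖ := by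
      have := norm_add_le (x m (k + 1) - x m k - (T / n m) • f (k * (T / n m)) (x m k)) ((T / n m) • f (k * (T / n m)) (x m k))
      rw [sub_add_cancel] at this
      linarith
    rw [norm_smul, Real.norm_of_nonneg (hhpos m).le] at h3
    have h4 : (1 : ℝ) / (m + 1) ≤ 1 := by
      rw [div_le_one (by positivity)]; linarith [(Nat.cast_nonneg m : (0 : ℝ) ≤ m)]
    have := hhpos m
    calc _ ≤ _ := h3
      _ ≤ T / n m * 1 + T / n m * C := by gcongr
      _ = _ := by ring
  have hest : ∀ᶠ m in (U : Filter ℕ), ‖Y m s - Y m t - ((idx m s : ℝ) * (T / n m) - idx m t * (T / n m)) • v‖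
      ≤ |(idx m s : ℝ) * (T / n m) - idx m t * (T / n m)| * ε := by
    have hY := Metric.tendsto_nhds.1 (hy t ht).2 (η / 4) (by positivity)
    have e1 := hh0.eventually (gt_mem_nhds (show 0 < η / 2 by positivity))
    have e2 := hh0.eventually (gt_mem_nhds (show 0 < η / (8 * (C + 1)) by positivity))
    have e3 := hone.eventually (gt_mem_nhds (show 0 < ε / 2 by positivity))
    filter_upwards [hY, e1, e2, e3] with m h1 h2 h3 h4
    have hh := hhpos m
    rw [lt_div_iff₀ (by positivity)] at h3
    refine eu_sum_symm (x m) (T / n m) ε v hh.le _ _ fun k hk1 hk2 => ?_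
    -- location of the index k
    have hit := idx_n m t ht
    have his := idx_n m s hs
    have hkn : k < n m := lt_of_lt_of_le hk2 (max_le hit his)
    have ha1 := idx_le m t ht
    have ha2 := idx_le m s hs
    have ha3 := idx_gt m t
    have ha4 := idx_gt m s
    have hlow : min t s - T / n m ≤ k * (T / n m) := by
      rcases min_le_iff.1 hk1 with hk | hk
      · have : (idx m t : ℝ) * (T / n m) ≤ k * (T / n m) := by gcongr
        linarith [min_le_left t s]
      · have : (idx m s : ℝ) * (T / n m) ≤ k * (T / n m) := by gcongr
        linarith [min_le_right t s]
    have hup : k * (T / n m) ≤ max t s := by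
      rcases lt_max_iff.1 hk2 with hk | hk
      · have : (k : ℝ) * (T / n m) ≤ idx m t * (T / n m) := by gcongr
        linarith [le_max_left t s]
      · have : (k : ℝ) * (T / n m) ≤ idx m s * (T / n m) := by gcongr
        linarith [le_max_right t s]
    have hmx : max t s ≤ t + |s - t| := max_le (by linarith [abs_nonneg (s - t)]) (by linarith [le_abs_self (s - t)])
    have hmn' : t - |s - t| ≤ min t s := le_min (by linarith [abs_nonneg (s - t)]) (by linarith [neg_abs_le (s - t)])
    have hkt : |(k : ℝ) * (T / n m) - t| ≤ |s - t| + T / n m := by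
      rw [abs_le]; constructor <;> linarith
    have hkT : (k : ℝ) * (T / n m) ∈ Icc 0 T :=
      ⟨mul_nonneg (Nat.cast_nonneg _) hh.le, hup.trans (max_le ht.2 hs.2)⟩
    have hxk : ‖x m k - x m (idx m t)‖ ≤ (|s - t| + 2 * (T / n m)) * (C + 1) := by
      have := eu_sum_symm (x m) (T / n m) (C + 1) 0 hh.le (idx m t) k
        (fun k' _ hk' => hbase m k' (lt_of_lt_of_le hk' (max_le hit hkn.le)))
      rw [smul_zero, sub_zero] at this
      refine this.trans ?_
      gcongr
      have h5 : |(k : ℝ) * (T / n m) - idx m t * (T / n m)| ≤ |(k : ℝ) * (T / n m) - t| + |t - idx m t * (T / n m)| := abs_sub_le _ _ _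
      have h6 : |t - idx m t * (T / n m)| ≤ T / n m := by rw [abs_le]; constructor <;> linarith
      linarith
    have hdist : dist ((k : ℝ) * (T / n m), x m k) (t, y t) < η := by
      rw [Prod.dist_eq]
      apply max_lt
      · show dist ((k : ℝ) * (T / n m)) t < η
        rw [Real.dist_eq]; linarith
      · show dist (x m k) (y t) < η
        have h7 := dist_triangle (x m k) (x m (idx m t)) (y t)
        have h8 : dist (x m (idx m t)) (y t) < η / 4 := h1
        rw [dist_eq_norm (x m k) (x m (idx m t))] at h7
        nlinarith
    have hfk : dist (f (k * (T / n m)) (x m k)) v < ε / 2 := hfη ⟨hkT, hxM m k hkn.le⟩ hdist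
    rw [dist_eq_norm] at hfk
    have hsk := hstep m k hkn
    have : x m (k + 1) - x m k - (T / n m) • v =
      (x m (k + 1) - x m k - (T / n m) • f (k * (T / n m)) (x m k)) +
        (T / n m) • (f (k * (T / n m)) (x m k) - v) := by rw [smul_sub]; abel
    rw [this]
    refine (norm_add_le _ _).trans ?_
    rw [norm_smul, Real.norm_of_nonneg hh.le]
    calc _ ≤ T / n m * (ε / 2) + T / n m * (ε / 2) := by
          refine add_le_add (hsk.trans ?_) ?_ <;> gcongr
      _ = _ := by ring
  have hfin := le_of_tendsto_of_tendsto
    (((((hy s hs).2.sub (hy t ht).2).sub (((htk s hs).sub (htk t ht)).smul_const v))).norm)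
    (((htk s hs).sub (htk t ht)).abs.mul_const ε) hest
  rw [Real.norm_eq_abs, mul_comm]
  exact hfin

end Euler

/-- Corollary 3.1. Let `V` be `C¹` on the open set `Ω` and let the
sub-level set `M = {x ∈ Ω : V x ≤ c}` be compact with nonempty interior, with
`∇V(u) ≠ 0` and `⟪f(t,u), ∇V(u)⟫ ≤ 0` on `∂M`. If `M` is homeomorphic to a closed
ball, then `ẏ = f(t,y)` has a `T`-periodic solution with values in `M`. -/
theorem periodic_solution_in_sublevel_set
    {N : ℕ} {T : ℝ} (hT : 0 < T)
    (Ω : Set (EuclideanSpace ℝ (Fin N))) (hΩ : IsOpen Ω)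
    (f : ℝ → EuclideanSpace ℝ (Fin N) → EuclideanSpace ℝ (Fin N))
    (hf : ContinuousOn (fun p : ℝ × EuclideanSpace ℝ (Fin N) => f p.1 p.2)
      (Icc (0 : ℝ) T ×ˢ Ω))
    (V : EuclideanSpace ℝ (Fin N) → ℝ) (hV : ContDiffOn ℝ 1 V Ω) (c : ℝ)
    (M : Set (EuclideanSpace ℝ (Fin N))) (hM : M = {x ∈ Ω | V x ≤ c})
    (hMcomp : IsCompact M) (hMint : (interior M).Nonempty)
    (hgrad : ∀ u ∈ frontier M, gradient V u ≠ 0)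
    (hsub : ∀ u ∈ frontier M, ∀ t ∈ Icc (0 : ℝ) T, ⟪f t u, gradient V u⟫ ≤ 0)
    (hball : ∃ (x₀ : EuclideanSpace ℝ (Fin N)) (R : ℝ), 0 < R ∧
      Nonempty ((M : Set (EuclideanSpace ℝ (Fin N))) ≃ₜ
        (closedBall x₀ R : Set (EuclideanSpace ℝ (Fin N))))) :
    ∃ y : ℝ → EuclideanSpace ℝ (Fin N),
      (∀ t ∈ Icc (0 : ℝ) T, y t ∈ Ω) ∧
      (∀ t ∈ Icc (0 : ℝ) T, HasDerivWithinAt y (f t (y t)) (Icc (0 : ℝ) T) t) ∧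
      y 0 = y T ∧
      (∀ t ∈ Icc (0 : ℝ) T, y t ∈ M) := by
  have hMΩ : M ⊆ Ω := by rw [hM]; exact fun x hx => hx.1
  obtain ⟨y, hyM, hper, hd⟩ := eu_limit hT f M hMcomp (hf.mono (prod_mono le_rfl hMΩ))
    (eu_periodic hT Ω hΩ f hf V hV c M hM hMcomp hgrad hsub hball)
  exact ⟨y, fun t ht => hMΩ (hyM t ht), hd, hper, hyM⟩
end

section
/- Let G ⊆ ℝ^N be a nonempty open bounded set with cl(G) strictly star-shaped with respect to a point p ∈ G, and let (V_u)_{u∈∂G} be a family of bounding functions for G. Then ⟨∇V_u(u), p − u⟩ ≤ 0 for all u ∈ ∂G. -/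
open Set Metric
open scoped RealInnerProductSpace

/-- Lemma 3.3. If `cl G` is strictly star-shaped with respect to
`p ∈ G` and `(V_u)` is a family of bounding functions for `G`, then
`⟪∇V_u(u), p - u⟫ ≤ 0` for all `u ∈ ∂G`. -/
theorem gradient_inner_nonpos_of_strictly_star_shaped
    {N : ℕ} (G : Set (EuclideanSpace ℝ (Fin N)))
    (hne : G.Nonempty) (hG : IsOpen G) (hGb : Bornology.IsBounded G)
    (p : EuclideanSpace ℝ (Fin N)) (hp : p ∈ G)
    (hstar : ∀ u ∈ frontier G, ∀ θ : ℝ, 0 ≤ θ → θ < 1 → p + θ • (u - p) ∈ G)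
    (r : EuclideanSpace ℝ (Fin N) → ℝ)
    (V : EuclideanSpace ℝ (Fin N) → EuclideanSpace ℝ (Fin N) → ℝ)
    (hbd : ∀ u ∈ frontier G, 0 < r u ∧ ContDiffOn ℝ 1 (V u) (ball u (r u)) ∧
      V u u = 0 ∧ ∀ x ∈ G ∩ ball u (r u), V u x < 0) :
    ∀ u ∈ frontier G, ⟪gradient (V u) u, p - u⟫ ≤ 0 := by
  intro u hu
  obtain ⟨hr, hC, h0, hneg⟩ := hbd u hu
  have hd : DifferentiableAt ℝ (V u) u :=
    (hC.differentiableOn (by norm_num)).differentiableAt (ball_mem_nhds u hr)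
  have hmax : IsLocalMaxOn (V u) (segment ℝ u p) u := by
    filter_upwards [self_mem_nhdsWithin, mem_nhdsWithin_of_mem_nhds (ball_mem_nhds u hr)]
      with x hx hxb
    rw [h0]
    rw [segment_eq_image'] at hx
    obtain ⟨t, ht, rfl⟩ := hx
    rcases ht.1.eq_or_lt with h | h
    · simp [← h, h0]
    · refine (hneg _ ⟨?_, hxb⟩).le
      have := hstar u hu (1 - t) (by linarith [ht.2]) (by linarith)
      convert this using 1
      module
  have key := hmax.hasFDerivWithinAt_nonpos hd.hasFDerivAt.hasFDerivWithinAt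
    (sub_mem_posTangentConeAt_of_segment_subset subset_rfl)
  rw [hd.hasGradientAt.hasFDerivAt.fderiv] at key
  simpa using key
end

section
/- Let G ⊆ ℝ^N be a nonempty open bounded set and δ > 0, p ∈ G with closed ball B[p,δ] ⊆ G, such that cl(G) is strictly star-shaped with respect to every point of B[p,δ]. Let (V_u)_{u∈∂G} be a family of bounding functions for G normalized so that ‖∇V_u(u)‖ = 1 for each u ∈ ∂G. Then ⟨∇V_u(u), p − u⟩ ≤ −δ for all u ∈ ∂G. -/
open Set Metric
open scoped RealInnerProductSpace

/-- If `cl G` is strictly star-shaped with respect to every point of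
a closed ball `B[p,δ] ⊆ G` and `(V_u)` is a family of bounding functions for `G`
normalized so that `‖∇V_u(u)‖ = 1`, then `⟪∇V_u(u), p - u⟫ ≤ -δ` for all `u ∈ ∂G`. -/
theorem gradient_inner_le_neg_delta_of_strictly_star_shaped_ball
    {N : ℕ} (G : Set (EuclideanSpace ℝ (Fin N)))
    (hne : G.Nonempty) (hG : IsOpen G) (hGb : Bornology.IsBounded G)
    (p : EuclideanSpace ℝ (Fin N)) (δ : ℝ) (hδ : 0 < δ)
    (hball : closedBall p δ ⊆ G)
    (hstar : ∀ q ∈ closedBall p δ, ∀ u ∈ frontier G,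
      ∀ θ : ℝ, 0 ≤ θ → θ < 1 → q + θ • (u - q) ∈ G)
    (r : EuclideanSpace ℝ (Fin N) → ℝ)
    (V : EuclideanSpace ℝ (Fin N) → EuclideanSpace ℝ (Fin N) → ℝ)
    (hbd : ∀ u ∈ frontier G, 0 < r u ∧ ContDiffOn ℝ 1 (V u) (ball u (r u)) ∧
      V u u = 0 ∧ ∀ x ∈ G ∩ ball u (r u), V u x < 0)
    (hnorm : ∀ u ∈ frontier G, ‖gradient (V u) u‖ = 1) :
    ∀ u ∈ frontier G, ⟪gradient (V u) u, p - u⟫ ≤ -δ := by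
  intro u hu
  obtain ⟨hr, hV, hV0, hneg⟩ := hbd u hu
  have hn := hnorm u hu
  have hdiff : DifferentiableAt ℝ (V u) u :=
    (hV.differentiableOn (by norm_num)).differentiableAt (ball_mem_nhds u hr)
  have hgr := hdiff.hasGradientAt.hasFDerivAt
  set g := gradient (V u) u with hg
  set q := p + δ • g with hq
  have hqb : q ∈ closedBall p δ := by
    simp [hq, mem_closedBall, dist_eq_norm, norm_smul, hn, abs_of_pos hδ]
  have hline : HasDerivAt (fun t : ℝ => u + t • (q - u)) (q - u) 0 := by
    simpa using ((hasDerivAt_id (0 : ℝ)).smul_const (q - u)).const_add u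
  have hcomp : HasDerivAt (fun t : ℝ => V u (u + t • (q - u))) ⟪g, q - u⟫ 0 := by
    have hgr2 : HasFDerivAt (V u) (InnerProductSpace.toDual ℝ _ g) (u + (0 : ℝ) • (q - u)) := by
      simpa using hgr
    have h := hgr2.comp_hasDerivAt (0 : ℝ) hline
    rw [InnerProductSpace.toDual_apply_apply] at h
    exact h
  have hle : ⟪g, q - u⟫ ≤ 0 := by
    refine le_of_tendsto hcomp.tendsto_slope_zero_right ?_
    have hb : ∀ᶠ t : ℝ in nhdsWithin 0 (Ioi 0), u + t • (q - u) ∈ ball u (r u) := by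
      refine nhdsWithin_le_nhds (hline.continuousAt.eventually_mem ?_)
      simpa using ball_mem_nhds u hr
    have h1 : ∀ᶠ t : ℝ in nhdsWithin 0 (Ioi 0), t < 1 :=
      nhdsWithin_le_nhds (Iio_mem_nhds one_pos)
    filter_upwards [hb, h1, self_mem_nhdsWithin] with t ht ht1 ht0
    have ht0' : 0 < t := ht0
    have hm := hstar q hqb u hu (1 - t) (by linarith) (by linarith)
    have he : q + (1 - t) • (u - q) = u + t • (q - u) := by module
    rw [he] at hm
    have hlt := hneg _ ⟨hm, ht⟩
    simp only [zero_add, zero_smul, add_zero, hV0, sub_zero, smul_eq_mul]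
    exact mul_nonpos_of_nonneg_of_nonpos (inv_nonneg.2 ht0'.le) hlt.le
  have he : q - u = (p - u) + δ • g := by rw [hq]; abel
  rw [he, inner_add_right, inner_smul_right, real_inner_self_eq_norm_sq, hn] at hle
  linarith
end

section
/- Let Ω ⊆ ℝ^N be open, f : [0,T] × Ω → ℝ^N continuous, and G a nonempty open bounded set with cl(G) ⊆ Ω. Suppose there exist p ∈ G and δ > 0 with B[p,δ] ⊆ G such that cl(G) is strictly star-shaped with respect to every point of B[p,δ]. Let (V_u)_{u∈∂G} be a family of non-degenerate bounding functions for G such that ⟨f(t,u), ∇V_u(u)⟩ ≤ 0 for all u ∈ ∂G and t ∈ [0,T]. Then there exists a differentiable y : [0,T] → Ω with y'(t) = f(t, y(t)) for all t ∈ [0,T], y(0) = y(T), and y(t) ∈ cl(G) for all t ∈ [0,T]. -/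
open Set Metric
open scoped RealInnerProductSpace


section Brouwer
open MeasureTheory Measure Module

variable {E : Type*} [NormedAddCommGroup E] [InnerProductSpace ℝ E] [FiniteDimensional ℝ E]

/-- `det (1 + t A)` at `t = 1` is a fixed linear combination of values at the nodes. -/
lemma det_one_add_interp (s : Finset ℝ) (hs : finrank ℝ E < s.card) (A : E →L[ℝ] E) :
    (1 + A).det = ∑ i ∈ s, (Lagrange.basis s id i).eval 1 * (1 + i • A).det := by
  classical
  let b := finBasis ℝ E
  let M := LinearMap.toMatrix b b (A : E →ₗ[ℝ] E)
  let P : Polynomial ℝ := ((Polynomial.X : Polynomial ℝ) • M.map Polynomial.C +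
    (1 : Matrix (Fin (finrank ℝ E)) (Fin (finrank ℝ E)) ℝ).map Polynomial.C).det
  have hP : ∀ t : ℝ, P.eval t = (1 + t • A).det := by
    intro t
    have h1 : (1 + t • A).det = (1 + t • M).det := by
      rw [ContinuousLinearMap.det, ← LinearMap.det_toMatrix b]
      congr 1
      simp [M, ContinuousLinearMap.toLinearMap_add, ContinuousLinearMap.one_def]
    rw [h1, ← Polynomial.coe_evalRingHom, RingHom.map_det]
    congr 1
    ext i j
    simp [Matrix.one_apply]
    split_ifs <;> simp [add_comm, mul_comm]
  have hdeg : P.degree < s.card := by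
    refine lt_of_le_of_lt Polynomial.degree_le_natDegree ?_
    have := Polynomial.natDegree_det_X_add_C_le M 1
    simp only [Fintype.card_fin] at this
    exact_mod_cast lt_of_le_of_lt this hs
  have h := Lagrange.eq_interpolate (s := s) (v := id) (f := P) (fun _ _ _ _ h => h) hdeg
  have h2 := congrArg (Polynomial.eval 1) h
  rw [Lagrange.interpolate_apply, Polynomial.eval_finsetSum, hP, one_smul] at h2
  rw [h2]
  refine Finset.sum_congr rfl fun i _ => ?_
  simp [hP, mul_comm]

lemma sum_basis_eval (s : Finset ℝ) (hs : s.Nonempty) :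
    ∑ i ∈ s, (Lagrange.basis s id i).eval 1 = 1 := by
  have := congrArg (Polynomial.eval 1) (Lagrange.sum_basis (s := s) (v := id) (fun _ _ _ _ h => h) hs)
  rwa [Polynomial.eval_finsetSum, Polynomial.eval_one] at this

lemma id_add_bij {g : E → E} {K : NNReal} (hK : K < 1) (hg : LipschitzWith K g) :
    Function.Bijective (fun x => x + g x) := by
  have hd : ∀ x y, dist (g x) (g y) ≤ K * dist x y := hg.dist_le_mul
  have hK' : (K : ℝ) < 1 := hK
  constructor
  · intro x y h
    have h' : x + g x = y + g y := h
    have h2 : x - y = g y - g x := by rw [sub_eq_sub_iff_add_eq_add]; rw [h', add_comm]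
    have h3 := hd y x
    rw [dist_eq_norm, ← h2, dist_comm, dist_eq_norm] at h3
    have : ‖x - y‖ = 0 := by nlinarith [norm_nonneg (x - y)]
    exact sub_eq_zero.1 (norm_eq_zero.1 this)
  · intro y
    have hc : ContractingWith K (fun x => y - g x) := by
      refine ⟨hK, LipschitzWith.of_dist_le_mul fun a b => ?_⟩
      rw [dist_sub_left]; exact hd a b
    refine ⟨hc.fixedPoint, ?_⟩
    have := hc.fixedPoint_isFixedPt
    have h : y - g hc.fixedPoint = hc.fixedPoint := this
    show hc.fixedPoint + g hc.fixedPoint = y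
    nth_rewrite 1 [← h]; abel

variable [MeasurableSpace E] [BorelSpace E]

lemma volume_step {g : E → E} {K : NNReal} (hK : K < 1) (hg : LipschitzWith K g) {R : ℝ}
    (hR : ∀ x, R ≤ ‖x‖ → g x = 0) (hpos : ∀ x, 0 < (1 + fderiv ℝ g x).det) :
    IntegrableOn (fun x => (1 + fderiv ℝ g x).det) (ball 0 R) (μH[finrank ℝ E]) ∧
    ∫ x in ball 0 R, (1 + fderiv ℝ g x).det ∂(μH[finrank ℝ E]) = (μH[finrank ℝ E]).real (ball (0:E) R) := by
  set μ : Measure E := μH[finrank ℝ E] with hμ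
  have hbij := id_add_bij hK hg
  have himg : (fun x => x + g x) '' (ball 0 R) = ball 0 R := by
    have hc : (fun x => x + g x) '' (ball 0 R)ᶜ = (ball 0 R)ᶜ := by
      have : EqOn (fun x => x + g x) id (ball (0:E) R)ᶜ := by
        intro x hx
        simp at hx
        simp [hR x hx]
      rw [this.image_eq, image_id]
    rw [image_compl_eq hbij] at hc
    exact compl_injective hc
  set D : Set E := {x | DifferentiableAt ℝ g x} with hD
  have hDm : MeasurableSet D := measurableSet_of_differentiableAt ℝ g
  have hDae : μ Dᶜ = 0 := hg.ae_differentiableAt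
  have hlip : LipschitzWith (1 + K) (fun x => x + g x) := LipschitzWith.id.add hg
  have hnull : μ ((fun x => x + g x) '' Dᶜ) = 0 := by
    have := hlip.hausdorffMeasure_image_le (d := finrank ℝ E) (by positivity) Dᶜ
    rw [← hμ, hDae, mul_zero] at this
    exact le_antisymm this bot_le
  have hmeas : Measurable fun x => (1 + fderiv ℝ g x).det :=
    (ContinuousLinearMap.continuous_det.comp (continuous_const.add continuous_id)).measurable.comp (measurable_fderiv ℝ g)
  have hae : (ball (0:E) R ∩ D : Set E) =ᵐ[μ] ball (0:E) R := by
    refine inter_ae_eq_left_of_ae_eq_univ ?_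
    rwa [ae_eq_univ]
  have key : ∫⁻ x in ball 0 R, ENNReal.ofReal ((1 + fderiv ℝ g x).det) ∂μ = μ (ball 0 R) := by
    rw [← setLIntegral_congr hae]
    have h1 := lintegral_abs_det_fderiv_eq_addHaar_image μ (s := ball 0 R ∩ D) (f := fun x => x + g x)
      (f' := fun x => 1 + fderiv ℝ g x) (measurableSet_ball.inter hDm)
      (fun x hx => ((hasFDerivAt_id x).add (hx.2.hasFDerivAt)).hasFDerivWithinAt) hbij.1.injOn
    simp_rw [abs_of_pos (hpos _)] at h1
    rw [h1]
    apply le_antisymm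
    · exact measure_mono ((image_mono inter_subset_left).trans himg.subset)
    · have : ball (0:E) R ⊆ (fun x => x + g x) '' (ball 0 R ∩ D) ∪ (fun x => x + g x) '' Dᶜ := by
        rw [← image_union]
        refine himg.symm.subset.trans (image_mono ?_)
        intro x hx
        by_cases h : x ∈ D
        · exact Or.inl ⟨hx, h⟩
        · exact Or.inr h
      calc _ ≤ _ := measure_mono this
        _ ≤ _ := measure_union_le _ _
        _ = _ := by rw [hnull, add_zero]
  have hfin : μ (ball (0:E) R) < ⊤ := measure_ball_lt_top
  have hint : IntegrableOn (fun x => (1 + fderiv ℝ g x).det) (ball 0 R) μ := by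
    refine ⟨hmeas.aestronglyMeasurable, ?_⟩
    rw [hasFiniteIntegral_iff_ofReal (Filter.Eventually.of_forall fun x => (hpos x).le), key]
    exact hfin
  refine ⟨hint, ?_⟩
  rw [integral_eq_lintegral_of_nonneg_ae (Filter.Eventually.of_forall fun x => (hpos x).le) hint.1, key]
  rfl

lemma no_lip_retraction {g : E → E} {K : NNReal} (hg : LipschitzWith K g) {R : ℝ} (hR0 : 0 < R)
    (hR : ∀ x, R ≤ ‖x‖ → g x = 0) (hS : ∀ x, ‖x‖ < R → ‖x + g x‖ = R) : False := by
  classical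
  set μ : Measure E := μH[finrank ℝ E] with hμ
  have hev : ∀ᶠ A : E →L[ℝ] E in nhds 0, 0 < (1 + A).det := by
    have hc : Continuous fun A : E →L[ℝ] E => (1 + A).det :=
      ContinuousLinearMap.continuous_det.comp (continuous_const.add continuous_id)
    have h0 : (0:ℝ) < (1 + (0 : E →L[ℝ] E)).det := by
      simp [ContinuousLinearMap.det, ContinuousLinearMap.one_def]
    exact hc.continuousAt.eventually (lt_mem_nhds h0)
  obtain ⟨ε, hε, hεd⟩ := Metric.eventually_nhds_iff.1 hev
  set c : ℝ := min ε 1 / (K + 1) with hc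
  have hc0 : 0 < c := by positivity
  obtain ⟨s, hsub, hcard⟩ := (Ioo_infinite hc0).exists_subset_card_eq (finrank ℝ E + 1)
  have hstep : ∀ t ∈ s, IntegrableOn (fun x => (1 + t • fderiv ℝ g x).det) (ball 0 R) μ ∧
      ∫ x in ball 0 R, (1 + t • fderiv ℝ g x).det ∂μ = μ.real (ball (0:E) R) := by
    intro t ht
    obtain ⟨ht0, htc⟩ := hsub ht
    have htK : t * K < min ε 1 := by
      have : t * (K + 1) < min ε 1 := by rwa [hc, lt_div_iff₀ (by positivity)] at htc
      nlinarith
    have hlip : LipschitzWith (t.toNNReal * K) (fun x => t • g x) := by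
      refine LipschitzWith.of_dist_le_mul fun x y => ?_
      rw [dist_smul₀, Real.norm_of_nonneg ht0.le, NNReal.coe_mul, Real.coe_toNNReal _ ht0.le, mul_assoc]
      exact mul_le_mul_of_nonneg_left (hg.dist_le_mul x y) ht0.le
    have hfd : ∀ x, fderiv ℝ (fun x => t • g x) x = t • fderiv ℝ g x := fun x => by
      have := congrFun (fderiv_const_smul_field (𝕜 := ℝ) (f := g) t) x
      exact this
    have := volume_step (g := fun x => t • g x) (K := t.toNNReal * K) (R := R)
      (by rw [← NNReal.coe_lt_coe, NNReal.coe_mul, Real.coe_toNNReal _ ht0.le]; exact lt_of_lt_of_le htK (min_le_right _ _)) hlip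
      (fun x hx => by simp [hR x hx]) (fun x => by
        apply hεd
        rw [dist_zero_right]
        refine lt_of_le_of_lt (norm_fderiv_le_of_lipschitz ℝ hlip) ?_
        rw [NNReal.coe_mul, Real.coe_toNNReal _ ht0.le]
        exact lt_of_lt_of_le htK (min_le_left _ _))
    simpa only [hfd] using this
  have hsum : ∫ x in ball 0 R, (1 + fderiv ℝ g x).det ∂μ = μ.real (ball (0:E) R) := by
    simp_rw [fun x => det_one_add_interp (E := E) s (by omega) (fderiv ℝ g x)]
    rw [integral_finsetSum _ (fun i hi => (hstep i hi).1.const_mul _)]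
    rw [Finset.sum_congr rfl fun i hi => by rw [integral_const_mul, (hstep i hi).2]]
    rw [← Finset.sum_mul, sum_basis_eval, one_mul]
    exact Finset.card_pos.1 (by omega)
  have hzero : ∫ x in ball 0 R, (1 + fderiv ℝ g x).det ∂μ = 0 := by
    refine setIntegral_eq_zero_of_ae_eq_zero ?_
    filter_upwards [hg.ae_differentiableAt (μ := μ)] with x hx hxR
    simp only [mem_ball, dist_zero_right] at hxR
    set L : E →L[ℝ] E := 1 + fderiv ℝ g x with hL
    have hder : HasFDerivAt (fun x => x + g x) L x := (hasFDerivAt_id x).add hx.hasFDerivAt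
    have h1 := hder.norm_sq
    have h2 : HasFDerivAt (fun x => ‖x + g x‖ ^ 2) (0 : E →L[ℝ] ℝ) x := by
      have : (fun x => ‖x + g x‖ ^ 2) =ᶠ[nhds x] fun _ => R ^ 2 := by
        filter_upwards [isOpen_ball.mem_nhds (show x ∈ ball (0:E) R by simpa using hxR)] with y hy
        rw [hS y (by simpa using hy)]
      exact (hasFDerivAt_const _ _).congr_of_eventuallyEq this
    have h3 := h1.unique h2
    by_contra hne
    have hunit : IsUnit (LinearMap.det (L : E →ₗ[ℝ] E)) := isUnit_iff_ne_zero.2 hne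
    have hsurj : Function.Surjective L :=
      (Module.End.isUnit_iff _).1 ((LinearMap.isUnit_iff_isUnit_det _).2 hunit) |>.2
    obtain ⟨v, hv⟩ := hsurj (x + g x)
    have h4 := DFunLike.congr_fun h3 v
    have h4 : 2 • ⟪x + g x, L v⟫ = 0 := h4
    rw [hv, real_inner_self_eq_norm_sq] at h4
    have h5 := hS x hxR
    rw [h5, two_smul] at h4
    nlinarith
  have : 0 < μ.real (ball (0:E) R) := by
    exact ENNReal.toReal_pos (measure_ball_pos μ 0 hR0).ne' measure_ball_lt_top.ne
  linarith

lemma lip_normalize {c : ℝ} (hc : 0 < c) {x y : E} (hx : c ≤ ‖x‖) (hy : c ≤ ‖y‖) :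
    ‖‖x‖⁻¹ • x - ‖y‖⁻¹ • y‖ ≤ 2 / c * ‖x - y‖ := by
  have hx0 : 0 < ‖x‖ := hc.trans_le hx
  have hy0 : 0 < ‖y‖ := hc.trans_le hy
  have h : ‖x‖⁻¹ • x - ‖y‖⁻¹ • y = ‖x‖⁻¹ • (x - y) + ((‖y‖ - ‖x‖) * (‖x‖⁻¹ * ‖y‖⁻¹)) • y := by
    have : (‖y‖ - ‖x‖) * (‖x‖⁻¹ * ‖y‖⁻¹) = ‖x‖⁻¹ - ‖y‖⁻¹ := by field_simp
    rw [this, smul_sub, sub_smul]; abel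
  rw [h]
  refine (norm_add_le _ _).trans ?_
  rw [norm_smul, norm_smul, norm_mul, norm_mul, norm_inv, norm_inv, norm_norm, norm_norm]
  have h1 : ‖‖y‖ - ‖x‖‖ ≤ ‖x - y‖ := by
    rw [norm_sub_rev]; exact abs_norm_sub_norm_le x y
  have h2 : ‖x‖⁻¹ ≤ c⁻¹ := inv_anti₀ hc hx
  have h3 : ‖‖y‖ - ‖x‖‖ * (‖x‖⁻¹ * ‖y‖⁻¹) * ‖y‖ = ‖‖y‖ - ‖x‖‖ * ‖x‖⁻¹ := by field_simp
  rw [h3]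
  have := norm_nonneg (x - y)
  have h4 : ‖x‖⁻¹ * ‖x - y‖ ≤ c⁻¹ * ‖x - y‖ := by gcongr
  have h5 : ‖‖y‖ - ‖x‖‖ * ‖x‖⁻¹ ≤ ‖x - y‖ * c⁻¹ := by gcongr
  calc _ ≤ _ := add_le_add h4 h5
    _ = _ := by ring

lemma exists_zero_lip {g : E → E} {K : NNReal} (hg : LipschitzWith K g) {R : ℝ}
    (hR : ∀ x, R ≤ ‖x‖ → g x = 0) : ∃ x, x + g x = 0 := by
  by_contra! hne
  -- lower bound
  have hcont : Continuous fun x => x + g x := continuous_id.add hg.continuous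
  have hR0 : 0 < R := by
    by_contra h
    exact hne 0 (by simp [hR 0 (by simpa using h)])
  obtain ⟨c, hc, hcb⟩ : ∃ c : ℝ, 0 < c ∧ ∀ x, c ≤ ‖x + g x‖ := by
    obtain ⟨x0, -, hx0⟩ := (isCompact_closedBall (0:E) R).exists_isMinOn
      ⟨0, by simp [hR0.le]⟩ hcont.norm.continuousOn
    refine ⟨min ‖x0 + g x0‖ R, lt_min (norm_pos_iff.2 (hne x0)) hR0, fun x => ?_⟩
    by_cases h : ‖x‖ ≤ R
    · exact (min_le_left _ _).trans (hx0 (show x ∈ closedBall 0 R by simpa using h))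
    · rw [hR x (le_of_not_ge h), add_zero]
      exact (min_le_right _ _).trans (le_of_not_ge h)
  obtain ⟨R', hR'R, hR'⟩ : ∃ R' : ℝ, R ≤ R' ∧ ∀ x, ‖x‖ ≤ R' → ‖x + g x‖ ≤ R' := by
    obtain ⟨x0, -, hx0⟩ := (isCompact_closedBall (0:E) R).exists_isMaxOn
      ⟨0, by simp [hR0.le]⟩ hcont.norm.continuousOn
    refine ⟨max R ‖x0 + g x0‖, le_max_left _ _, fun x hx => ?_⟩
    by_cases h : ‖x‖ ≤ R
    · exact le_trans (hx0 (show x ∈ closedBall 0 R by simpa using h)) (le_max_right _ _)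
    · rwa [hR x (le_of_not_ge h), add_zero]
  set r : E → E := fun x => x + g x with hr
  have hrl : LipschitzWith (1 + K) r := LipschitzWith.id.add hg
  set G : E → E := fun x => g x + max (R' - ‖r x‖) 0 • (‖r x‖⁻¹ • r x) with hG
  have hGl : LipschitzWith (K + (1 + R' * (2 / c)).toNNReal * (1 + K)) G := by
    refine LipschitzWith.of_dist_le_mul fun x y => ?_
    have hd1 := hg.dist_le_mul x y
    have hd2 := hrl.dist_le_mul x y
    rw [dist_eq_norm] at hd1 hd2 ⊢
    have hR'0 : 0 < R' := hR0.trans_le hR'R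
    set a := max (R' - ‖r x‖) 0
    set b := max (R' - ‖r y‖) 0
    set u := ‖r x‖⁻¹ • r x
    set v := ‖r y‖⁻¹ • r y
    have huv : ‖u - v‖ ≤ 2 / c * ‖r x - r y‖ := lip_normalize hc (hcb x) (hcb y)
    have hu : ‖u‖ = 1 := by
      simp only [u, norm_smul, norm_inv, norm_norm]
      exact inv_mul_cancel₀ (hc.trans_le (hcb x)).ne'
    have hab : |a - b| ≤ ‖r x - r y‖ := by
      refine (abs_max_sub_max_le_abs _ _ _).trans ?_
      have := abs_norm_sub_norm_le (r y) (r x)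
      have e2 : R' - ‖r x‖ - (R' - ‖r y‖) = ‖r y‖ - ‖r x‖ := by ring
      rw [e2, norm_sub_rev (r x)]; exact this
    have hb : |b| ≤ R' := by
      rw [abs_of_nonneg (le_max_right _ _)]
      exact max_le (by linarith [norm_nonneg (r y)]) hR'0.le
    have e : G x - G y = (g x - g y) + ((a - b) • u + b • (u - v)) := by
      simp only [hG, sub_smul, smul_sub, a, b, u, v]; abel
    rw [e]
    have h1 : ‖(a - b) • u + b • (u - v)‖ ≤ (1 + R' * (2 / c)) * ‖r x - r y‖ := by
      refine (norm_add_le _ _).trans ?_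
      rw [norm_smul _ u, norm_smul _ (u - v), hu, mul_one, Real.norm_eq_abs, Real.norm_eq_abs]
      have : |b| * ‖u - v‖ ≤ R' * (2 / c * ‖r x - r y‖) := by gcongr
      linarith
    have h0 : 0 ≤ 1 + R' * (2 / c) := by positivity
    refine (norm_add_le _ _).trans ?_
    push_cast
    rw [Real.coe_toNNReal _ h0]
    have h2 : (1 + R' * (2 / c)) * ‖r x - r y‖ ≤ (1 + R' * (2 / c)) * ((1 + K) * dist x y) := by
      gcongr; exact_mod_cast hd2
    calc _ ≤ _ := add_le_add hd1 (h1.trans h2)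
      _ = _ := by ring
  refine no_lip_retraction hGl (hR0.trans_le hR'R) (fun x hx => ?_) (fun x hx => ?_)
  · have hg0 := hR x (hR'R.trans hx)
    simp only [hG, hr, hg0, add_zero, zero_add]
    rw [max_eq_right (by linarith), zero_smul]
  · have h1 := hR' x hx.le
    have h2 := hc.trans_le (hcb x)
    change ‖r x‖ ≤ R' at h1
    change 0 < ‖r x‖ at h2
    have : x + G x = (R' * ‖r x‖⁻¹) • r x := by
      simp only [hG]
      rw [max_eq_left (by linarith), smul_smul, ← add_assoc]
      change r x + _ = _
      nth_rewrite 1 [← one_smul ℝ (r x)]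
      rw [← add_smul]
      congr 1
      field_simp
      ring
    rw [this, norm_smul, norm_mul, norm_inv, norm_norm, Real.norm_of_nonneg (hR0.trans_le hR'R).le]
    field_simp

lemma brouwer_ball {P : E → E} (hP : Continuous P) {M : ℝ} (hM : 0 < M)
    (hmap : ∀ x, ‖x‖ ≤ M → ‖P x‖ ≤ M) : ∃ x, ‖x‖ ≤ M ∧ P x = x := by
  set pr : E → E := fun x => (M / max M ‖x‖) • x with hpr
  have hmax : ∀ x : E, 0 < max M ‖x‖ := fun x => hM.trans_le (le_max_left _ _)
  have hprc : Continuous pr := by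
    refine Continuous.smul (continuous_const.div (continuous_const.max continuous_norm) fun x => (hmax x).ne') continuous_id
  have hprM : ∀ x, ‖pr x‖ ≤ M := fun x => by
    rw [hpr, norm_smul, Real.norm_of_nonneg (div_nonneg hM.le (hmax x).le), div_mul_eq_mul_div,
      div_le_iff₀ (hmax x)]
    exact mul_le_mul_of_nonneg_left (le_max_right _ _) hM.le
  have hpreq : ∀ x, ‖x‖ ≤ M → pr x = x := fun x hx => by
    rw [hpr]; simp only [max_eq_left hx, div_self hM.ne', one_smul]
  set Q : E → E := fun x => P (pr x) with hQ
  have hQc : Continuous Q := hP.comp hprc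
  have hQM : ∀ x, ‖Q x‖ ≤ M := fun x => hmap _ (hprM x)
  let χ : ContDiffBump (0 : E) := ⟨M + 1, M + 2, by linarith, by linarith⟩
  have happ : ∀ ε : ℝ, 0 < ε → ε ≤ 1 → ∃ x, ‖x‖ ≤ M + 1 ∧ ‖x - Q x‖ ≤ ε := by
    intro ε hε hε1
    have hsupp : HasCompactSupport fun x => χ x • Q x := χ.hasCompactSupport.smul_right
    have hcont : Continuous fun x => χ x • Q x := χ.continuous.smul hQc
    obtain ⟨q, hqs, hq⟩ := (hsupp.uniformContinuous_of_continuous hcont).exists_contDiff_dist_le hε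
    have hs : ContDiff ℝ 1 fun x => -(χ x • q x) := ((χ.contDiff).smul (hqs.of_le (by norm_cast))).neg
    have hcs : HasCompactSupport fun x => -(χ x • q x) := by
      have : HasCompactSupport fun x => χ x • q x := χ.hasCompactSupport.smul_right
      exact this.comp_left (g := fun z => -z) neg_zero
    obtain ⟨K, hK⟩ := hs.lipschitzWith_of_hasCompactSupport hcs one_ne_zero
    obtain ⟨x, hx⟩ := exists_zero_lip hK (R := M + 2) (fun x hx => by
      rw [χ.zero_of_le_dist (by simpa using hx), zero_smul, neg_zero])
    have hx' : x = χ x • q x := by rwa [← sub_eq_add_neg, sub_eq_zero] at hx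
    have hqx := hq x
    rw [dist_eq_norm] at hqx
    have hn : ‖q x‖ ≤ M + 1 := by
      have : q x = (q x - χ x • Q x) + χ x • Q x := by abel
      rw [this]
      refine (norm_add_le _ _).trans ?_
      have : ‖χ x • Q x‖ ≤ M := by
        rw [norm_smul, Real.norm_of_nonneg χ.nonneg]
        nlinarith [χ.le_one (x := x), χ.nonneg (x := x), hQM x, norm_nonneg (Q x)]
      linarith
    have hxn : ‖x‖ ≤ M + 1 := by
      rw [hx', norm_smul, Real.norm_of_nonneg χ.nonneg]
      nlinarith [χ.le_one (x := x), χ.nonneg (x := x), norm_nonneg (q x)]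
    have h1 : χ x = 1 := χ.one_of_mem_closedBall (by simpa using hxn)
    rw [h1, one_smul] at hx' hqx
    refine ⟨x, hxn, ?_⟩
    rw [← hx'] at hqx
    exact hqx.le
  obtain ⟨x0, -, hx0⟩ := (isCompact_closedBall (0:E) (M+1)).exists_isMinOn
      ⟨0, by simp; linarith⟩ ((continuous_id.sub hQc).norm.continuousOn)
  have hzero : ‖x0 - Q x0‖ = 0 := by
    by_contra h
    have hp : 0 < ‖x0 - Q x0‖ := lt_of_le_of_ne (norm_nonneg _) (Ne.symm h)
    obtain ⟨x, hx, hxe⟩ := happ (min (‖x0 - Q x0‖ / 2) 1) (by positivity) (min_le_right _ _)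
    have h2 : ‖x0 - Q x0‖ ≤ ‖x - Q x‖ := hx0 (show x ∈ closedBall 0 (M+1) by simpa using hx)
    have := hxe.trans (min_le_left _ _)
    linarith
  have hfix : x0 = Q x0 := sub_eq_zero.1 (norm_eq_zero.1 hzero)
  have hxM : ‖x0‖ ≤ M := by rw [hfix]; exact hQM x0
  refine ⟨x0, hxM, ?_⟩
  rw [hQ] at hfix
  simp only [hpreq x0 hxM] at hfix
  exact hfix.symm

end Brouwer

section Periodic
open MeasureTheory Filter Topology

variable {E : Type*} [NormedAddCommGroup E] [InnerProductSpace ℝ E] [FiniteDimensional ℝ E]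
  [MeasurableSpace E] [BorelSpace E]

/-- Euler scheme -/
def eulerSeq (h : ℝ → E → E) (s : ℝ) (x : E) : ℕ → E
  | 0 => x
  | k + 1 => eulerSeq h s x k + s • (h (k * s) (eulerSeq h s x k) - eulerSeq h s x k)

lemma euler_approx {h : ℝ → E → E} (hc : Continuous fun q : ℝ × E => h q.1 q.2) {M : ℝ}
    (hM : 0 < M) (hb : ∀ t x, ‖h t x‖ ≤ M) {T : ℝ} (hT : 0 < T) {ε : ℝ} (hε : 0 < ε) :
    ∃ (y : ℝ → E) (τ : ℝ → ℝ), LipschitzWith (2 * M).toNNReal y ∧ ‖y 0‖ ≤ M ∧ y 0 = y T ∧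
      (∀ σ, 0 ≤ σ → |τ σ - σ| ≤ ε) ∧
      Measurable (fun σ => h (τ σ) (y (τ σ)) - y (τ σ)) ∧
      (∀ σ, ‖h (τ σ) (y (τ σ)) - y (τ σ)‖ ≤ 2 * M) ∧
      ∀ t, y t = y 0 + ∫ σ in (0:ℝ)..t, (h (τ σ) (y (τ σ)) - y (τ σ)) := by
  obtain ⟨n, hn⟩ := exists_nat_gt (max (T / ε) T)
  have hn1 : T / ε < n := (le_max_left _ _).trans_lt hn
  have hn2 : T < n := (le_max_right _ _).trans_lt hn
  have hn0 : (0:ℝ) < n := hT.trans hn2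
  set s : ℝ := T / n with hs
  have hs0 : 0 < s := by positivity
  have hs1 : s ≤ 1 := by rw [hs, div_le_one hn0]; exact hn2.le
  have hsε : s ≤ ε := by
    rw [hs, div_le_iff₀ hn0]; rw [div_lt_iff₀ hε] at hn1; linarith
  have hns : n * s = T := by rw [hs]; field_simp
  have hbound : ∀ x, ‖x‖ ≤ M → ∀ k, ‖eulerSeq h s x k‖ ≤ M := by
    intro x hx k
    induction k with
    | zero => exact hx
    | succ k ih =>
      set z := eulerSeq h s x k
      have e : eulerSeq h s x (k+1) = (1 - s) • z + s • h (k * s) z := by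
        change z + s • (h (k * s) z - z) = _
        rw [smul_sub, sub_smul, one_smul]; abel
      rw [e]
      refine (norm_add_le _ _).trans ?_
      rw [norm_smul, norm_smul, Real.norm_of_nonneg hs0.le, Real.norm_of_nonneg (by linarith)]
      nlinarith [hb (k*s) z]
  have hcont : ∀ k, Continuous fun x => eulerSeq h s x k := by
    intro k
    induction k with
    | zero => exact continuous_id
    | succ k ih =>
      change Continuous fun x => eulerSeq h s x k + s • (h (k * s) (eulerSeq h s x k) - eulerSeq h s x k)
      have : Continuous fun x => h (k * s) (eulerSeq h s x k) :=
        hc.comp (continuous_const.prodMk ih)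
      exact ih.add ((this.sub ih).const_smul s)
  obtain ⟨x0, hx0, hfix⟩ := brouwer_ball (hcont n) hM (fun x hx => hbound x hx n)
  set x : ℕ → E := eulerSeq h s x0 with hx
  have hxb : ∀ k, ‖x k‖ ≤ M := hbound x0 hx0
  set c : ℕ → E := fun k => h (k * s) (x k) - x k with hcdef
  have hcb : ∀ k, ‖c k‖ ≤ 2 * M := fun k => by
    refine (norm_sub_le _ _).trans ?_
    linarith [hb (k * s) (x k), hxb k]
  set φ : ℝ → E := fun σ => c ⌊σ / s⌋₊ with hφ
  have hφm : Measurable φ :=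
    (measurable_from_nat (f := c)).comp (Nat.measurable_floor.comp (measurable_id.div_const s))
  have hφb : ∀ σ, ‖φ σ‖ ≤ 2 * M := fun σ => hcb _
  have hφi : ∀ a b, IntervalIntegrable φ volume a b := fun a b => by
    refine (intervalIntegrable_const (c := 2 * M)).mono_fun hφm.aestronglyMeasurable ?_
    exact Eventually.of_forall fun σ => by
      rw [Real.norm_of_nonneg (by positivity : 0 ≤ 2 * M)]; exact hφb σ
  set y : ℝ → E := fun t => x0 + ∫ σ in (0:ℝ)..t, φ σ with hy
  have hy0 : y 0 = x0 := by simp [hy]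
  have hyk : ∀ k : ℕ, y (k * s) = x k := by
    intro k
    induction k with
    | zero => simp [hy0, hx, eulerSeq]
    | succ k ih =>
      have h1 : y ((k + 1 : ℕ) * s) = y (k * s) + ∫ σ in (k * s)..((k + 1 : ℕ) * s), φ σ := by
        simp only [hy]
        rw [add_assoc, intervalIntegral.integral_add_adjacent_intervals (hφi _ _) (hφi _ _)]
      have h2 : ∫ σ in (k * s)..((k + 1 : ℕ) * s), φ σ = ∫ σ in (k * s)..((k + 1 : ℕ) * s), c k := by
        refine intervalIntegral.integral_congr_Ioo_of_le (by push_cast; nlinarith) ?_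
        intro σ hσ
        have : ⌊σ / s⌋₊ = k := by
          rw [Nat.floor_eq_iff (div_nonneg ((by positivity : (0:ℝ) ≤ k * s).trans hσ.1.le) hs0.le)]
          rw [le_div_iff₀ hs0, div_lt_iff₀ hs0]
          exact ⟨hσ.1.le, by simpa using hσ.2⟩
        simp only [hφ, this]
      rw [h1, h2, ih, intervalIntegral.integral_const]
      have : ((k + 1 : ℕ) : ℝ) * s - k * s = s := by push_cast; ring
      rw [this]
      rfl
  have hlip : LipschitzWith (2 * M).toNNReal y := by
    refine LipschitzWith.of_dist_le_mul fun a b => ?_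
    rw [Real.coe_toNNReal _ (by positivity), dist_eq_norm, Real.dist_eq]
    have : y a - y b = ∫ σ in b..a, φ σ := by
      simp only [hy]
      rw [add_sub_add_left_eq_sub, intervalIntegral.integral_interval_sub_left (hφi _ _) (hφi _ _)]
    rw [this]
    exact intervalIntegral.norm_integral_le_of_norm_le_const fun σ _ => hφb σ
  have hφe : ∀ σ, h (⌊σ / s⌋₊ * s) (y (⌊σ / s⌋₊ * s)) - y (⌊σ / s⌋₊ * s) = φ σ := fun σ => by
    rw [hyk]
  refine ⟨y, fun σ => ⌊σ / s⌋₊ * s, hlip, by rw [hy0]; exact hx0, ?_, ?_, ?_, ?_, ?_⟩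
  · rw [hy0, ← hns, hyk, hx]; exact hfix.symm
  · intro σ hσ
    have h1 := Nat.floor_le (div_nonneg hσ hs0.le)
    have h2 := Nat.lt_floor_add_one (σ / s)
    rw [le_div_iff₀ hs0] at h1
    rw [div_lt_iff₀ hs0] at h2
    rw [abs_le]; constructor <;> nlinarith
  · simp_rw [hφe]; exact hφm
  · intro σ; rw [hφe]; exact hφb σ
  · intro t; simp_rw [hφe]; rw [hy0]

lemma lip_compact {X : Type*} [PseudoMetricSpace X] [CompactSpace X] (L : NNReal) (C : ℝ) :
    IsCompact {u : BoundedContinuousFunction X E |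
      LipschitzWith L u ∧ ∀ t, u t ∈ closedBall (0:E) C} := by
  refine BoundedContinuousFunction.arzela_ascoli₂ (closedBall 0 C) (isCompact_closedBall _ _) _ ?_
    (fun u t hu => hu.2 t) ?_
  · have : {u : BoundedContinuousFunction X E |
        LipschitzWith L u ∧ ∀ t, u t ∈ closedBall (0:E) C} =
        (⋂ a, ⋂ b, {u : BoundedContinuousFunction X E | dist (u a) (u b) ≤ L * dist a b}) ∩
        ⋂ t, {u : BoundedContinuousFunction X E | dist (u t) 0 ≤ C} := by
      ext u; simp [lipschitzWith_iff_dist_le_mul]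
    rw [this]
    have hev : ∀ a, Continuous fun u : BoundedContinuousFunction X E => u a := fun a =>
      continuous_eval_const a
    refine IsClosed.inter (isClosed_iInter fun a => isClosed_iInter fun b => ?_)
      (isClosed_iInter fun t => ?_)
    · exact isClosed_le ((hev a).dist (hev b)) continuous_const
    · exact isClosed_le ((hev t).dist continuous_const) continuous_const
  · exact (LipschitzWith.uniformEquicontinuous _ L (fun u => u.2.1)).equicontinuous

lemma periodic_exists {h : ℝ → E → E} (hc : Continuous fun q : ℝ × E => h q.1 q.2) {M : ℝ}
    (hM : 0 < M) (hb : ∀ t x, ‖h t x‖ ≤ M) {T : ℝ} (hT : 0 < T) :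
    ∃ y : ℝ → E, (∀ t ∈ Icc 0 T, HasDerivWithinAt y (h t (y t) - y t) (Icc 0 T) t) ∧
      y 0 = y T := by
  have hT' : (0:ℝ) ≤ T := hT.le
  choose Y τ hlip hY0 hper hτ hmeas hbd hint using fun j : ℕ =>
    euler_approx hc hM hb hT (ε := 1 / ((j:ℝ) + 1)) (by positivity)
  set L := (2 * M).toNNReal with hL
  have hLc : (L : ℝ) = 2 * M := Real.coe_toNNReal _ (by positivity)
  set C : ℝ := M + 2 * M * T with hC
  let A : Set (BoundedContinuousFunction (Icc 0 T) E) :=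
    {u | LipschitzWith L u ∧ ∀ t, u t ∈ closedBall (0:E) C}
  have hAcomp : IsCompact A := lip_compact L C
  let U : ℕ → BoundedContinuousFunction (Icc 0 T) E := fun j =>
    BoundedContinuousFunction.mkOfCompact ⟨fun t => Y j t, (hlip j).continuous.comp continuous_subtype_val⟩
  have hUA : ∀ j, U j ∈ A := by
    intro j
    refine ⟨?_, fun t => ?_⟩
    · have := (hlip j).comp (LipschitzWith.subtype_val (Icc 0 T))
      rw [mul_one] at this
      exact this
    · change Y j t ∈ _
      rw [mem_closedBall, dist_zero_right]
      have h1 := (hlip j).dist_le_mul t 0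
      rw [dist_eq_norm, Real.dist_eq, sub_zero, abs_of_nonneg t.2.1, hLc] at h1
      have h2 : ‖Y j t‖ ≤ ‖Y j t - Y j 0‖ + ‖Y j 0‖ := by
        simpa using norm_add_le (Y j t - Y j 0) (Y j 0)
      have h3 : 2 * M * (t:ℝ) ≤ 2 * M * T := by gcongr; exact t.2.2
      linarith [hY0 j]
  obtain ⟨u, huA, ψ, hψ, hlim⟩ := hAcomp.tendsto_subseq hUA
  have hpt : ∀ t (ht : t ∈ Icc 0 T), Tendsto (fun j => Y (ψ j) t) atTop (𝓝 (u ⟨t, ht⟩)) := by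
    intro t ht
    exact ((continuous_eval_const (⟨t, ht⟩ : Icc 0 T)).tendsto u).comp hlim
  set v : ℝ → E := IccExtend hT' u with hv
  have hvc : Continuous v := u.continuous.Icc_extend'
  have hvt : ∀ t (ht : t ∈ Icc 0 T), v t = u ⟨t, ht⟩ := fun t ht => IccExtend_of_mem _ _ ht
  have hFc : Continuous fun t => h t (v t) - v t := (hc.comp (continuous_id.prodMk hvc)).sub hvc
  have h0 : (0:ℝ) ∈ Icc 0 T := ⟨le_rfl, hT'⟩
  have hTT : T ∈ Icc 0 T := ⟨hT', le_rfl⟩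
  set Z : ℝ → E := fun t => v 0 + ∫ σ in (0:ℝ)..t, (h σ (v σ) - v σ) with hZ
  have hZv : ∀ t ∈ Icc 0 T, Z t = v t := by
    intro t ht
    have hl1 : Tendsto (fun j => Y (ψ j) t) atTop (𝓝 (v t)) := by rw [hvt t ht]; exact hpt t ht
    have hl0 : Tendsto (fun j => Y (ψ j) 0) atTop (𝓝 (v 0)) := by rw [hvt 0 h0]; exact hpt 0 h0
    have hl2 : Tendsto (fun j => ∫ σ in (0:ℝ)..t,
        (h (τ (ψ j) σ) (Y (ψ j) (τ (ψ j) σ)) - Y (ψ j) (τ (ψ j) σ))) atTop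
        (𝓝 (∫ σ in (0:ℝ)..t, (h σ (v σ) - v σ))) := by
      refine intervalIntegral.tendsto_integral_filter_of_dominated_convergence (fun _ => 2 * M)
        (Eventually.of_forall fun j => (hmeas (ψ j)).aestronglyMeasurable)
        (Eventually.of_forall fun j => Eventually.of_forall fun σ _ => hbd (ψ j) σ)
        intervalIntegrable_const (Eventually.of_forall fun σ hσ => ?_)
      rw [uIoc_of_le ht.1] at hσ
      have hσT : σ ∈ Icc 0 T := ⟨hσ.1.le, hσ.2.trans ht.2⟩
      have hτl : Tendsto (fun j => τ (ψ j) σ) atTop (𝓝 σ) := by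
        rw [tendsto_iff_dist_tendsto_zero]
        refine squeeze_zero (fun _ => dist_nonneg) (fun j => (hτ (ψ j) σ hσT.1 :)) ?_
        exact tendsto_one_div_add_atTop_nhds_zero_nat.comp hψ.tendsto_atTop
      have hYl : Tendsto (fun j => Y (ψ j) (τ (ψ j) σ)) atTop (𝓝 (v σ)) := by
        have h1 : Tendsto (fun j => Y (ψ j) σ) atTop (𝓝 (v σ)) := by
          rw [hvt σ hσT]; exact hpt σ hσT
        refine h1.congr_dist ?_
        refine squeeze_zero (fun _ => dist_nonneg) (fun j => (hlip (ψ j)).dist_le_mul _ _) ?_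
        have h2 : Tendsto (fun j => dist σ (τ (ψ j) σ)) atTop (𝓝 0) := by
          have := (tendsto_iff_dist_tendsto_zero.1 hτl)
          simpa [dist_comm] using this
        simpa using h2.const_mul (L:ℝ)
      exact ((hc.tendsto (σ, v σ)).comp (hτl.prodMk_nhds hYl)).sub hYl
    have hl3 := hl0.add hl2
    refine tendsto_nhds_unique (hl3.congr fun j => ?_) hl1
    exact (hint (ψ j) t).symm
  refine ⟨Z, fun t ht => ?_, ?_⟩
  · rw [hZv t ht]
    have := (hFc.integral_hasStrictDerivAt 0 t).hasDerivAt.hasDerivWithinAt (s := Icc 0 T)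
    exact this.const_add (v 0)
  · rw [hZv 0 h0, hZv T hTT, hvt 0 h0, hvt T hTT]
    refine tendsto_nhds_unique (hpt 0 h0) ((hpt T hTT).congr fun j => (hper (ψ j)).symm)

end Periodic

section Star
variable {E : Type*} [NormedAddCommGroup E] [NormedSpace ℝ E]

lemma star_closure {G : Set E} (hG : IsOpen G) (hGb : Bornology.IsBounded G) {p : E} (hp : p ∈ G)
    (hstar : ∀ u ∈ frontier G, ∀ θ : ℝ, 0 ≤ θ → θ < 1 → p + θ • (u - p) ∈ G)
    {u : E} (hu : u ∈ closure G) {θ : ℝ} (h0 : 0 ≤ θ) (h1 : θ < 1) : p + θ • (u - p) ∈ G := by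
  by_cases huG : u ∈ G
  swap
  · exact hstar u (by rw [frontier, hG.interior_eq]; exact ⟨hu, huG⟩) θ h0 h1
  by_cases hup : u = p
  · simpa [hup] using hp
  have hpos : 0 < ‖u - p‖ := norm_pos_iff.2 (sub_ne_zero.2 hup)
  have hcont : Continuous fun s : ℝ => p + s • (u - p) := by fun_prop
  set H : Set ℝ := (fun s : ℝ => p + s • (u - p)) ⁻¹' Gᶜ ∩ Ici 1 with hH
  have hHc : IsClosed H := (hG.isClosed_compl.preimage hcont).inter isClosed_Ici
  obtain ⟨C, hC⟩ := hGb.exists_norm_le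
  have hHne : H.Nonempty := by
    set s : ℝ := max 1 ((C + ‖p‖ + 1) / ‖u - p‖) with hs
    refine ⟨s, fun hmem => ?_, (show (1:ℝ) ≤ s from le_max_left _ _)⟩
    have h2 := hC _ hmem
    have h3 : (C + ‖p‖ + 1) ≤ s * ‖u - p‖ := by
      rw [← div_le_iff₀ hpos]; exact le_max_right _ _
    have h4 : ‖s • (u - p)‖ = s * ‖u - p‖ := by
      rw [norm_smul, Real.norm_of_nonneg (zero_le_one.trans (le_max_left _ _))]
    have h5 : ‖s • (u - p)‖ ≤ ‖p + s • (u - p)‖ + ‖p‖ := by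
      have := norm_sub_le (p + s • (u - p)) p
      rwa [add_sub_cancel_left] at this
    linarith
  have hHb : BddBelow H := ⟨1, fun s hs => hs.2⟩
  set a := sInf H with ha
  have haH : a ∈ H := hHc.csInf_mem hHne hHb
  have ha1 : 1 < a := by
    refine lt_of_le_of_ne haH.2 fun h => ?_
    have := haH.1
    rw [← h] at this
    apply this
    simpa using huG
  have hlt : ∀ s ∈ Ico 1 a, p + s • (u - p) ∈ G := by
    intro s hs
    by_contra h
    exact absurd (csInf_le hHb (show s ∈ H from ⟨h, hs.1⟩)) (not_le.2 hs.2)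
  have hfr : p + a • (u - p) ∈ frontier G := by
    rw [frontier, hG.interior_eq]
    refine ⟨?_, haH.1⟩
    have hacl : a ∈ closure (Ico 1 a) := by
      rw [closure_Ico ha1.ne]; exact ⟨ha1.le, le_rfl⟩
    have := map_mem_closure (f := fun s : ℝ => p + s • (u - p)) (t := G) hcont hacl hlt
    exact this
  have := hstar _ hfr (θ / a) (by positivity) (by rw [div_lt_one (by positivity)]; linarith)
  rw [add_sub_cancel_left, smul_smul, div_mul_cancel₀ _ (by positivity)] at this
  exact this

lemma star_gauge {S : Set E} (hS : IsOpen S) (h0 : (0:E) ∈ S)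
    (hstar : ∀ x ∈ closure S, ∀ θ : ℝ, 0 ≤ θ → θ < 1 → θ • x ∈ S) :
    ∃ m : E → ℝ, Continuous m ∧ (∀ x, 1 ≤ m x) ∧ (∀ x c, m x ≤ c → c⁻¹ • x ∈ closure S) ∧
      (∀ x ∈ closure S, m x = 1) ∧ (∀ x, 1 < m x → (m x)⁻¹ • x ∉ S) := by
  have habs : Absorbent ℝ S := absorbent_nhds_zero (hS.mem_nhds h0)
  have ha : ∀ x, gauge S x < 1 ↔ x ∈ S := by
    refine fun x => ⟨fun h => ?_, fun h => gauge_lt_one_of_mem_of_isOpen hS h⟩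
    obtain ⟨b, hb0, hb1, hx⟩ := exists_lt_of_gauge_lt habs h
    obtain ⟨s, hs, rfl⟩ := hx
    exact hstar s (subset_closure hs) b hb0.le hb1
  have hb : ∀ x, gauge S x ≤ 1 ↔ x ∈ closure S := by
    refine fun x => ⟨fun h => ?_, fun h => ?_⟩
    · have hcont : Continuous fun s : ℝ => s • x := by fun_prop
      have hcl : (1:ℝ) ∈ closure (Ico (0:ℝ) 1) := by
        rw [closure_Ico zero_ne_one]; exact ⟨zero_le_one, le_rfl⟩
      have := map_mem_closure (t := S) hcont hcl (fun s hs => by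
        rw [← ha, gauge_smul_of_nonneg hs.1, smul_eq_mul]
        nlinarith [hs.1, hs.2, gauge_nonneg (s := S) x])
      simpa using this
    · by_contra hlt
      push Not at hlt
      have hpos : 0 < gauge S x := by linarith
      have := (ha _).2 (hstar x h (gauge S x)⁻¹ (by positivity) (inv_lt_one_of_one_lt₀ hlt))
      rw [gauge_smul_of_nonneg (by positivity), smul_eq_mul, inv_mul_cancel₀ hpos.ne'] at this
      exact lt_irrefl _ this
  have ha' : ∀ x (c : ℝ), 0 < c → (gauge S x < c ↔ c⁻¹ • x ∈ S) := by
    intro x c hc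
    rw [← ha, gauge_smul_of_nonneg (by positivity), smul_eq_mul, inv_mul_lt_one₀ hc]
  have hb' : ∀ x (c : ℝ), 0 < c → (gauge S x ≤ c ↔ c⁻¹ • x ∈ closure S) := by
    intro x c hc
    rw [← hb, gauge_smul_of_nonneg (by positivity), smul_eq_mul, inv_mul_le_one₀ hc]
  refine ⟨fun x => max 1 (gauge S x), ?_, fun x => le_max_left _ _, fun x c hc => ?_, fun x hx => ?_,
    fun x hx => ?_⟩
  · rw [OrderTopology.continuous_iff]
    intro a
    constructor
    · by_cases h : a < 1
      · convert isOpen_univ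
        ext x; simp [h]
      · push Not at h
        have : (fun x => max 1 (gauge S x)) ⁻¹' Ioi a = ((fun x => a⁻¹ • x) ⁻¹' closure S)ᶜ := by
          ext x
          simp [← hb' x a (by linarith), not_lt.2 h]
        rw [this]
        exact (isClosed_closure.preimage (continuous_const_smul _)).isOpen_compl
    · by_cases h : a ≤ 1
      · convert isOpen_empty
        ext x; simp; intro h'; linarith
      · push Not at h
        have : (fun x => max 1 (gauge S x)) ⁻¹' Iio a = (fun x => a⁻¹ • x) ⁻¹' S := by
          ext x
          simp [← ha' x a (by linarith), h]
        rw [this]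
        exact hS.preimage (continuous_const_smul _)
  · have h1 : 1 ≤ c := (le_max_left _ _).trans hc
    exact (hb' x c (by linarith)).1 ((le_max_right _ _).trans hc)
  · exact max_eq_left ((hb x).2 hx)
  · rw [← ha' _ _ (by linarith)]
    rcases lt_max_iff.1 hx with h | h
    · exact absurd h (lt_irrefl _)
    · simp [h.le]

end Star

/-- Theorem for star-shaped domains. If `cl G` is strictly
star-shaped with respect to every point of a closed ball `B[p,δ] ⊆ G` and `(V_u)` is a
family of non-degenerate bounding functions for `G` with `⟪f(t,u), ∇V_u(u)⟫ ≤ 0` on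
the boundary, then `ẏ = f(t,y)` has a `T`-periodic solution with values in `cl G`. -/
theorem periodic_solution_star_shaped_bounding_functions
    {N : ℕ} {T : ℝ} (hT : 0 < T)
    (Ω : Set (EuclideanSpace ℝ (Fin N))) (hΩ : IsOpen Ω)
    (f : ℝ → EuclideanSpace ℝ (Fin N) → EuclideanSpace ℝ (Fin N))
    (hf : ContinuousOn (fun p : ℝ × EuclideanSpace ℝ (Fin N) => f p.1 p.2)
      (Icc (0 : ℝ) T ×ˢ Ω))
    (G : Set (EuclideanSpace ℝ (Fin N)))
    (hne : G.Nonempty) (hG : IsOpen G) (hGb : Bornology.IsBounded G)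
    (hGΩ : closure G ⊆ Ω)
    (p : EuclideanSpace ℝ (Fin N)) (δ : ℝ) (hδ : 0 < δ)
    (hballG : closedBall p δ ⊆ G)
    (hstar : ∀ q ∈ closedBall p δ, ∀ u ∈ frontier G,
      ∀ θ : ℝ, 0 ≤ θ → θ < 1 → q + θ • (u - q) ∈ G)
    (r : EuclideanSpace ℝ (Fin N) → ℝ)
    (V : EuclideanSpace ℝ (Fin N) → EuclideanSpace ℝ (Fin N) → ℝ)
    (hbd : ∀ u ∈ frontier G, 0 < r u ∧ ContDiffOn ℝ 1 (V u) (ball u (r u)) ∧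
      V u u = 0 ∧ ∀ x ∈ G ∩ ball u (r u), V u x < 0)
    (hnondeg : ∃ ηm ηp : ℝ, 0 < ηm ∧ ηm ≤ ηp ∧ ∀ u ∈ frontier G,
      ηm ≤ ‖gradient (V u) u‖ ∧ ‖gradient (V u) u‖ ≤ ηp)
    (hsub : ∀ u ∈ frontier G, ∀ t ∈ Icc (0 : ℝ) T,
      ⟪f t u, gradient (V u) u⟫ ≤ 0) :
    ∃ y : ℝ → EuclideanSpace ℝ (Fin N),
      (∀ t ∈ Icc (0 : ℝ) T, y t ∈ Ω) ∧
      (∀ t ∈ Icc (0 : ℝ) T, HasDerivWithinAt y (f t (y t)) (Icc (0 : ℝ) T) t) ∧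
      y 0 = y T ∧
      (∀ t ∈ Icc (0 : ℝ) T, y t ∈ closure G) := by
  classical
  have hp : p ∈ G := hballG (mem_closedBall_self hδ.le)
  obtain ⟨ηm, ηp, hηm, -, hη⟩ := hnondeg
  have hpδ : p ∈ closedBall p δ := mem_closedBall_self hδ.le
  have hst : ∀ q ∈ closedBall p δ, ∀ u ∈ closure G, ∀ θ : ℝ, 0 ≤ θ → θ < 1 → q + θ • (u - q) ∈ G :=
    fun q hq u hu θ h0 h1 => star_closure hG hGb (hballG hq) (hstar q hq) hu h0 h1
  -- boundary facts
  have hmax : ∀ u ∈ frontier G, IsLocalMaxOn (V u) (closure G) u := by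
    intro u hu
    obtain ⟨hr, hC, hV0, hneg⟩ := hbd u hu
    have hnhds : ball u (r u) ∈ nhdsWithin u (closure G) :=
      mem_nhdsWithin_of_mem_nhds (ball_mem_nhds u hr)
    filter_upwards [hnhds, self_mem_nhdsWithin] with x hx hxG
    rw [hV0]
    have hxc : x ∈ closure (G ∩ ball u (r u)) := by
      rw [inter_comm]
      exact isOpen_ball.inter_closure ⟨hx, hxG⟩
    have hcx : ContinuousWithinAt (V u) (G ∩ ball u (r u)) x :=
      (hC.continuousOn.continuousAt (isOpen_ball.mem_nhds hx)).continuousWithinAt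
    have := hcx.mem_closure hxc (t := Iic 0) (fun z hz => (hneg z hz).le)
    simpa using this
  have hdiff : ∀ u ∈ frontier G, HasFDerivAt (V u) (innerSL ℝ (gradient (V u) u)) u := by
    intro u hu
    obtain ⟨hr, hC, -, -⟩ := hbd u hu
    have : DifferentiableAt ℝ (V u) u :=
      (hC.contDiffAt (isOpen_ball.mem_nhds (mem_ball_self hr))).differentiableAt one_ne_zero
    exact this.hasGradientAt.hasFDerivAt
  have hinner : ∀ u ∈ frontier G, 0 < ⟪gradient (V u) u, u - p⟫ := by
    intro u hu
    set n := gradient (V u) u with hn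
    have hn0 : 0 < ‖n‖ := hηm.trans_le (hη u hu).1
    set q := p + (δ * ‖n‖⁻¹) • n with hq
    have hqm : q ∈ closedBall p δ := by
      rw [mem_closedBall, dist_eq_norm, hq, add_sub_cancel_left, norm_smul, norm_mul, norm_inv,
        norm_norm, Real.norm_of_nonneg hδ.le, mul_assoc, inv_mul_cancel₀ hn0.ne', mul_one]
    have hseg : segment ℝ u q ⊆ closure G := by
      rw [segment_symm, segment_eq_image']
      rintro _ ⟨θ, ⟨h0, h1⟩, rfl⟩
      rcases h1.eq_or_lt with rfl | h1
      · simpa using frontier_subset_closure hu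
      · exact subset_closure (hstar q hqm u hu θ h0 h1)
    have h1 := (hmax u hu).hasFDerivWithinAt_nonpos (hdiff u hu).hasFDerivWithinAt
      (sub_mem_posTangentConeAt_of_segment_subset hseg)
    have h1 : ⟪n, q - u⟫ ≤ 0 := h1
    have h2 : q - u = (δ * ‖n‖⁻¹) • n - (u - p) := by rw [hq]; abel
    rw [h2, inner_sub_right, inner_smul_right, real_inner_self_eq_norm_sq] at h1
    have h3 : δ * ‖n‖⁻¹ * ‖n‖ ^ 2 = δ * ‖n‖ := by field_simp
    rw [h3] at h1
    have := mul_pos hδ hn0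
    linarith
  -- gauge
  let S : Set (EuclideanSpace ℝ (Fin N)) := (Homeomorph.addLeft p) ⁻¹' G
  have hScl : closure S = (Homeomorph.addLeft p) ⁻¹' closure G :=
    ((Homeomorph.addLeft p).preimage_closure G).symm
  obtain ⟨m, hmc, hm1, hmcl, hmeq, hmS⟩ := star_gauge (S := S)
    (hG.preimage (Homeomorph.addLeft p).continuous) (by simpa [S] using hp) (by
      intro x hx θ h0 h1
      rw [hScl] at hx
      have := hst p hpδ (p + x) hx θ h0 h1
      rw [add_sub_cancel_left] at this
      exact this)
  rw [hScl] at hmcl hmeq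
  set ret : EuclideanSpace ℝ (Fin N) → EuclideanSpace ℝ (Fin N) :=
    fun z => p + (m (z - p))⁻¹ • (z - p) with hret
  have hmc' : Continuous fun z => m (z - p) := hmc.comp (continuous_id.sub continuous_const)
  have hretc : Continuous ret := by
    refine continuous_const.add (Continuous.smul (hmc'.inv₀ fun z => ?_) (continuous_id.sub continuous_const))
    linarith [hm1 (z - p)]
  have hretG : ∀ z, ret z ∈ closure G := fun z => hmcl (z - p) _ le_rfl
  set cl : ℝ → ℝ := fun t => max 0 (min T t) with hcl
  have hclm : ∀ t, cl t ∈ Icc 0 T := fun t => ⟨le_max_left _ _, max_le hT.le (min_le_left _ _)⟩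
  have hcle : ∀ t ∈ Icc 0 T, cl t = t := fun t ht => by
    simp only [hcl]; rw [min_eq_right ht.2, max_eq_right ht.1]
  have hclc : Continuous cl := by fun_prop
  set h : ℝ → EuclideanSpace ℝ (Fin N) → EuclideanSpace ℝ (Fin N) :=
    fun t z => f (cl t) (ret z) + ret z with hh
  have hhc : Continuous fun q : ℝ × EuclideanSpace ℝ (Fin N) => h q.1 q.2 := by
    refine Continuous.add ?_ (hretc.comp continuous_snd)
    exact hf.comp_continuous ((hclc.comp continuous_fst).prodMk (hretc.comp continuous_snd))
      (fun q => ⟨hclm _, hGΩ (hretG _)⟩)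
  have hcomp : IsCompact (Icc (0:ℝ) T ×ˢ closure G) :=
    isCompact_Icc.prod hGb.isCompact_closure
  have hfc : ContinuousOn (fun q : ℝ × EuclideanSpace ℝ (Fin N) => f q.1 q.2 + q.2)
      (Icc (0:ℝ) T ×ˢ closure G) :=
    (hf.mono (prod_mono_right hGΩ)).add continuous_snd.continuousOn
  obtain ⟨M, hM⟩ := hcomp.exists_bound_of_continuousOn hfc
  obtain ⟨y, hyd, hyper⟩ := periodic_exists hhc (M := max M 1) (by positivity)
    (fun t z => (hM (cl t, ret z) ⟨hclm _, hretG _⟩).trans (le_max_left _ _)) hT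
  have hyc : ContinuousOn y (Icc 0 T) := fun t ht => (hyd t ht).continuousWithinAt
  have hclaim : ∀ t ∈ Icc 0 T, m (y t - p) = 1 := by
    obtain ⟨t1, ht1, hmax1⟩ := isCompact_Icc.exists_isMaxOn (nonempty_Icc.2 hT.le)
      (hmc'.comp_continuousOn hyc)
    obtain ⟨t0, ht0, hpos, hmax0⟩ : ∃ t0 ∈ Icc 0 T, 0 < t0 ∧
        ∀ t ∈ Icc 0 T, m (y t - p) ≤ m (y t0 - p) := by
      rcases ht1.1.eq_or_lt with h0 | h0
      · refine ⟨T, ⟨hT.le, le_rfl⟩, hT, fun t ht => ?_⟩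
        rw [← hyper]
        have := hmax1 ht
        rw [← h0] at this
        exact this
      · exact ⟨t1, ht1, h0, fun t ht => hmax1 ht⟩
    suffices hle : m (y t0 - p) ≤ 1 from
      fun t ht => le_antisymm ((hmax0 t ht).trans hle) (hm1 _)
    by_contra hgt
    push Not at hgt
    set c := m (y t0 - p) with hc
    set w : ℝ → EuclideanSpace ℝ (Fin N) := fun t => p + c⁻¹ • (y t - p) with hw
    have hwG : ∀ t ∈ Icc 0 T, w t ∈ closure G := fun t ht => hmcl (y t - p) c (hmax0 t ht)
    set u := w t0 with hu
    have huf : u ∈ frontier G := by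
      rw [frontier, hG.interior_eq]
      exact ⟨hwG t0 ht0, hmS _ hgt⟩
    have hretu : ret (y t0) = u := rfl
    have hyu : y t0 - p = c • (u - p) := by
      rw [hu, hw]
      simp only [add_sub_cancel_left]
      rw [smul_smul, mul_inv_cancel₀ (by linarith), one_smul]
    set y' := h t0 (y t0) - y t0 with hy'
    have hy'e : y' = f t0 u - (c - 1) • (u - p) := by
      rw [hy', hh]
      simp only [hretu, hcle t0 ht0]
      have : y t0 = c • (u - p) + p := by rw [← hyu]; abel
      rw [this, sub_smul, one_smul]; abel
    have hsub0 : Icc 0 t0 ⊆ Icc 0 T := Icc_subset_Icc_right ht0.2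
    have hwd : HasDerivWithinAt w (c⁻¹ • y') (Icc 0 t0) t0 :=
      ((((hyd t0 ht0).mono hsub0).sub_const p).const_smul c⁻¹).const_add p
    have hVd : HasDerivWithinAt (fun t => V u (w t)) (⟪gradient (V u) u, c⁻¹ • y'⟫) (Icc 0 t0) t0 := by
      have hd : HasFDerivAt (V u) (innerSL ℝ (gradient (V u) u)) (w t0) := hdiff u huf
      have := hd.comp_hasDerivWithinAt t0 hwd
      exact this
    have hVmax : IsLocalMaxOn (fun t => V u (w t)) (Icc 0 t0) t0 := by
      have htend : Filter.Tendsto w (nhdsWithin t0 (Icc 0 t0)) (nhdsWithin u (closure G)) :=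
        hwd.continuousWithinAt.tendsto_nhdsWithin (fun t ht => hwG t (hsub0 ht))
      exact htend.eventually (hmax u huf)
    have h1 := hVmax.hasFDerivWithinAt_nonpos hVd.hasFDerivWithinAt
      (sub_mem_posTangentConeAt_of_segment_subset (y := 0)
        (by rw [segment_symm, segment_eq_Icc hpos.le]))
    have h2 : (0 - t0) * ⟪gradient (V u) u, c⁻¹ • y'⟫ ≤ 0 := by simpa using h1
    rw [inner_smul_right, hy'e, inner_sub_right, inner_smul_right] at h2
    have h3 := hsub u huf t0 ht0
    rw [real_inner_comm] at h3
    have h4 := hinner u huf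
    have hci : 0 < c⁻¹ := by positivity
    have h5 : ⟪gradient (V u) u, f t0 u⟫ - (c - 1) * ⟪gradient (V u) u, u - p⟫ < 0 := by
      nlinarith
    have h6 := mul_pos (mul_pos hpos hci) (neg_pos.2 h5)
    nlinarith
  have hreq : ∀ t ∈ Icc 0 T, ret (y t) = y t := fun t ht => by
    simp only [hret, hclaim t ht, inv_one, one_smul, add_sub_cancel]
  have hyG : ∀ t ∈ Icc 0 T, y t ∈ closure G := fun t ht => by
    rw [← hreq t ht]; exact hretG _
  refine ⟨y, fun t ht => hGΩ (hyG t ht), fun t ht => ?_, hyper, hyG⟩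
  have := hyd t ht
  rw [hh] at this
  simp only [hreq t ht, hcle t ht, add_sub_cancel_right] at this
  exact this
end

section
/- Let N ≥ 2 and let V : ℝ^N → ℝ be a C¹ function, p ∈ ℝ^N and c ∈ ℝ such that V(p) < c and the level set V^{-1}(c) is bounded and nonempty. Assume ⟨∇V(u), p − u⟩ < 0 for all u ∈ V^{-1}(c). Then the sub-level set M = {x ∈ ℝ^N : V(x) ≤ c} admits a radius δ > 0 with B[p,δ] ⊆ int M = {x : V(x) < c} such that M is strictly star-shaped with respect to every point of B[p,δ]. -/
open Set Metric
open scoped RealInnerProductSpace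

/-- Lemma 3.4. Let `N ≥ 2`, `V : ℝ^N → ℝ` of class `C¹`, `V p < c`,
with `V⁻¹(c)` bounded and nonempty and `⟪∇V(u), p - u⟫ < 0` on `V⁻¹(c)`. Then the
sub-level set `M = {V ≤ c}` has interior `{V < c}` and is strictly star-shaped with
respect to every point of some closed ball `B[p,δ] ⊆ int M`. -/
theorem sublevel_set_strictly_star_shaped
    {N : ℕ} (hN : 2 ≤ N)
    (V : EuclideanSpace ℝ (Fin N) → ℝ) (hV : ContDiff ℝ 1 V)
    (p : EuclideanSpace ℝ (Fin N)) (c : ℝ) (hpc : V p < c)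
    (hbdd : Bornology.IsBounded (V ⁻¹' {c})) (hlevne : (V ⁻¹' {c}).Nonempty)
    (hrad : ∀ u ∈ V ⁻¹' {c}, ⟪gradient V u, p - u⟫ < 0) :
    interior {x | V x ≤ c} = {x | V x < c} ∧
    ∃ δ > (0 : ℝ), closedBall p δ ⊆ {x | V x < c} ∧
      ∀ q ∈ closedBall p δ, ∀ u ∈ frontier {x | V x ≤ c},
        ∀ θ : ℝ, 0 ≤ θ → θ < 1 → q + θ • (u - q) ∈ interior {x | V x ≤ c} := by
  have hin : ∀ u v, ⟪gradient V u, v⟫ = fderiv ℝ V u v := by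
    intro u v
    simp [gradient, InnerProductSpace.toDual_symm_apply]
  have hcont : Continuous V := hV.continuous
  have hdiff : Differentiable ℝ V := hV.differentiable (by norm_num)
  have hfc : Continuous (fderiv ℝ V) := hV.continuous_fderiv (by norm_num)
  simp only [hin] at hrad
  have hint : interior {x | V x ≤ c} = {x | V x < c} := by
    apply Subset.antisymm
    · intro u hu
      have h1 : V u ≤ c := interior_subset (s := {x | V x ≤ c}) hu
      refine lt_of_le_of_ne h1 fun h => ?_
      have hm : IsLocalMax V u := by
        filter_upwards [mem_interior_iff_mem_nhds.1 hu] with x hx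
        rw [h]; exact hx
      have := hrad u h
      rw [hm.fderiv_eq_zero] at this
      simp at this
    · exact interior_maximal (fun x (hx : V x < c) => show V x ≤ c from hx.le) (isOpen_lt hcont continuous_const)
  refine ⟨hint, ?_⟩
  have hK : IsCompact (V ⁻¹' {c}) :=
    isCompact_of_isClosed_isBounded (isClosed_singleton.preimage hcont) hbdd
  have hF : Continuous fun z : EuclideanSpace ℝ (Fin N) × EuclideanSpace ℝ (Fin N) =>
      fderiv ℝ V z.2 (z.1 - z.2) := by
    exact (hfc.comp continuous_snd).clm_apply (continuous_fst.sub continuous_snd)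
  have hev : ∀ᶠ q in nhds p, ∀ u ∈ V ⁻¹' {c}, fderiv ℝ V u (q - u) < 0 := by
    apply hK.eventually_forall_of_forall_eventually
    intro u hu
    exact hF.continuousAt.eventually_lt continuousAt_const (hrad u hu)
  have hev2 : ∀ᶠ q in nhds p, V q < c :=
    hcont.continuousAt.eventually_lt continuousAt_const hpc
  obtain ⟨δ, hδ, hball⟩ := Metric.nhds_basis_closedBall.eventually_iff.1 (hev.and hev2)
  refine ⟨δ, hδ, fun q hq => (hball hq).2, ?_⟩
  intro q hq u hu θ h0 h1
  obtain ⟨hq1, hq2⟩ := hball hq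
  have hu : V u = c := frontier_le_subset_eq hcont continuous_const hu
  rw [hint]
  by_contra hcon
  have hge : c ≤ V (q + θ • (u - q)) := not_lt.1 hcon
  have hθ : 0 < θ := by
    rcases h0.eq_or_lt with h | h
    · subst h
      simp at hge
      linarith
    · exact h
  have hg : ∀ t : ℝ, HasDerivAt (fun t : ℝ => V (q + t • (u - q)))
      (fderiv ℝ V (q + t • (u - q)) (u - q)) t := by
    intro t
    have h2 : HasDerivAt (fun t : ℝ => q + t • (u - q)) (u - q) t := by
      simpa using ((hasDerivAt_id t).smul_const (u - q)).const_add q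
    exact (hdiff _).hasFDerivAt.comp_hasDerivAt t h2
  have hpos : ∀ t : ℝ, 0 < t → V (q + t • (u - q)) = c →
      0 < fderiv ℝ V (q + t • (u - q)) (u - q) := by
    intro t ht h
    have h3 := hq1 _ h
    have h4 : q - (q + t • (u - q)) = (-t) • (u - q) := by
      rw [neg_smul]; abel
    rw [h4, map_smul, smul_eq_mul] at h3
    nlinarith
  have key : ∀ ⦃x⦄, x ∈ Icc θ 2 → -V (q + x • (u - q)) ≤ -c := by
    refine image_le_of_deriv_right_lt_deriv_boundary' (B := fun _ => -c) (B' := fun _ => 0)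
      (f := fun x => -V (q + x • (u - q))) 
      (f' := fun t => -fderiv ℝ V (q + t • (u - q)) (u - q)) ?_ ?_ ?_ ?_ ?_ ?_
    · fun_prop
    · intro x _
      exact (hg x).neg.hasDerivWithinAt
    · linarith
    · fun_prop
    · intro x _
      exact hasDerivWithinAt_const _ _ _
    · intro x hx h
      have := hpos x (hθ.trans_le hx.1) (neg_injective h)
      linarith
  have hone : q + (1 : ℝ) • (u - q) = u := by simp
  have hmin : IsLocalMin (fun t : ℝ => V (q + t • (u - q))) 1 := by
    filter_upwards [Icc_mem_nhds h1 (by norm_num : (1 : ℝ) < 2)] with x hx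
    have := key hx
    rw [hone, hu]
    linarith
  have h5 := hmin.hasDerivAt_eq_zero (hg 1)
  have h6 := hpos 1 one_pos (by rw [hone, hu])
  linarith
end
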